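/- arXiv:math/9909172 — 4 statements merged into one kernel-verified Lean document; each statement's English description precedes it below -/
import Mathlib

section
/- Let Λ ⊂ ℝ³ be a lattice and let b¹, b² ∈ Λ be linearly independent such that C = conv{±b¹, ±b²} is a lattice crosspolytope. If C is a free lattice crosspolytope, then {b¹, b²} is primitive; if C is not free, then there exists a ℤ-basis (v¹, v², v³) of Λ such that C = conv{±v¹, ±(v¹ + 2v²)}. -/
/-!
Work in the plane spanned by `b₁, b₂`, where `C = {x b₁ + y b₂ : |x| + |y| ≤ 1}` and every point with
`|x| + |y| < 1` is in the relative interior (`mem_cross_of_abs_le`, `mem_intrinsicInterior_cross`).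
Reduce the coordinates of a lattice point `x b₁ + y b₂` to residues in `[-1/2, 1/2]`. The reduced
point is a lattice point of `C`, so as `C` has no nonzero interior lattice point, both residues vanish
or both have absolute value `1/2` (`coords_int_or_half`). Hence the lattice points of the plane are
either `ℤ b₁ + ℤ b₂` only, or `ℤ b₁ + ℤ (b₂ - b₁)/2`.

If `(b₂ - b₁)/2` is a lattice point, it lies on the boundary and `C` is not free; otherwise every
boundary lattice point has integer coordinates, hence is a vertex, and `C` is free.
In each case the plane's lattice basis extends to a basis of `Λ` (`extend_pair`): the functional
`det (u, w, ·)` is integral in lattice coordinates and vanishes exactly on the plane, so a vector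
attaining the generator of its image completes the basis.
-/

/-- The lattice generated by the vectors `v 0, v 1, v 2`. -/
def latticeGen (v : Fin 3 → Fin 3 → ℝ) : Set (Fin 3 → ℝ) :=
  {x | ∃ z : Fin 3 → ℤ, x = ∑ i, (z i : ℝ) • v i}

/-- `v` is a ℤ-basis of the lattice `Λ`. -/
def IsZBasis (v : Fin 3 → Fin 3 → ℝ) (Λ : Set (Fin 3 → ℝ)) : Prop :=
  LinearIndependent ℝ v ∧ latticeGen v = Λ

/-! ### Lattices and extension of a planar basis -/

lemma latticeGen_add_smul {v : Fin 3 → Fin 3 → ℝ} {x y : Fin 3 → ℝ} (hx : x ∈ latticeGen v)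
    (hy : y ∈ latticeGen v) (n : ℤ) : x + (n : ℝ) • y ∈ latticeGen v := by
  obtain ⟨z, rfl⟩ := hx
  obtain ⟨w, rfl⟩ := hy
  refine ⟨z + n • w, ?_⟩
  simp only [Fin.sum_univ_three, Pi.add_apply, Pi.smul_apply, smul_eq_mul, Int.cast_add,
    Int.cast_mul]
  module

/-- If the lattice points of the plane spanned by `u, w` are exactly the integer combinations of
`u, w`, then `u, w` is primitive. -/
lemma extend_pair {v : Fin 3 → Fin 3 → ℝ} (hv : LinearIndependent ℝ v) {u w : Fin 3 → ℝ}
    (hu : u ∈ latticeGen v) (hw : w ∈ latticeGen v) (hind : LinearIndependent ℝ ![u, w])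
    (hpl : ∀ s t : ℝ, s • u + t • w ∈ latticeGen v → (∃ m : ℤ, s = m) ∧ ∃ n : ℤ, t = n) :
    ∃ x, IsZBasis ![u, w, x] (latticeGen v) := by
  obtain ⟨a, ha⟩ := hu
  obtain ⟨c, hc⟩ := hw
  -- The integral functional `z ↦ det (a, c, z)` in lattice coordinates.
  let φ : (Fin 3 → ℤ) →+ ℤ :=
    { toFun := fun z => Matrix.det (Matrix.of ![a, c, z])
      map_zero' := by simp [Matrix.det_fin_three]
      map_add' := by intro z z'; simp [Matrix.det_fin_three]; ring }
  have hdet : ∀ z : Fin 3 → ℤ, Matrix.det (Matrix.of ![u, w, ∑ i, (z i : ℝ) • v i])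
      = (φ z : ℝ) * Matrix.det (Matrix.of v) := by
    intro z
    have : φ z = Matrix.det (Matrix.of ![a, c, z]) := rfl
    rw [this, ha, hc]
    simp [Matrix.det_fin_three, Fin.sum_univ_three]
    ring
  have hker : ∀ z : Fin 3 → ℤ, φ z = 0 →
      ∃ m n : ℤ, ∑ i, (z i : ℝ) • v i = (m : ℝ) • u + (n : ℝ) • w := by
    intro z hz
    have h0 := hdet z
    rw [hz, Int.cast_zero, zero_mul] at h0
    set x := ∑ i, (z i : ℝ) • v i with hx
    have hdep : ¬ LinearIndependent ℝ ![u, w, x] := by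
      intro h
      have := (Matrix.linearIndependent_rows_iff_isUnit (A := Matrix.of ![u, w, x])).1 h
      rw [Matrix.isUnit_iff_isUnit_det, h0] at this
      simp at this
    have hmem : x ∈ Submodule.span ℝ (Set.range ![u, w]) := by
      by_contra hx'
      apply hdep
      have := (linearIndependent_finSnoc (v := ![u, w]) (x := x)).2 ⟨hind, hx'⟩
      have e : (Fin.snoc ![u, w] x : Fin 3 → Fin 3 → ℝ) = ![u, w, x] := by
        ext i j
        fin_cases i <;> rfl
      exact e ▸ this
    rw [Matrix.range_cons, Matrix.range_cons, Matrix.range_empty, Set.union_empty,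
      Set.singleton_union, Submodule.mem_span_pair] at hmem
    obtain ⟨s, t, hst⟩ := hmem
    obtain ⟨⟨m, rfl⟩, n, rfl⟩ := hpl s t (hst ▸ ⟨z, hx⟩)
    exact ⟨m, n, hst.symm⟩
  obtain ⟨g, hg⟩ := Int.subgroup_cyclic φ.range
  have hgmem : g ∈ φ.range := by
    rw [hg]; exact AddSubgroup.subset_closure rfl
  obtain ⟨x₀, hx₀⟩ := hgmem
  refine ⟨∑ i, (x₀ i : ℝ) • v i, ?_⟩
  have hgen : latticeGen ![u, w, ∑ i, (x₀ i : ℝ) • v i] = latticeGen v := by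
    ext y
    constructor
    · rintro ⟨z, rfl⟩
      have h1 := latticeGen_add_smul (v := v) (x := 0) ⟨0, by simp⟩ ⟨a, ha⟩ (z 0)
      have h2 := latticeGen_add_smul h1 ⟨c, hc⟩ (z 1)
      have h3 := latticeGen_add_smul h2 (⟨x₀, rfl⟩ : ∑ i, (x₀ i : ℝ) • v i ∈ latticeGen v) (z 2)
      rw [Fin.sum_univ_three]
      simpa using h3
    · rintro ⟨z, rfl⟩
      have hz : φ z ∈ φ.range := ⟨z, rfl⟩
      rw [hg, AddSubgroup.mem_closure_singleton] at hz
      obtain ⟨k, hk⟩ := hz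
      obtain ⟨m, n, hmn⟩ := hker (z - k • x₀) (by rw [map_sub, map_zsmul, hx₀, hk, sub_self])
      refine ⟨![m, n, k], ?_⟩
      have : ∑ i, (z i : ℝ) • v i
          = ∑ i, (((z - k • x₀) i : ℤ) : ℝ) • v i + (k : ℝ) • ∑ i, (x₀ i : ℝ) • v i := by
        rw [Finset.smul_sum, ← Finset.sum_add_distrib]
        refine Finset.sum_congr rfl fun i _ => ?_
        simp only [Pi.sub_apply, Pi.smul_apply, smul_eq_mul, Int.cast_sub, Int.cast_mul]
        module
      rw [this, hmn]
      generalize ∑ i, (x₀ i : ℝ) • v i = X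
      simp [Fin.sum_univ_three]
  refine ⟨?_, hgen⟩
  -- Three vectors generating the lattice span the space, hence are independent.
  apply linearIndependent_of_top_le_span_of_card_eq_finrank _ (by simp)
  rw [← hv.span_eq_top_of_card_eq_finrank' (by simp), Submodule.span_le]
  rintro _ ⟨i, rfl⟩
  have hi : v i ∈ latticeGen v := ⟨Pi.single i 1, by simp [Pi.single_apply]⟩
  rw [← hgen] at hi
  obtain ⟨z, hz⟩ := hi
  rw [hz]
  exact Submodule.sum_mem _ fun j _ => Submodule.smul_mem _ _ (Submodule.subset_span ⟨j, rfl⟩)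

/-! ### The planar crosspolytope in coordinates -/

lemma mem_cross_of_abs_le (b₁ b₂ : Fin 3 → ℝ) {s t : ℝ} (h : |s| + |t| ≤ 1) :
    s • b₁ + t • b₂ ∈ convexHull ℝ {b₁, -b₁, b₂, -b₂} := by
  set C := convexHull ℝ ({b₁, -b₁, b₂, -b₂} : Set (Fin 3 → ℝ)) with hC
  have hconv : Convex ℝ C := convex_convexHull _ _
  have h1 : b₁ ∈ C := subset_convexHull _ _ (by simp)
  have h2 : -b₁ ∈ C := subset_convexHull _ _ (by simp)
  have h3 : b₂ ∈ C := subset_convexHull _ _ (by simp)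
  have h4 : -b₂ ∈ C := subset_convexHull _ _ (by simp)
  have h0 : (0 : Fin 3 → ℝ) ∈ C := by
    have := hconv h1 h2 (a := 1 / 2) (b := 1 / 2) (by norm_num) (by norm_num) (by norm_num)
    simpa using this
  have key : ∀ p ∈ C, ∀ q ∈ C, |s| • p + |t| • q ∈ C := by
    intro p hp q hq
    have := hconv.sum_mem (t := Finset.univ) (w := ![|s|, |t|, 1 - |s| - |t|]) (z := ![p, q, 0])
      (by
        intro i _
        fin_cases i
        · exact abs_nonneg s
        · exact abs_nonneg t
        · change 0 ≤ 1 - |s| - |t|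
          linarith)
      (by simp [Fin.sum_univ_three])
      (by intro i _; fin_cases i <;> assumption)
    simpa [Fin.sum_univ_three] using this
  rcases abs_choice s with hs | hs <;> rcases abs_choice t with ht | ht
  · simpa only [hs, ht] using key _ h1 _ h3
  · simpa only [hs, ht, neg_smul, smul_neg, neg_neg] using key _ h1 _ h4
  · simpa only [hs, ht, neg_smul, smul_neg, neg_neg] using key _ h2 _ h3
  · simpa only [hs, ht, neg_smul, smul_neg, neg_neg] using key _ h2 _ h4

lemma exists_of_mem_cross {b₁ b₂ p : Fin 3 → ℝ} (h : p ∈ convexHull ℝ {b₁, -b₁, b₂, -b₂}) :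
    ∃ s t : ℝ, p = s • b₁ + t • b₂ ∧ |s| + |t| ≤ 1 := by
  have : convexHull ℝ {b₁, -b₁, b₂, -b₂} ⊆
      {p | ∃ s t : ℝ, p = s • b₁ + t • b₂ ∧ |s| + |t| ≤ 1} := by
    apply convexHull_min
    · rintro p (rfl | rfl | rfl | rfl)
      · exact ⟨1, 0, by simp, by simp⟩
      · exact ⟨-1, 0, by simp, by simp⟩
      · exact ⟨0, 1, by simp, by simp⟩
      · exact ⟨0, -1, by simp, by simp⟩
    · rintro _ ⟨s, t, rfl, hst⟩ _ ⟨s', t', rfl, hst'⟩ a b ha hb hab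
      refine ⟨a * s + b * s', a * t + b * t', by module, ?_⟩
      have e1 := abs_add_le (a * s) (b * s')
      have e2 := abs_add_le (a * t) (b * t')
      rw [abs_mul, abs_mul, abs_of_nonneg ha, abs_of_nonneg hb] at e1 e2
      nlinarith [mul_le_mul_of_nonneg_left hst ha, mul_le_mul_of_nonneg_left hst' hb]
  exact this h

lemma mem_intrinsicInterior_cross {b₁ b₂ : Fin 3 → ℝ} (hind : LinearIndependent ℝ ![b₁, b₂])
    {s t : ℝ} (h : |s| + |t| < 1) :
    s • b₁ + t • b₂ ∈ intrinsicInterior ℝ (convexHull ℝ {b₁, -b₁, b₂, -b₂}) := by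
  set C := convexHull ℝ ({b₁, -b₁, b₂, -b₂} : Set (Fin 3 → ℝ)) with hC
  -- A linear left inverse `G` of `(s, t) ↦ s b₁ + t b₂` extends the coordinates to the whole space.
  obtain ⟨G, hG⟩ := LinearMap.exists_leftInverse_of_injective
    (Fintype.linearCombination ℝ ![b₁, b₂])
    (LinearMap.ker_eq_bot.2 hind.fintypeLinearCombination_injective)
  have hGc : ∀ s t : ℝ, G (s • b₁ + t • b₂) = ![s, t] := by
    intro s t
    have := LinearMap.congr_fun hG ![s, t]
    simpa [Fintype.linearCombination_apply, Fin.sum_univ_two] using this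
  have hcont : Continuous G := G.continuous_of_finiteDimensional
  rw [mem_intrinsicInterior]
  refine ⟨⟨s • b₁ + t • b₂, subset_affineSpan ℝ _ (mem_cross_of_abs_le b₁ b₂ h.le)⟩, ?_, rfl⟩
  rw [mem_interior]
  refine ⟨{z | |G z 0| + |G z 1| < 1}, ?_, ?_, ?_⟩
  · rintro ⟨z, hz⟩ hzlt
    have hsp : z ∈ Submodule.span ℝ ({b₁, b₂} : Set (Fin 3 → ℝ)) := by
      have hle : affineSpan ℝ C ≤ (Submodule.span ℝ {b₁, b₂}).toAffineSubspace := by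
        rw [affineSpan_le]
        intro p hp
        obtain ⟨s, t, rfl, -⟩ := exists_of_mem_cross hp
        exact Submodule.mem_span_pair.2 ⟨s, t, rfl⟩
      exact hle hz
    obtain ⟨x, y, rfl⟩ := Submodule.mem_span_pair.1 hsp
    simp only [Set.mem_ofPred_eq, hGc] at hzlt
    exact mem_cross_of_abs_le b₁ b₂ hzlt.le
  · apply isOpen_lt _ continuous_const
    have hc' := hcont.comp (continuous_subtype_val (p := fun z => z ∈ affineSpan ℝ C))
    exact ((continuous_apply 0).comp hc').abs.add ((continuous_apply 1).comp hc').abs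
  · simpa [hGc] using h

/-- Coordinates of lattice points in the plane of a lattice crosspolytope are both integers or
both half-integers. -/
lemma coords_int_or_half {v : Fin 3 → Fin 3 → ℝ} {b₁ b₂ : Fin 3 → ℝ} (hb₁ : b₁ ∈ latticeGen v)
    (hb₂ : b₂ ∈ latticeGen v) (hind : LinearIndependent ℝ ![b₁, b₂])
    (hcross : latticeGen v ∩ intrinsicInterior ℝ (convexHull ℝ {b₁, -b₁, b₂, -b₂}) = {0})
    {x y : ℝ} (h : x • b₁ + y • b₂ ∈ latticeGen v) :
    ∃ m n : ℤ, (x = m ∧ y = n) ∨ (x = m + 1 / 2 ∧ y = n + 1 / 2) := by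
  have hmem : (x - round x) • b₁ + (y - round y) • b₂ ∈ latticeGen v := by
    have := latticeGen_add_smul (latticeGen_add_smul h hb₁ (-round x)) hb₂ (-round y)
    convert this using 1
    push_cast
    module
  have hx := abs_sub_round x
  have hy := abs_sub_round y
  by_cases hlt : |x - round x| + |y - round y| < 1
  · have h0 : (x - round x) • b₁ + (y - round y) • b₂ ∈ ({0} : Set (Fin 3 → ℝ)) :=
      hcross ▸ ⟨hmem, mem_intrinsicInterior_cross hind hlt⟩
    obtain ⟨e1, e2⟩ := LinearIndependent.pair_iff.1 hind _ _ h0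
    exact ⟨round x, round y, Or.inl ⟨by linarith, by linarith⟩⟩
  · have ex : |x - round x| = 1 / 2 := by linarith
    have ey : |y - round y| = 1 / 2 := by linarith
    have half : ∀ r : ℝ, |r - round r| = 1 / 2 → ∃ m : ℤ, r = m + 1 / 2 := by
      intro r hr
      rcases abs_choice (r - round r) with h' | h'
      · exact ⟨round r, by linarith⟩
      · exact ⟨round r - 1, by push_cast; linarith⟩
    obtain ⟨m, hm⟩ := half x ex
    obtain ⟨n, hn⟩ := half y ey
    exact ⟨m, n, Or.inr ⟨hm, hn⟩⟩

/-! ### The classification -/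

/-- Minkowski's classification of (free) lattice crosspolytopes in ℝ³ for `k = 2`:
if `C = conv{±b¹, ±b²}` is a lattice crosspolytope, then if it is free, `{b¹, b²}`
is primitive, and if it is not free, there is a ℤ-basis `(v¹, v², v³)` of `Λ` with
`C = conv{±v¹, ±(v¹ + 2v²)}`. -/
theorem stmt_1 (Λ : Set (Fin 3 → ℝ)) (hΛ : ∃ v, IsZBasis v Λ)
    (b₁ b₂ : Fin 3 → ℝ) (hb₁ : b₁ ∈ Λ) (hb₂ : b₂ ∈ Λ)
    (hind : LinearIndependent ℝ ![b₁, b₂])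
    (C : Set (Fin 3 → ℝ)) (hC : C = convexHull ℝ {b₁, -b₁, b₂, -b₂})
    (hcross : Λ ∩ intrinsicInterior ℝ C = {0}) :
    (Λ ∩ intrinsicFrontier ℝ C = {b₁, -b₁, b₂, -b₂} →
      ∃ v, IsZBasis v Λ ∧ v 0 = b₁ ∧ v 1 = b₂) ∧
    (Λ ∩ intrinsicFrontier ℝ C ≠ {b₁, -b₁, b₂, -b₂} →
      ∃ v, IsZBasis v Λ ∧
        C = convexHull ℝ {v 0, -(v 0), v 0 + (2:ℝ) • v 1, -(v 0 + (2:ℝ) • v 1)}) := by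
  obtain ⟨v, hv, rfl⟩ := hΛ
  subst hC
  have hcoord := fun x y : ℝ => coords_int_or_half (x := x) (y := y) hb₁ hb₂ hind hcross
  have hne : ∀ x y : ℝ, x • b₁ + y • b₂ = 0 → x = 0 ∧ y = 0 := LinearIndependent.pair_iff.1 hind
  -- A nonzero lattice point of `C` is not interior, hence is on the boundary.
  have hfront : ∀ x y : ℝ, |x| + |y| ≤ 1 → ¬ (x = 0 ∧ y = 0) → x • b₁ + y • b₂ ∈ latticeGen v →
      x • b₁ + y • b₂ ∈ intrinsicFrontier ℝ (convexHull ℝ {b₁, -b₁, b₂, -b₂}) := by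
    intro x y hxy h0 hmem
    rw [← intrinsicClosure_sdiff_intrinsicInterior]
    refine ⟨subset_intrinsicClosure (mem_cross_of_abs_le b₁ b₂ hxy), fun hint => h0 (hne x y ?_)⟩
    have : x • b₁ + y • b₂ ∈ ({0} : Set (Fin 3 → ℝ)) := hcross ▸ ⟨hmem, hint⟩
    exact this
  have hneg : ∀ p ∈ latticeGen v, -p ∈ latticeGen v := by
    intro p hp
    have := latticeGen_add_smul (v := v) (x := 0) ⟨0, by simp⟩ hp (-1)
    simpa using this
  set k : Fin 3 → ℝ := (-1 / 2 : ℝ) • b₁ + (1 / 2 : ℝ) • b₂ with hk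
  by_cases hkmem : k ∈ latticeGen v
  · constructor
    · -- `k` is a boundary lattice point that is not a vertex.
      intro hfree
      exfalso
      have hkf := hfront (-1 / 2) (1 / 2) (by norm_num [abs_of_neg]) (by norm_num) hkmem
      have hkv : k ∈ ({b₁, -b₁, b₂, -b₂} : Set (Fin 3 → ℝ)) := hfree ▸ ⟨hkmem, hkf⟩
      rcases hkv with h | h | h | h
      · have := (hne (-1 / 2 - 1) (1 / 2) (by rw [← sub_eq_zero, hk] at h; rw [← h]; module)).2
        norm_num at this
      · have := (hne (-1 / 2 + 1) (1 / 2) (by rw [← sub_eq_zero, hk] at h; rw [← h]; module)).2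
        norm_num at this
      · have := (hne (-1 / 2) (1 / 2 - 1) (by rw [← sub_eq_zero, hk] at h; rw [← h]; module)).1
        norm_num at this
      · have h : k = -b₂ := h
        have := (hne (-1 / 2) (1 / 2 + 1) (by rw [← sub_eq_zero, hk] at h; rw [← h]; module)).1
        norm_num at this
    · intro _
      have hindk : LinearIndependent ℝ ![b₁, k] := by
        rw [LinearIndependent.pair_iff]
        intro s t hst
        obtain ⟨e1, e2⟩ := hne (s - t / 2) (t / 2) (by rw [← hst, hk]; module)
        constructor <;> linarith
      obtain ⟨x, hx⟩ := extend_pair hv hb₁ hkmem hindk (by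
        intro s t hst
        have hst' : (s - t / 2) • b₁ + (t / 2) • b₂ ∈ latticeGen v := by
          convert hst using 1
          rw [hk]; module
        obtain ⟨m, n, ⟨h1, h2⟩ | ⟨h1, h2⟩⟩ := hcoord _ _ hst'
        · exact ⟨⟨m + n, by push_cast; linarith⟩, 2 * n, by push_cast; linarith⟩
        · exact ⟨⟨m + n + 1, by push_cast; linarith⟩, 2 * n + 1, by push_cast; linarith⟩)
      refine ⟨_, hx, ?_⟩
      have e : b₁ + (2 : ℝ) • k = b₂ := by rw [hk]; module
      simp [e]
  · -- A half-integral lattice point would be congruent to `k` modulo `b₁, b₂`.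
    have hint : ∀ x y : ℝ, x • b₁ + y • b₂ ∈ latticeGen v →
        (∃ m : ℤ, x = m) ∧ ∃ n : ℤ, y = n := by
      intro x y hxy
      obtain ⟨m, n, ⟨h1, h2⟩ | ⟨h1, h2⟩⟩ := hcoord _ _ hxy
      · exact ⟨⟨m, h1⟩, n, h2⟩
      · exfalso
        apply hkmem
        have := latticeGen_add_smul (latticeGen_add_smul hxy hb₁ (-m - 1)) hb₂ (-n)
        convert this using 1
        rw [hk, h1, h2]
        push_cast
        module
    constructor
    · intro _
      obtain ⟨x, hx⟩ := extend_pair hv hb₁ hb₂ hind hint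
      exact ⟨_, hx, rfl, rfl⟩
    · intro hnf
      exfalso
      apply hnf
      apply Set.Subset.antisymm
      · rintro p ⟨hpΛ, hpf⟩
        have hcl : IsClosed (convexHull ℝ ({b₁, -b₁, b₂, -b₂} : Set (Fin 3 → ℝ))) :=
          (Set.Finite.isCompact_convexHull ℝ (Set.toFinite _)).isClosed
        obtain ⟨s, t, rfl, hst⟩ := exists_of_mem_cross (intrinsicFrontier_subset hcl hpf)
        have h0 : ¬ (s = 0 ∧ t = 0) := by
          rintro ⟨rfl, rfl⟩
          rw [← intrinsicClosure_sdiff_intrinsicInterior] at hpf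
          exact hpf.2 (mem_intrinsicInterior_cross hind (by simp))
        obtain ⟨⟨m, rfl⟩, n, rfl⟩ := hint s t hpΛ
        have hmn : |m| + |n| ≤ 1 := by exact_mod_cast hst
        have h0' : ¬ (m = 0 ∧ n = 0) := by simpa using h0
        have : (m = 1 ∧ n = 0) ∨ (m = -1 ∧ n = 0) ∨ (m = 0 ∧ n = 1) ∨ (m = 0 ∧ n = -1) := by
          rw [Int.abs_eq_natAbs, Int.abs_eq_natAbs] at hmn
          omega
        rcases this with ⟨rfl, rfl⟩ | ⟨rfl, rfl⟩ | ⟨rfl, rfl⟩ | ⟨rfl, rfl⟩ <;> simp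
      · have f1 := hfront 1 0 (by simp) (by simp) (by simpa using hb₁)
        have f2 := hfront (-1) 0 (by simp) (by simp) (by simpa using hneg _ hb₁)
        have f3 := hfront 0 1 (by simp) (by simp) (by simpa using hb₂)
        have f4 := hfront 0 (-1) (by simp) (by simp) (by simpa using hneg _ hb₂)
        simp only [one_smul, zero_smul, add_zero, zero_add, neg_smul] at f1 f2 f3 f4
        rintro p (rfl | rfl | rfl | rfl)
        · exact ⟨hb₁, f1⟩
        · exact ⟨hneg _ hb₁, f2⟩
        · exact ⟨hb₂, f3⟩
        · exact ⟨hneg _ hb₂, f4⟩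
end

section
/- Let Λ ⊂ ℝ³ be a lattice and let b¹, b², b³ ∈ Λ be linearly independent such that C = conv{±b¹, ±b², ±b³} is a free lattice crosspolytope. Then either {b¹, b², b³} is primitive (crosspolytope of the first type), or there exists a ℤ-basis (v¹, v², v³) of Λ such that {±b¹, ±b², ±b³} = {±v¹, ±v², ±(v¹ + v² + 2v³)} (crosspolytope of the second type). -/
lemma exists_sign_abs_two_mul_sub {a : ℝ} (ha : |a| ≤ 1 / 2) :
    ∃ n : ℤ, (n = 1 ∨ n = -1) ∧ |2 * a - n| = 1 - 2 * |a| := by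
  obtain ⟨h1, h2⟩ := abs_le.1 ha
  rcases le_total 0 a with h | h
  · refine ⟨1, Or.inl rfl, ?_⟩
    rw [abs_of_nonneg h, abs_of_nonpos] <;> push_cast <;> linarith
  · refine ⟨-1, Or.inr rfl, ?_⟩
    rw [abs_of_nonpos h, abs_of_nonneg] <;> push_cast <;> linarith

lemma exists_int_add_half {x : ℝ} {r n : ℤ} (hn : n = 1 ∨ n = -1)
    (h : 2 * (x - r) - n = 0) : ∃ m : ℤ, x = m + 1 / 2 := by
  rcases hn with rfl | rfl
  · exact ⟨r, by push_cast at h; linarith⟩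
  · exact ⟨r - 1, by push_cast at h ⊢; linarith⟩

/-- The coordinate form of the classification. `M` is membership in a subset of `ℝ³` stable under
integer multiples followed by integer translations, in which `0` is the only point of the closed
`ℓ¹` unit ball other than (possibly) its vertices. -/
lemma integral_or_half_integral (M : ℝ → ℝ → ℝ → Prop)
    (hM : ∀ x y z, M x y z → ∀ k m n p : ℤ, M (k * x - m) (k * y - n) (k * z - p))
    (h0 : ∀ x y z, M x y z → |x| < 1 → |y| < 1 → |z| < 1 → |x| + |y| + |z| ≤ 1 →
      x = 0 ∧ y = 0 ∧ z = 0)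
    {x y z : ℝ} (h : M x y z) :
    (∃ m n p : ℤ, x = m ∧ y = n ∧ z = p) ∨
      ∃ m n p : ℤ, x = m + 1 / 2 ∧ y = n + 1 / 2 ∧ z = p + 1 / 2 := by
  have hx := abs_sub_round x
  have hy := abs_sub_round y
  have hz := abs_sub_round z
  have hr : M (x - round x) (y - round y) (z - round z) := by
    simpa using hM _ _ _ h 1 (round x) (round y) (round z)
  by_cases hs : |x - round x| + |y - round y| + |z - round z| ≤ 1
  · obtain ⟨e1, e2, e3⟩ := h0 _ _ _ hr (by linarith) (by linarith) (by linarith) hs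
    exact Or.inl ⟨round x, round y, round z, by linarith, by linarith, by linarith⟩
  · push Not at hs
    obtain ⟨m, hm, em⟩ := exists_sign_abs_two_mul_sub hx
    obtain ⟨n, hn, en⟩ := exists_sign_abs_two_mul_sub hy
    obtain ⟨p, hp, ep⟩ := exists_sign_abs_two_mul_sub hz
    have h2 := hM _ _ _ hr 2 m n p
    push_cast at h2
    obtain ⟨e1, e2, e3⟩ := h0 _ _ _ h2 (by linarith) (by linarith) (by linarith) (by linarith)
    obtain ⟨m', hm'⟩ := exists_int_add_half hm e1
    obtain ⟨n', hn'⟩ := exists_int_add_half hn e2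
    obtain ⟨p', hp'⟩ := exists_int_add_half hp e3
    exact Or.inr ⟨m', n', p', hm', hn', hp'⟩

lemma mem_crosspolytope (b₁ b₂ b₃ : Fin 3 → ℝ) {x y z : ℝ} (h : |x| + |y| + |z| ≤ 1) :
    x • b₁ + y • b₂ + z • b₃ ∈
      convexHull ℝ ({b₁, -b₁, b₂, -b₂, b₃, -b₃} : Set (Fin 3 → ℝ)) := by
  set S : Set (Fin 3 → ℝ) := {b₁, -b₁, b₂, -b₂, b₃, -b₃} with hS
  have hconv := convex_convexHull ℝ S
  have hsub := subset_convexHull ℝ S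
  -- The slack `1 - (|x| + |y| + |z|)` is shared equally between `b₁` and `-b₁`.
  have key := hconv.sum_mem (t := Finset.univ)
    (w := ![(|x| + x) / 2 + (1 - (|x| + |y| + |z|)) / 2,
      (|x| - x) / 2 + (1 - (|x| + |y| + |z|)) / 2,
      (|y| + y) / 2, (|y| - y) / 2, (|z| + z) / 2, (|z| - z) / 2])
    (z := ![b₁, -b₁, b₂, -b₂, b₃, -b₃])
    (by
      have := neg_abs_le x
      have := neg_abs_le y
      have := neg_abs_le z
      have := le_abs_self x
      have := le_abs_self y
      have := le_abs_self z
      intro i _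
      fin_cases i <;> simp <;> linarith)
    (by simp [Fin.sum_univ_succ]; ring)
    (by
      intro i _
      apply hsub
      fin_cases i <;> simp [hS])
  convert key using 1
  ext i
  simp [Fin.sum_univ_succ]
  ring

lemma coord_eq {b₁ b₂ b₃ : Fin 3 → ℝ} (hind : LinearIndependent ℝ ![b₁, b₂, b₃])
    {x y z x' y' z' : ℝ} (h : x • b₁ + y • b₂ + z • b₃ = x' • b₁ + y' • b₂ + z' • b₃) :
    x = x' ∧ y = y' ∧ z = z' := by
  have h' := Fintype.linearIndependent_iff.1 hind ![x - x', y - y', z - z'] (by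
    simp only [Fin.sum_univ_three, Matrix.cons_val]
    rw [← sub_eq_zero] at h
    rw [← h]
    module)
  exact ⟨sub_eq_zero.1 (h' 0), sub_eq_zero.1 (h' 1), sub_eq_zero.1 (h' 2)⟩

/-- A lattice point of the free crosspolytope none of whose coordinates is `±1` is the origin. -/
lemma eq_zero_of_abs_lt_one {Λ : Set (Fin 3 → ℝ)} {b₁ b₂ b₃ : Fin 3 → ℝ}
    (hind : LinearIndependent ℝ ![b₁, b₂, b₃]) {C : Set (Fin 3 → ℝ)}
    (hC : C = convexHull ℝ {b₁, -b₁, b₂, -b₂, b₃, -b₃})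
    (hcross : Λ ∩ interior C = {0})
    (hfree : Λ ∩ frontier C = {b₁, -b₁, b₂, -b₂, b₃, -b₃})
    (x y z : ℝ) (h : x • b₁ + y • b₂ + z • b₃ ∈ Λ) (hx : |x| < 1) (hy : |y| < 1) (hz : |z| < 1)
    (hs : |x| + |y| + |z| ≤ 1) : x = 0 ∧ y = 0 ∧ z = 0 := by
  have hmem : x • b₁ + y • b₂ + z • b₃ ∈ C := hC ▸ mem_crosspolytope b₁ b₂ b₃ hs
  have hcl := subset_closure hmem
  rw [closure_eq_interior_union_frontier] at hcl
  rw [abs_lt] at hx hy hz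
  rcases hcl with hi | hf
  · have h1 : x • b₁ + y • b₂ + z • b₃ ∈ ({0} : Set (Fin 3 → ℝ)) := hcross ▸ ⟨h, hi⟩
    refine coord_eq hind (x' := 0) (y' := 0) (z' := 0) ?_
    rw [Set.mem_singleton_iff.1 h1]
    module
  · have h1 : x • b₁ + y • b₂ + z • b₃ ∈
      ({b₁, -b₁, b₂, -b₂, b₃, -b₃} : Set (Fin 3 → ℝ)) := hfree ▸ ⟨h, hf⟩
    exfalso
    simp only [Set.mem_insert_iff, Set.mem_singleton_iff] at h1
    rcases h1 with e | e | e | e | e | e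
    · have := (coord_eq hind (x' := 1) (y' := 0) (z' := 0) (by rw [e]; module)).1
      linarith
    · have := (coord_eq hind (x' := -1) (y' := 0) (z' := 0) (by rw [e]; module)).1
      linarith
    · have := (coord_eq hind (x' := 0) (y' := 1) (z' := 0) (by rw [e]; module)).2.1
      linarith
    · have := (coord_eq hind (x' := 0) (y' := -1) (z' := 0) (by rw [e]; module)).2.1
      linarith
    · have := (coord_eq hind (x' := 0) (y' := 0) (z' := 1) (by rw [e]; module)).2.2
      linarith
    · have := (coord_eq hind (x' := 0) (y' := 0) (z' := -1) (by rw [e]; module)).2.2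
      linarith

lemma exists_coord {b₁ b₂ b₃ : Fin 3 → ℝ} (hind : LinearIndependent ℝ ![b₁, b₂, b₃])
    (u : Fin 3 → ℝ) : ∃ x y z : ℝ, u = x • b₁ + y • b₂ + z • b₃ := by
  have hspan := hind.span_eq_top_of_card_eq_finrank (by simp)
  have hu : u ∈ Submodule.span ℝ (Set.range ![b₁, b₂, b₃]) := hspan ▸ Submodule.mem_top
  obtain ⟨c, hc⟩ := (Submodule.mem_span_range_iff_exists_fun ℝ).1 hu
  exact ⟨c 0, c 1, c 2, by rw [← hc]; simp [Fin.sum_univ_three]⟩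

lemma latticeGen_int_comb {v : Fin 3 → Fin 3 → ℝ} {u w : Fin 3 → ℝ} (hu : u ∈ latticeGen v)
    (hw : w ∈ latticeGen v) (k m : ℤ) : (k : ℝ) • u + (m : ℝ) • w ∈ latticeGen v := by
  obtain ⟨a, rfl⟩ := hu
  obtain ⟨c, rfl⟩ := hw
  refine ⟨fun i => k * a i + m * c i, ?_⟩
  simp only [Fin.sum_univ_three]
  push_cast
  module

/-- Minkowski's classification of free lattice crosspolytopes in ℝ³ for `k = 3`:
either the vertices are primitive (first type), or for some ℤ-basis `(v¹, v², v³)`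
of `Λ` the vertex set is `{±v¹, ±v², ±(v¹ + v² + 2v³)}` (second type). -/
theorem stmt_2 (Λ : Set (Fin 3 → ℝ)) (hΛ : ∃ v, IsZBasis v Λ)
    (b₁ b₂ b₃ : Fin 3 → ℝ) (hb₁ : b₁ ∈ Λ) (hb₂ : b₂ ∈ Λ) (hb₃ : b₃ ∈ Λ)
    (hind : LinearIndependent ℝ ![b₁, b₂, b₃])
    (C : Set (Fin 3 → ℝ)) (hC : C = convexHull ℝ {b₁, -b₁, b₂, -b₂, b₃, -b₃})
    (hcross : Λ ∩ interior C = {0})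
    (hfree : Λ ∩ frontier C = {b₁, -b₁, b₂, -b₂, b₃, -b₃}) :
    IsZBasis ![b₁, b₂, b₃] Λ ∨
    ∃ v, IsZBasis v Λ ∧
      ({b₁, -b₁, b₂, -b₂, b₃, -b₃} : Set (Fin 3 → ℝ)) =
        {v 0, -(v 0), v 1, -(v 1), v 0 + v 1 + (2:ℝ) • v 2,
          -(v 0 + v 1 + (2:ℝ) • v 2)} := by
  have hcomb : ∀ u ∈ Λ, ∀ w ∈ Λ, ∀ k m : ℤ, (k : ℝ) • u + (m : ℝ) • w ∈ Λ := by
    obtain ⟨v, -, rfl⟩ := hΛ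
    exact fun u hu w hw k m => latticeGen_int_comb hu hw k m
  have hcomb3 : ∀ u ∈ Λ, ∀ v ∈ Λ, ∀ w ∈ Λ, ∀ k m n : ℤ,
      (k : ℝ) • u + (m : ℝ) • v + (n : ℝ) • w ∈ Λ := by
    intro u hu v hv w hw k m n
    simpa using hcomb _ (hcomb u hu v hv k m) w hw 1 n
  have hclass : ∀ x y z : ℝ, x • b₁ + y • b₂ + z • b₃ ∈ Λ → _ := fun x y z h =>
    integral_or_half_integral (fun x y z => x • b₁ + y • b₂ + z • b₃ ∈ Λ)
      (fun x y z h k m n p => by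
        have := hcomb _ h _ (hcomb3 _ hb₁ _ hb₂ _ hb₃ m n p) k (-1)
        push_cast at this
        convert this using 1
        module)
      (eq_zero_of_abs_lt_one hind hC hcross hfree) h
  by_cases hhalf : ∃ m n p : ℤ,
      ((m : ℝ) + 1 / 2) • b₁ + ((n : ℝ) + 1 / 2) • b₂ + ((p : ℝ) + 1 / 2) • b₃ ∈ Λ
  · right
    obtain ⟨m, n, p, hmem⟩ := hhalf
    have hv : (1 / 2 : ℝ) • (b₃ - b₁ - b₂) ∈ Λ := by
      have := hcomb _ hmem _ (hcomb3 _ hb₁ _ hb₂ _ hb₃ (m + 1) (n + 1) p) 1 (-1)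
      push_cast at this
      convert this using 1
      module
    refine ⟨![b₁, b₂, (1 / 2 : ℝ) • (b₃ - b₁ - b₂)], ⟨?_, ?_⟩, ?_⟩
    · rw [Fintype.linearIndependent_iff]
      intro g hg
      simp only [Fin.sum_univ_three, Matrix.cons_val] at hg
      obtain ⟨e1, e2, e3⟩ := coord_eq hind (x := g 0 - g 2 / 2) (y := g 1 - g 2 / 2)
        (z := g 2 / 2) (x' := 0) (y' := 0) (z' := 0) (by
          trans (0 : Fin 3 → ℝ)
          · rw [← hg]; module
          · module)
      intro i
      fin_cases i <;> simp <;> linarith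
    · apply Set.Subset.antisymm
      · rintro u ⟨a, rfl⟩
        simp only [Fin.sum_univ_three, Matrix.cons_val]
        exact hcomb3 _ hb₁ _ hb₂ _ hv _ _ _
      · intro u hu
        obtain ⟨x, y, z, rfl⟩ := exists_coord hind u
        rcases hclass x y z hu with ⟨i, j, k, rfl, rfl, rfl⟩ | ⟨i, j, k, rfl, rfl, rfl⟩
        · refine ⟨![i + k, j + k, 2 * k], ?_⟩
          simp only [Fin.sum_univ_three, Matrix.cons_val]
          push_cast
          module
        · refine ⟨![i + k + 1, j + k + 1, 2 * k + 1], ?_⟩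
          simp only [Fin.sum_univ_three, Matrix.cons_val]
          push_cast
          module
    · have e : b₁ + b₂ + (2 : ℝ) • (1 / 2 : ℝ) • (b₃ - b₁ - b₂) = b₃ := by module
      simp only [Matrix.cons_val, e]
  · left
    refine ⟨hind, Set.Subset.antisymm ?_ ?_⟩
    · rintro u ⟨a, rfl⟩
      simp only [Fin.sum_univ_three, Matrix.cons_val]
      exact hcomb3 _ hb₁ _ hb₂ _ hb₃ _ _ _
    · intro u hu
      obtain ⟨x, y, z, rfl⟩ := exists_coord hind u
      rcases hclass x y z hu with ⟨i, j, k, rfl, rfl, rfl⟩ | ⟨i, j, k, rfl, rfl, rfl⟩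
      · exact ⟨![i, j, k], by simp [Fin.sum_univ_three]⟩
      · exact absurd ⟨i, j, k, hu⟩ hhalf
end

section
/- Let K ∈ K³₀. Then there exists a critical lattice Λ of K with a ℤ-basis B = (b¹, b², b³) such that one of the following three cases holds: (1) all six points of U¹_B lie on bd(K), and K contains no lattice crosspolytope of Λ of the second type (i.e. there is no ℤ-basis (v¹, v², v³) of Λ with v¹, v², v¹ + v² + 2v³ ∈ K); (2) all six points of U²_B lie on bd(K) and (1,1,1)_B ∉ K; (3) all seven points of U³_B lie on bd(K). -/
/-- `Λ` is admissible for `K`: the interior of `K` contains no lattice point but `0`. -/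
def IsAdmissible (K Λ : Set (Fin 3 → ℝ)) : Prop :=
  interior K ∩ Λ = {0}

/-- The first test set `U¹_B`. -/
def testSet₁ (v : Fin 3 → Fin 3 → ℝ) : Set (Fin 3 → ℝ) :=
  {v 0, v 1, v 2, v 1 - v 2, -(v 0) + v 2, v 0 - v 1}

/-- The second test set `U²_B`. -/
def testSet₂ (v : Fin 3 → Fin 3 → ℝ) : Set (Fin 3 → ℝ) :=
  {v 0, v 1, v 2, v 1 + v 2, v 0 + v 2, v 0 + v 1}

/-- The third test set `U³_B`. -/
def testSet₃ (v : Fin 3 → Fin 3 → ℝ) : Set (Fin 3 → ℝ) :=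
  testSet₂ v ∪ {v 0 + v 1 + v 2}

/-! ### Norms on `ℝ³` -/

/-- `N` is a norm on `ℝ³`, given as a bare function so that it can be varied freely. -/
structure IsNorm3 (N : (Fin 3 → ℝ) → ℝ) : Prop where
  add_le : ∀ x y, N (x + y) ≤ N x + N y
  smul : ∀ (t : ℝ) x, N (t • x) = |t| * N x
  pos : ∀ x, x ≠ 0 → 0 < N x

/-- Strict convexity of a norm: the triangle inequality is strict on independent pairs. -/
def StrictNorm3 (N : (Fin 3 → ℝ) → ℝ) : Prop :=
  ∀ x y, LinearIndependent ℝ ![x, y] → N (x + y) < N x + N y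

namespace IsNorm3

variable {N : (Fin 3 → ℝ) → ℝ}

lemma zero (h : IsNorm3 N) : N 0 = 0 := by
  have := h.smul 0 0
  simpa using this

lemma neg (h : IsNorm3 N) (x) : N (-x) = N x := by
  have := h.smul (-1) x
  simpa using this

lemma nonneg (h : IsNorm3 N) (x) : 0 ≤ N x := by
  by_cases hx : x = 0
  · rw [hx, h.zero]
  · exact (h.pos x hx).le

lemma sub_le (h : IsNorm3 N) (x y) : N (x - y) ≤ N x + N y := by
  rw [sub_eq_add_neg, ← h.neg y]; exact h.add_le _ _

lemma sub_comm (h : IsNorm3 N) (x y) : N (x - y) = N (y - x) := by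
  rw [← h.neg, neg_sub]

lemma le_add_sub (h : IsNorm3 N) (x y) : N x ≤ N y + N (x - y) := by
  have := h.add_le y (x - y)
  simpa using this

lemma three_le (h : IsNorm3 N) (a b c : ℝ) (x y z : Fin 3 → ℝ) :
    N (a • x + b • y + c • z) ≤ |a| * N x + |b| * N y + |c| * N z := by
  have h1 := h.add_le (a • x + b • y) (c • z)
  have h2 := h.add_le (a • x) (b • y)
  rw [h.smul] at h1
  rw [h.smul, h.smul] at h2
  linarith

lemma exists_upper (h : IsNorm3 N) : ∃ C > 0, ∀ x, N x ≤ C * ‖x‖ := by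
  refine ⟨N (Pi.single 0 1) + N (Pi.single 1 1) + N (Pi.single 2 1) + 1, ?_, ?_⟩
  · have := h.nonneg (Pi.single 0 1)
    have := h.nonneg (Pi.single 1 1)
    have := h.nonneg (Pi.single 2 1)
    linarith
  · intro x
    have hx : x = x 0 • Pi.single 0 1 + x 1 • Pi.single 1 1 + x 2 • Pi.single 2 1 := by
      ext i; fin_cases i <;> simp
    have h3 := h.three_le (x 0) (x 1) (x 2) (Pi.single 0 1) (Pi.single 1 1) (Pi.single 2 1)
    rw [← hx] at h3
    have e (i) : |x i| ≤ ‖x‖ := norm_le_pi_norm x i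
    have e0 := mul_le_mul_of_nonneg_right (e 0) (h.nonneg (Pi.single 0 1))
    have e1 := mul_le_mul_of_nonneg_right (e 1) (h.nonneg (Pi.single 1 1))
    have e2 := mul_le_mul_of_nonneg_right (e 2) (h.nonneg (Pi.single 2 1))
    have := norm_nonneg x
    nlinarith

lemma continuous (h : IsNorm3 N) : Continuous N := by
  obtain ⟨C, hC, hN⟩ := h.exists_upper
  have : LipschitzWith ⟨C, hC.le⟩ N := by
    refine LipschitzWith.of_le_add_mul _ fun x y => ?_
    have := h.le_add_sub x y
    have h2 := hN (x - y)
    rw [dist_eq_norm]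
    change _ ≤ _ + C * _
    linarith
  exact this.continuous

lemma exists_lower (h : IsNorm3 N) : ∃ c > 0, ∀ x, c * ‖x‖ ≤ N x := by
  have hne : (Metric.sphere (0 : Fin 3 → ℝ) 1).Nonempty :=
    NormedSpace.sphere_nonempty.2 zero_le_one
  obtain ⟨y, hy, hmin⟩ := (isCompact_sphere (0 : Fin 3 → ℝ) 1).exists_isMinOn hne
    h.continuous.continuousOn
  have hy1 : ‖y‖ = 1 := by simpa using hy
  refine ⟨N y, h.pos y (by rintro rfl; simp at hy1), fun x => ?_⟩
  by_cases hx : x = 0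
  · simp [hx, h.zero]
  · have hx' : 0 < ‖x‖ := norm_pos_iff.2 hx
    have := hmin (show ‖x‖⁻¹ • x ∈ Metric.sphere (0 : Fin 3 → ℝ) 1 by
      simp [norm_smul, hx'.ne'])
    change N y ≤ N _ at this
    rw [h.smul, abs_of_pos (inv_pos.2 hx'), inv_mul_eq_div, le_div_iff₀ hx'] at this
    exact this

/-- Hahn–Banach: a supporting functional of the unit ball of `N` in direction `p`. -/
lemma exists_support (h : IsNorm3 N) (p : Fin 3 → ℝ) :
    ∃ u : (Fin 3 → ℝ) →ₗ[ℝ] ℝ, u p = N p ∧ ∀ x, u x ≤ N x := by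
  by_cases hp : p = 0
  · exact ⟨0, by simp [hp, h.zero], fun x => by simpa using h.nonneg x⟩
  let f : (Fin 3 → ℝ) →ₗ.[ℝ] ℝ := LinearPMap.mkSpanSingleton p (N p) hp
  obtain ⟨g, hg1, hg2⟩ := exists_extension_of_le_sublinear f N
    (fun c hc x => by rw [h.smul, abs_of_pos hc]) h.add_le (by
      rintro ⟨x, hx⟩
      obtain ⟨c, rfl⟩ := Submodule.mem_span_singleton.1 hx
      rw [LinearPMap.mkSpanSingleton'_apply]
      change c • N p ≤ N (c • p)
      rw [h.smul, smul_eq_mul]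
      exact mul_le_mul_of_nonneg_right (le_abs_self c) (h.nonneg p))
  refine ⟨g, ?_, hg2⟩
  have hm : p ∈ f.domain := Submodule.mem_span_singleton_self p
  have := hg1 ⟨p, hm⟩
  rw [this]
  exact LinearPMap.mkSpanSingleton_apply ℝ ℝ hp (N p)

/-- In a strictly convex norm, the midpoint of two distinct points of the unit ball is interior. -/
lemma midpoint_lt (h : IsNorm3 N) (hs : StrictNorm3 N) {x y : Fin 3 → ℝ} (hx : N x ≤ 1)
    (hy : N y ≤ 1) (hxy : x ≠ y) : N ((1 / 2 : ℝ) • (x + y)) < 1 := by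
  rw [h.smul, abs_of_pos (by norm_num : (0 : ℝ) < 1 / 2)]
  by_cases hli : LinearIndependent ℝ ![x, y]
  · have := hs x y hli; linarith
  by_contra hcon
  have h1 := h.add_le x y
  have hx1 : N x = 1 := by linarith
  have hy1 : N y = 1 := by linarith
  have hx0 : x ≠ 0 := by rintro rfl; rw [h.zero] at hx1; linarith
  have hy0 : y ≠ 0 := by rintro rfl; rw [h.zero] at hy1; linarith
  rcases sameRay_or_sameRay_neg_iff_not_linearIndependent.2 hli with hr | hr
  · obtain ⟨r, hr, he⟩ := hr.exists_pos_left hx0 hy0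
    rw [← he, h.smul, abs_of_pos hr, hx1] at hy1
    apply hxy; rw [← he, show r = 1 by linarith, one_smul]
  · obtain ⟨r, hr, he⟩ := hr.exists_pos_left hx0 (neg_ne_zero.2 hy0)
    rw [← h.neg, ← he, h.smul, abs_of_pos hr, hx1] at hy1
    rw [show r = 1 by linarith, one_smul] at he
    rw [he] at hcon
    simp [h.zero] at hcon

end IsNorm3

/-! ### Determinants and lattice combinations -/

/-- The determinant of the matrix with rows `p, q, r`, as an explicit polynomial. -/
def det3 {R : Type*} [CommRing R] (p q r : Fin 3 → R) : R :=
  p 0 * (q 1 * r 2 - q 2 * r 1) - p 1 * (q 0 * r 2 - q 2 * r 0) + p 2 * (q 0 * r 1 - q 1 * r 0)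

/-- The linear combination of the rows of `v` with coefficients `x`. -/
def lc {R : Type*} [CommRing R] (v : Fin 3 → Fin 3 → R) (x : Fin 3 → R) : Fin 3 → R :=
  x 0 • v 0 + x 1 • v 1 + x 2 • v 2

/-- The real vector underlying an integer vector. -/
def zc (z : Fin 3 → ℤ) : Fin 3 → ℝ := fun i => (z i : ℝ)

lemma matrix_det_eq (v : Fin 3 → Fin 3 → ℝ) : (Matrix.of v).det = det3 (v 0) (v 1) (v 2) := by
  rw [Matrix.det_fin_three]; simp [det3]; ring

lemma det3_cast (p q r : Fin 3 → ℤ) : ((det3 p q r : ℤ) : ℝ) = det3 (zc p) (zc q) (zc r) := by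
  simp [det3, zc]

lemma cramer {R : Type*} [CommRing R] (p q r x : Fin 3 → R) :
    det3 p q r • x = det3 x q r • p + det3 p x r • q + det3 p q x • r := by
  ext i; fin_cases i <;> simp [det3] <;> ring

lemma det3_lc {R : Type*} [CommRing R] (v : Fin 3 → Fin 3 → R) (a b c : Fin 3 → R) :
    det3 (lc v a) (lc v b) (lc v c) = det3 a b c * det3 (v 0) (v 1) (v 2) := by
  simp [det3, lc]; ring

lemma lc_lc {R : Type*} [CommRing R] (v w : Fin 3 → Fin 3 → R) (x : Fin 3 → R) :
    lc (fun i => lc v (w i)) x = lc v (lc w x) := by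
  ext i; simp [lc]; ring

lemma lc_add {R : Type*} [CommRing R] (v : Fin 3 → Fin 3 → R) (x y : Fin 3 → R) :
    lc v (x + y) = lc v x + lc v y := by
  ext i; simp [lc]; ring

lemma lc_smul {R : Type*} [CommRing R] (v : Fin 3 → Fin 3 → R) (t : R) (x : Fin 3 → R) :
    lc v (t • x) = t • lc v x := by
  ext i; simp [lc]; ring

lemma lc_neg {R : Type*} [CommRing R] (v : Fin 3 → Fin 3 → R) (x : Fin 3 → R) :
    lc v (-x) = -lc v x := by
  ext i; simp [lc]; ring

lemma zc_lc (w : Fin 3 → Fin 3 → ℤ) (z : Fin 3 → ℤ) :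
    zc (lc w z) = lc (fun i => zc (w i)) (zc z) := by
  ext i; simp [lc, zc]

lemma zc_add (x y : Fin 3 → ℤ) : zc (x + y) = zc x + zc y := by ext; simp [zc]

lemma zc_sub (x y : Fin 3 → ℤ) : zc (x - y) = zc x - zc y := by ext; simp [zc]

lemma zc_neg (x : Fin 3 → ℤ) : zc (-x) = -zc x := by ext; simp [zc]

lemma zc_smul (t : ℤ) (x : Fin 3 → ℤ) : zc (t • x) = (t : ℝ) • zc x := by ext; simp [zc]

lemma zc_ne_zero {z : Fin 3 → ℤ} (h : z ≠ 0) : zc z ≠ 0 := by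
  intro h0; apply h; ext i
  have := congrFun h0 i
  simpa [zc] using this

lemma lc_eq_zero {R : Type*} [CommRing R] [IsDomain R] {v : Fin 3 → Fin 3 → R}
    (hv : det3 (v 0) (v 1) (v 2) ≠ 0) {x : Fin 3 → R} (h : lc v x = 0) : x = 0 := by
  have e0 : x 0 * det3 (v 0) (v 1) (v 2) = det3 (lc v x) (v 1) (v 2) := by
    simp [det3, lc]; ring
  have e1 : x 1 * det3 (v 0) (v 1) (v 2) = det3 (v 0) (lc v x) (v 2) := by
    simp [det3, lc]; ring
  have e2 : x 2 * det3 (v 0) (v 1) (v 2) = det3 (v 0) (v 1) (lc v x) := by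
    simp [det3, lc]; ring
  rw [h] at e0 e1 e2
  ext i
  fin_cases i
  · simpa [det3, hv] using (mul_eq_zero.1 (e0.trans (by simp [det3]))).resolve_right hv
  · simpa [det3, hv] using (mul_eq_zero.1 (e1.trans (by simp [det3]))).resolve_right hv
  · simpa [det3, hv] using (mul_eq_zero.1 (e2.trans (by simp [det3]))).resolve_right hv

lemma pair_li_of_det3 {p q r : Fin 3 → ℝ} (h : det3 p q r ≠ 0) : LinearIndependent ℝ ![p, q] := by
  rw [LinearIndependent.pair_iff]
  intro s t hst
  have : (![s, t, 0] : Fin 3 → ℝ) = 0 := by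
    apply lc_eq_zero (v := ![p, q, r]) (by simpa using h)
    simpa [lc] using hst
  exact ⟨by simpa using congrFun this 0, by simpa using congrFun this 1⟩

namespace IsNorm3

variable {N : (Fin 3 → ℝ) → ℝ}

lemma comp (h : IsNorm3 N) {v : Fin 3 → Fin 3 → ℝ} (hv : det3 (v 0) (v 1) (v 2) ≠ 0) :
    IsNorm3 fun x => N (lc v x) where
  add_le x y := by rw [lc_add]; exact h.add_le _ _
  smul t x := by rw [lc_smul]; exact h.smul _ _
  pos x hx := h.pos _ fun h0 => hx (lc_eq_zero hv h0)

lemma comp_strict (hs : StrictNorm3 N) {v : Fin 3 → Fin 3 → ℝ}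
    (hv : det3 (v 0) (v 1) (v 2) ≠ 0) : StrictNorm3 fun x => N (lc v x) := by
  intro x y hxy
  simp only [lc_add]
  apply hs
  rw [LinearIndependent.pair_iff] at hxy ⊢
  intro s t hst
  apply hxy
  apply lc_eq_zero hv
  rw [lc_add, lc_smul, lc_smul, hst]

/-- Only finitely many integer points lie in a multiple of the unit ball. -/
lemma finite_le (h : IsNorm3 N) (R : ℝ) : {z : Fin 3 → ℤ | N (zc z) ≤ R}.Finite := by
  obtain ⟨c, hc, hN⟩ := h.exists_lower
  refine (Set.Finite.pi' (t := fun _ : Fin 3 => Set.Icc (-⌈R / c⌉) ⌈R / c⌉)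
    (fun _ => Set.finite_Icc _ _)).subset ?_
  intro z hz i
  have h1 : |(z i : ℝ)| ≤ ‖zc z‖ := norm_le_pi_norm (zc z) i
  have h2 : ‖zc z‖ ≤ R / c := by
    rw [le_div_iff₀ hc, mul_comm]; exact (hN _).trans hz
  have h3 : |(z i : ℝ)| ≤ (⌈R / c⌉ : ℤ) := (h1.trans h2).trans (Int.le_ceil _)
  have h4 : |z i| ≤ ⌈R / c⌉ := by exact_mod_cast h3
  exact abs_le.1 h4

end IsNorm3

/-- Admissibility of the lattice with basis `v` for the unit ball of `N`. -/
def Adm (N : (Fin 3 → ℝ) → ℝ) (v : Fin 3 → Fin 3 → ℝ) : Prop :=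
  ∀ z : Fin 3 → ℤ, z ≠ 0 → 1 ≤ N (lc v (zc z))

/-- `v` is a basis of a critical lattice for the unit ball of `N`. -/
structure IsCrit (N : (Fin 3 → ℝ) → ℝ) (v : Fin 3 → Fin 3 → ℝ) : Prop where
  ne : det3 (v 0) (v 1) (v 2) ≠ 0
  adm : Adm N v
  le : ∀ w : Fin 3 → Fin 3 → ℝ, det3 (w 0) (w 1) (w 2) ≠ 0 → Adm N w →
    |det3 (v 0) (v 1) (v 2)| ≤ |det3 (w 0) (w 1) (w 2)|

/-- Passing to the vectors with integer coordinates `A` keeps admissibility. -/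
lemma Adm.sub {N : (Fin 3 → ℝ) → ℝ} {v : Fin 3 → Fin 3 → ℝ} (h : Adm N v)
    {A : Fin 3 → Fin 3 → ℤ} (hA : det3 (A 0) (A 1) (A 2) ≠ 0) :
    Adm N fun i => lc v (zc (A i)) := by
  intro z hz
  rw [lc_lc v fun i => zc (A i), ← zc_lc]
  exact h _ fun h0 => hz (lc_eq_zero hA h0)

/-! ### Reduced bases and existence of critical lattices -/

/-- The hard sign case of `gram_ordered`: the off-diagonal entries have negative product, and
`x, y, z` are their absolute values. -/
lemma gram_core {a b c x y z : ℝ} (hx : 0 ≤ x) (hy : 0 ≤ y) (hz : 0 ≤ z) (hab : a ≤ b)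
    (hbc : b ≤ c) (hxa : 2 * x ≤ a) (hya : 2 * y ≤ a) (hzb : 2 * z ≤ b)
    (hs : 2 * (x + y + z) ≤ a + b) :
    a * b * c ≤ 4 * (a * b * c - 2 * x * y * z - a * z ^ 2 - b * y ^ 2 - c * x ^ 2) := by
  have ha : 0 ≤ a := by linarith
  have hb : 0 ≤ b := by linarith
  have hc : 0 ≤ c := by linarith
  have h1 : 2 * x ^ 2 ≤ a * x := by nlinarith
  have h2 : 2 * y ^ 2 ≤ a * y := by nlinarith
  have h3 : 2 * z ^ 2 ≤ b * z := by nlinarith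
  have k1 := mul_le_mul_of_nonneg_left h1 hc
  have k2 := mul_le_mul_of_nonneg_left h2 hb
  have k3 := mul_le_mul_of_nonneg_left h3 ha
  have k4 : 4 * (x * y) ≤ a * a := by nlinarith
  have k5 : (4 * (x * y)) * (2 * z) ≤ (a * a) * b :=
    mul_le_mul k4 hzb (by positivity) (by positivity)
  have k6 := mul_le_mul_of_nonneg_left hs (mul_nonneg ha hb)
  have k7 := mul_le_mul_of_nonneg_left hxa (mul_nonneg ha (sub_nonneg.2 hbc))
  have k8 := mul_le_mul_of_nonneg_left hbc (mul_nonneg ha ha)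
  have k9 := mul_le_mul_of_nonneg_left hbc (mul_nonneg ha hb)
  have k10 := mul_le_mul_of_nonneg_left hab (mul_nonneg ha hc)
  nlinarith

/-- If the Gram matrix with diagonal `a ≤ b ≤ c` and off-diagonal entries `d, e, f` satisfies the
reduction inequalities, the product of the diagonal is at most four times the determinant. -/
lemma gram_ordered {a b c d e f : ℝ} (hab : a ≤ b) (hbc : b ≤ c)
    (hd : |2 * d| ≤ a) (he : |2 * e| ≤ a) (hf : |2 * f| ≤ b)
    (h1 : 0 ≤ a + b + 2 * d + 2 * e + 2 * f) (h2 : 0 ≤ a + b - 2 * d + 2 * e - 2 * f)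
    (h3 : 0 ≤ a + b - 2 * d - 2 * e + 2 * f) (h4 : 0 ≤ a + b + 2 * d - 2 * e - 2 * f) :
    a * b * c ≤ 4 * (a * b * c + 2 * d * e * f - a * f ^ 2 - b * e ^ 2 - c * d ^ 2) := by
  rw [abs_le] at hd he hf
  have ha : 0 ≤ a := by linarith
  have hb : 0 ≤ b := by linarith
  have hc : 0 ≤ c := by linarith
  by_cases hp : 0 ≤ d * e * f
  · have q1 : 4 * d ^ 2 ≤ a * b := by nlinarith
    have q2 : 4 * e ^ 2 ≤ a * c := by nlinarith
    have q3 : 4 * f ^ 2 ≤ b * c := by nlinarith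
    have r1 := mul_le_mul_of_nonneg_left q1 hc
    have r2 := mul_le_mul_of_nonneg_left q2 hb
    have r3 := mul_le_mul_of_nonneg_left q3 ha
    nlinarith
  push Not at hp
  rcases le_total 0 d with sd | sd <;> rcases le_total 0 e with se | se <;>
    rcases le_total 0 f with sf | sf
  · exact absurd hp (not_lt.2 (by positivity))
  · have := gram_core (x := d) (y := e) (z := -f) sd se (by linarith) hab hbc (by linarith)
      (by linarith) (by linarith) (by linarith)
    linarith
  · have := gram_core (x := d) (y := -e) (z := f) sd (by linarith) sf hab hbc (by linarith)
      (by linarith) (by linarith) (by linarith)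
    linarith
  · exact absurd hp (not_lt.2 (mul_nonneg_of_nonpos_of_nonpos
      (mul_nonpos_of_nonneg_of_nonpos sd se) sf))
  · have := gram_core (x := -d) (y := e) (z := f) (by linarith) se sf hab hbc (by linarith)
      (by linarith) (by linarith) (by linarith)
    linarith
  · exact absurd hp (not_lt.2 (mul_nonneg_of_nonpos_of_nonpos
      (mul_nonpos_of_nonpos_of_nonneg sd se) sf))
  · exact absurd hp (not_lt.2 (mul_nonneg (mul_nonneg_of_nonpos_of_nonpos sd se) sf))
  · have := gram_core (x := -d) (y := -e) (z := -f) (by linarith) (by linarith) (by linarith)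
      hab hbc (by linarith) (by linarith) (by linarith) (by linarith)
    linarith

/-- The Euclidean inner product on `ℝ³`. -/
def dot3 (x y : Fin 3 → ℝ) : ℝ := x 0 * y 0 + x 1 * y 1 + x 2 * y 2

lemma dot3_self_pos {x : Fin 3 → ℝ} (hx : x ≠ 0) : 0 < dot3 x x := by
  by_contra h
  apply hx
  unfold dot3 at h
  ext i
  fin_cases i <;> simp <;> nlinarith [mul_self_nonneg (x 0), mul_self_nonneg (x 1),
    mul_self_nonneg (x 2)]

lemma norm_sq_le_dot3 (x : Fin 3 → ℝ) : ‖x‖ ^ 2 ≤ dot3 x x := by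
  have h0 : 0 ≤ dot3 x x := by
    unfold dot3
    nlinarith [mul_self_nonneg (x 0), mul_self_nonneg (x 1), mul_self_nonneg (x 2)]
  have : ‖x‖ ≤ √(dot3 x x) := by
    rw [pi_norm_le_iff_of_nonneg (Real.sqrt_nonneg _)]
    intro i
    apply Real.le_sqrt_of_sq_le
    rw [Real.norm_eq_abs, sq_abs]
    unfold dot3
    fin_cases i <;> simp <;>
      nlinarith [mul_self_nonneg (x 0), mul_self_nonneg (x 1), mul_self_nonneg (x 2)]
  calc ‖x‖ ^ 2 ≤ √(dot3 x x) ^ 2 := by gcongr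
    _ = _ := Real.sq_sqrt h0

lemma dot3_le (x : Fin 3 → ℝ) : dot3 x x ≤ 3 * ‖x‖ ^ 2 := by
  have e (i) : x i * x i ≤ ‖x‖ ^ 2 := by
    have h := norm_le_pi_norm x i
    have h' : ‖x i‖ * ‖x i‖ = x i * x i := by rw [Real.norm_eq_abs, abs_mul_abs_self]
    rw [← h']; nlinarith [norm_nonneg (x i)]
  unfold dot3; linarith [e 0, e 1, e 2]

/-- If no unimodular base change lowers the sum of the squared lengths of `w`, then
`∏ |wᵢ|² ≤ 4 det²`. -/
lemma reduced_bound (w : Fin 3 → Fin 3 → ℝ)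
    (hmin : ∀ T : Fin 3 → Fin 3 → ℤ, det3 (T 0) (T 1) (T 2) = 1 →
      ∑ i, dot3 (w i) (w i) ≤ ∑ i, dot3 (lc w (zc (T i))) (lc w (zc (T i)))) :
    dot3 (w 0) (w 0) * dot3 (w 1) (w 1) * dot3 (w 2) (w 2) ≤
      4 * det3 (w 0) (w 1) (w 2) ^ 2 := by
  set a := dot3 (w 0) (w 0) with ha
  set b := dot3 (w 1) (w 1) with hb
  set c := dot3 (w 2) (w 2) with hc
  set d := dot3 (w 0) (w 1) with hd
  set e := dot3 (w 0) (w 2) with he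
  set f := dot3 (w 1) (w 2) with hf
  have hdet : det3 (w 0) (w 1) (w 2) ^ 2 =
      a * b * c + 2 * d * e * f - a * f ^ 2 - b * e ^ 2 - c * d ^ 2 := by
    rw [ha, hb, hc, hd, he, hf]; simp only [det3, dot3]; ring
  rw [hdet]
  have key0 (s t : ℤ) : 0 ≤ s ^ 2 * b + t ^ 2 * c + 2 * s * d + 2 * t * e + 2 * s * t * f := by
    have h := hmin ![![1, s, t], ![0, 1, 0], ![0, 0, 1]] (by simp [det3])
    rw [Fin.sum_univ_three, Fin.sum_univ_three] at h
    rw [hb, hc, hd, he, hf]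
    simp [dot3, lc, zc] at h ⊢
    linarith
  have key1 (s t : ℤ) : 0 ≤ s ^ 2 * a + t ^ 2 * c + 2 * s * d + 2 * t * f + 2 * s * t * e := by
    have h := hmin ![![1, 0, 0], ![s, 1, t], ![0, 0, 1]] (by simp [det3])
    rw [Fin.sum_univ_three, Fin.sum_univ_three] at h
    rw [ha, hc, hd, he, hf]
    simp [dot3, lc, zc] at h ⊢
    linarith
  have key2 (s t : ℤ) : 0 ≤ s ^ 2 * a + t ^ 2 * b + 2 * s * e + 2 * t * f + 2 * s * t * d := by
    have h := hmin ![![1, 0, 0], ![0, 1, 0], ![s, t, 1]] (by simp [det3])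
    rw [Fin.sum_univ_three, Fin.sum_univ_three] at h
    rw [ha, hb, hd, he, hf]
    simp [dot3, lc, zc] at h ⊢
    linarith
  have a1 := key0 1 0; have a2 := key0 (-1) 0; have a3 := key0 0 1; have a4 := key0 0 (-1)
  have a5 := key0 1 1; have a6 := key0 1 (-1); have a7 := key0 (-1) 1; have a8 := key0 (-1) (-1)
  have b1 := key1 1 0; have b2 := key1 (-1) 0; have b3 := key1 0 1; have b4 := key1 0 (-1)
  have b5 := key1 1 1; have b6 := key1 1 (-1); have b7 := key1 (-1) 1; have b8 := key1 (-1) (-1)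
  have c1 := key2 1 0; have c2 := key2 (-1) 0; have c3 := key2 0 1; have c4 := key2 0 (-1)
  have c5 := key2 1 1; have c6 := key2 1 (-1); have c7 := key2 (-1) 1; have c8 := key2 (-1) (-1)
  push_cast at *
  clear key0 key1 key2 hmin hdet
  clear_value a b c d e f
  rcases le_total a b with hab | hab <;> rcases le_total b c with hbc | hbc <;>
    rcases le_total a c with hac | hac
  · have := gram_ordered (a := a) (b := b) (c := c) (d := d) (e := e) (f := f) hab hbc
      (abs_le.2 ⟨by linarith, by linarith⟩) (abs_le.2 ⟨by linarith, by linarith⟩)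
      (abs_le.2 ⟨by linarith, by linarith⟩)
      (by linarith) (by linarith) (by linarith) (by linarith)
    linarith
  · have := gram_ordered (a := a) (b := b) (c := c) (d := d) (e := e) (f := f) hab hbc
      (abs_le.2 ⟨by linarith, by linarith⟩) (abs_le.2 ⟨by linarith, by linarith⟩)
      (abs_le.2 ⟨by linarith, by linarith⟩)
      (by linarith) (by linarith) (by linarith) (by linarith)
    linarith
  · have := gram_ordered (a := a) (b := c) (c := b) (d := e) (e := d) (f := f) hac hbc
      (abs_le.2 ⟨by linarith, by linarith⟩) (abs_le.2 ⟨by linarith, by linarith⟩)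
      (abs_le.2 ⟨by linarith, by linarith⟩)
      (by linarith) (by linarith) (by linarith) (by linarith)
    linarith
  · have := gram_ordered (a := c) (b := a) (c := b) (d := e) (e := f) (f := d) hac hab
      (abs_le.2 ⟨by linarith, by linarith⟩) (abs_le.2 ⟨by linarith, by linarith⟩)
      (abs_le.2 ⟨by linarith, by linarith⟩)
      (by linarith) (by linarith) (by linarith) (by linarith)
    linarith
  · have := gram_ordered (a := b) (b := a) (c := c) (d := d) (e := f) (f := e) hab hac
      (abs_le.2 ⟨by linarith, by linarith⟩) (abs_le.2 ⟨by linarith, by linarith⟩)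
      (abs_le.2 ⟨by linarith, by linarith⟩)
      (by linarith) (by linarith) (by linarith) (by linarith)
    linarith
  · have := gram_ordered (a := b) (b := c) (c := a) (d := f) (e := d) (f := e) hbc hac
      (abs_le.2 ⟨by linarith, by linarith⟩) (abs_le.2 ⟨by linarith, by linarith⟩)
      (abs_le.2 ⟨by linarith, by linarith⟩)
      (by linarith) (by linarith) (by linarith) (by linarith)
    linarith
  · have := gram_ordered (a := c) (b := b) (c := a) (d := f) (e := e) (f := d) hbc hab
      (abs_le.2 ⟨by linarith, by linarith⟩) (abs_le.2 ⟨by linarith, by linarith⟩)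
      (abs_le.2 ⟨by linarith, by linarith⟩)
      (by linarith) (by linarith) (by linarith) (by linarith)
    linarith
  · have := gram_ordered (a := c) (b := b) (c := a) (d := f) (e := e) (f := d) hbc hab
      (abs_le.2 ⟨by linarith, by linarith⟩) (abs_le.2 ⟨by linarith, by linarith⟩)
      (abs_le.2 ⟨by linarith, by linarith⟩)
      (by linarith) (by linarith) (by linarith) (by linarith)
    linarith

lemma euclid_isNorm : IsNorm3 fun x => ‖WithLp.toLp 2 x‖ where
  add_le x y := by simpa using norm_add_le (WithLp.toLp 2 x) (WithLp.toLp 2 y)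
  smul t x := by rw [WithLp.toLp_smul, norm_smul, Real.norm_eq_abs]
  pos x hx := by simpa using hx

lemma euclid_sq (x : Fin 3 → ℝ) : ‖WithLp.toLp 2 x‖ ^ 2 = dot3 x x := by
  rw [EuclideanSpace.norm_sq_eq, Fin.sum_univ_three]
  simp only [Real.norm_eq_abs, sq_abs, dot3]; ring

/-- Every lattice in `ℝ³` has a basis with `∏ |wᵢ|² ≤ 4 det²`. -/
lemma exists_reduced (v : Fin 3 → Fin 3 → ℝ) (hv : det3 (v 0) (v 1) (v 2) ≠ 0) :
    ∃ A : Fin 3 → Fin 3 → ℤ, det3 (A 0) (A 1) (A 2) = 1 ∧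
      dot3 (lc v (zc (A 0))) (lc v (zc (A 0))) * dot3 (lc v (zc (A 1))) (lc v (zc (A 1))) *
        dot3 (lc v (zc (A 2))) (lc v (zc (A 2))) ≤ 4 * det3 (v 0) (v 1) (v 2) ^ 2 := by
  let g : (Fin 3 → Fin 3 → ℤ) → ℝ := fun A => ∑ i, dot3 (lc v (zc (A i))) (lc v (zc (A i)))
  let I : Fin 3 → Fin 3 → ℤ := ![![1, 0, 0], ![0, 1, 0], ![0, 0, 1]]
  let S : Set (Fin 3 → Fin 3 → ℤ) := {A | det3 (A 0) (A 1) (A 2) = 1 ∧ g A ≤ g I}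
  have hfin : S.Finite := by
    have h1 := (euclid_isNorm.comp hv).finite_le (√(g I))
    refine (Set.Finite.pi' (fun _ : Fin 3 => h1)).subset ?_
    intro A hA i
    have hle : dot3 (lc v (zc (A i))) (lc v (zc (A i))) ≤ g I := by
      refine le_trans ?_ hA.2
      refine Finset.single_le_sum (f := fun i => dot3 (lc v (zc (A i))) (lc v (zc (A i))))
        (fun j _ => ?_) (Finset.mem_univ i)
      rw [← euclid_sq]; positivity
    apply Real.le_sqrt_of_sq_le
    rw [euclid_sq]; exact hle
  have hI : det3 (I 0) (I 1) (I 2) = 1 := by simp [det3, I]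
  obtain ⟨A, hA, hmin⟩ := Set.exists_min_image S g hfin ⟨I, hI, le_rfl⟩
  refine ⟨A, hA.1, ?_⟩
  have := reduced_bound (fun i => lc v (zc (A i))) (fun T hT => ?_)
  · rw [det3_lc, ← det3_cast, hA.1] at this
    simpa using this
  · have e (i) : lc (fun i => lc v (zc (A i))) (zc (T i)) = lc v (zc (lc A (T i))) := by
      rw [lc_lc v fun i => zc (A i), ← zc_lc]
    simp only [e]
    change g A ≤ g (fun i => lc A (T i))
    by_cases hle : g (fun i => lc A (T i)) ≤ g I
    · refine hmin _ ⟨?_, hle⟩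
      rw [det3_lc, hT, hA.1, one_mul]
    · push Not at hle
      exact hA.2.trans hle.le

lemma continuous_lc_zc (z : Fin 3 → ℤ) :
    Continuous fun v : Fin 3 → Fin 3 → ℝ => lc v (zc z) := by
  unfold lc; fun_prop

lemma continuous_det3 : Continuous fun v : Fin 3 → Fin 3 → ℝ => det3 (v 0) (v 1) (v 2) := by
  unfold det3; fun_prop

/-- If all nonzero lattice vectors have sup-norm at least `m`, then `det² ≥ m⁶ / 4`, and some
basis is bounded in terms of `m` and the determinant. -/
lemma exists_bounded_basis {m : ℝ} (hm : 0 < m) (v : Fin 3 → Fin 3 → ℝ)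
    (hv : det3 (v 0) (v 1) (v 2) ≠ 0)
    (h : ∀ z : Fin 3 → ℤ, z ≠ 0 → m ≤ ‖lc v (zc z)‖) :
    m ^ 6 ≤ 4 * det3 (v 0) (v 1) (v 2) ^ 2 ∧
    ∃ A : Fin 3 → Fin 3 → ℤ, det3 (A 0) (A 1) (A 2) = 1 ∧
      ∀ i, ‖lc v (zc (A i))‖ ^ 2 ≤ 4 * det3 (v 0) (v 1) (v 2) ^ 2 / m ^ 4 := by
  obtain ⟨A, hA, hle⟩ := exists_reduced v hv
  have hA0 (i) : A i ≠ 0 := by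
    intro h0
    fin_cases i <;> simp at h0 <;> simp [det3, h0] at hA
  have hlow (i) : m ^ 2 ≤ dot3 (lc v (zc (A i))) (lc v (zc (A i))) := by
    refine le_trans ?_ (norm_sq_le_dot3 _)
    have := h _ (hA0 i)
    gcongr
  have hup (i) := norm_sq_le_dot3 (lc v (zc (A i)))
  have h0 := hlow 0; have h1 := hlow 1; have h2 := hlow 2
  have u0 := hup 0; have u1 := hup 1; have u2 := hup 2
  have hm2 : 0 < m ^ 2 := by positivity
  set x := dot3 (lc v (zc (A 0))) (lc v (zc (A 0)))
  set y := dot3 (lc v (zc (A 1))) (lc v (zc (A 1)))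
  set z := dot3 (lc v (zc (A 2))) (lc v (zc (A 2)))
  have hxy : m ^ 2 * m ^ 2 ≤ x * y := mul_le_mul h0 h1 hm2.le (by linarith)
  have hxz : m ^ 2 * m ^ 2 ≤ x * z := mul_le_mul h0 h2 hm2.le (by linarith)
  have hyz : m ^ 2 * m ^ 2 ≤ y * z := mul_le_mul h1 h2 hm2.le (by linarith)
  have hm4 : 0 < m ^ 4 := by positivity
  refine ⟨?_, A, hA, ?_⟩
  · have : m ^ 2 * m ^ 2 * m ^ 2 ≤ x * y * z := mul_le_mul hxy h2 hm2.le (by nlinarith)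
    calc m ^ 6 = m ^ 2 * m ^ 2 * m ^ 2 := by ring
      _ ≤ _ := this.trans hle
  · intro i
    rw [le_div_iff₀ hm4]
    refine le_trans ?_ hle
    have e4 : m ^ 4 = m ^ 2 * m ^ 2 := by ring
    rw [e4]
    fin_cases i <;> simp
    · calc _ ≤ x * (m ^ 2 * m ^ 2) := by gcongr
        _ ≤ x * (y * z) := by gcongr; linarith
        _ = _ := by ring
    · calc _ ≤ y * (m ^ 2 * m ^ 2) := by gcongr
        _ ≤ y * (x * z) := by gcongr; linarith
        _ = _ := by ring
    · calc _ ≤ z * (m ^ 2 * m ^ 2) := by gcongr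
        _ ≤ z * (x * y) := by gcongr; linarith
        _ = _ := by ring

lemma isClosed_adm {N : (Fin 3 → ℝ) → ℝ} (hN : IsNorm3 N) : IsClosed {v | Adm N v} := by
  simp only [Adm, Set.ofPred_forall]
  refine isClosed_iInter fun z => isClosed_iInter fun _ => ?_
  exact isClosed_le continuous_const (hN.continuous.comp (continuous_lc_zc z))

lemma Adm.norm_ge {N : (Fin 3 → ℝ) → ℝ} {C : ℝ} (hC : 0 < C) (hN : ∀ x, N x ≤ C * ‖x‖)
    {v : Fin 3 → Fin 3 → ℝ} (h : Adm N v) (z : Fin 3 → ℤ) (hz : z ≠ 0) :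
    C⁻¹ ≤ ‖lc v (zc z)‖ := by
  rw [inv_le_iff_one_le_mul₀' hC]
  exact (h z hz).trans (hN _)

/-- Every norm has a critical lattice (Mahler). -/
theorem exists_crit {N : (Fin 3 → ℝ) → ℝ} (hN : IsNorm3 N) : ∃ v, IsCrit N v := by
  obtain ⟨C, hC, hup⟩ := hN.exists_upper
  obtain ⟨c, hc, hlow⟩ := hN.exists_lower
  have hm : 0 < C⁻¹ := inv_pos.2 hC
  set m := C⁻¹ with hmdef
  -- a large multiple of the standard lattice is admissible
  let v₀ : Fin 3 → Fin 3 → ℝ := ![![c⁻¹, 0, 0], ![0, c⁻¹, 0], ![0, 0, c⁻¹]]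
  have hc' : 0 < c⁻¹ := inv_pos.2 hc
  have hv₀ : det3 (v₀ 0) (v₀ 1) (v₀ 2) ≠ 0 := by
    simp [det3, v₀]; exact hc.ne'
  have hadm₀ : Adm N v₀ := by
    intro z hz
    refine le_trans ?_ (hlow _)
    have : lc v₀ (zc z) = c⁻¹ • zc z := by
      ext i; fin_cases i <;> simp [lc, v₀, mul_comm]
    rw [this, norm_smul, Real.norm_eq_abs, abs_of_pos hc', ← mul_assoc, mul_inv_cancel₀ hc.ne',
      one_mul]
    obtain ⟨i, hi⟩ := Function.ne_iff.1 hz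
    refine le_trans ?_ (norm_le_pi_norm (zc z) i)
    have : 1 ≤ |z i| := Int.one_le_abs hi
    rw [Real.norm_eq_abs]
    change (1 : ℝ) ≤ |((z i : ℤ) : ℝ)|
    exact_mod_cast this
  set D := |det3 (v₀ 0) (v₀ 1) (v₀ 2)| with hD
  set R := √(4 * D ^ 2 / m ^ 4) with hR
  let Q : Set (Fin 3 → Fin 3 → ℝ) :=
    (Metric.closedBall 0 R ∩ {v | Adm N v}) ∩ {v | m ^ 6 ≤ 4 * det3 (v 0) (v 1) (v 2) ^ 2}
  have hQc : IsCompact Q := by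
    refine ((isCompact_closedBall _ _).inter_right (isClosed_adm hN)).inter_right ?_
    exact isClosed_le continuous_const (continuous_const.mul (continuous_det3.pow 2))
  have hred (w : Fin 3 → Fin 3 → ℝ) (hw : det3 (w 0) (w 1) (w 2) ≠ 0) (hadm : Adm N w)
      (hle : |det3 (w 0) (w 1) (w 2)| ≤ D) :
      ∃ w' ∈ Q, |det3 (w' 0) (w' 1) (w' 2)| = |det3 (w 0) (w 1) (w 2)| := by
    obtain ⟨h1, A, hA, hb⟩ := exists_bounded_basis hm w hw (fun z hz => hadm.norm_ge hC hup z hz)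
    have hdet : det3 (lc w (zc (A 0))) (lc w (zc (A 1))) (lc w (zc (A 2))) =
        det3 (w 0) (w 1) (w 2) := by
      rw [det3_lc, ← det3_cast, hA]; simp
    refine ⟨fun i => lc w (zc (A i)), ⟨⟨?_, hadm.sub (by rw [hA]; exact one_ne_zero)⟩, ?_⟩, ?_⟩
    · rw [mem_closedBall_zero_iff, pi_norm_le_iff_of_nonneg (Real.sqrt_nonneg _)]
      intro i
      apply Real.le_sqrt_of_sq_le
      refine (hb i).trans ?_
      have : det3 (w 0) (w 1) (w 2) ^ 2 ≤ D ^ 2 := by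
        rw [← sq_abs]; gcongr
      gcongr
    · simp only [Set.mem_ofPred_eq, hdet]; exact h1
    · simp only [hdet]
  obtain ⟨w₀, hw₀, hdet₀⟩ := hred v₀ hv₀ hadm₀ le_rfl
  obtain ⟨v, hv, hmin⟩ := hQc.exists_isMinOn ⟨w₀, hw₀⟩
    (f := fun v => |det3 (v 0) (v 1) (v 2)|) continuous_det3.abs.continuousOn
  refine ⟨v, ?_, hv.1.2, ?_⟩
  · intro h0
    have := hv.2
    simp only [Set.mem_ofPred_eq, h0] at this
    have : 0 < m ^ 6 := by positivity
    linarith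
  · intro w hw hadm
    rcases le_total (|det3 (w 0) (w 1) (w 2)|) D with hle | hle
    · obtain ⟨w', hw', hdet⟩ := hred w hw hadm hle
      rw [← hdet]; exact hmin hw'
    · exact (hmin hw₀).trans (hdet₀.le.trans hle)

/-! ### A critical lattice has at least six pairs of points on the boundary -/

/-- The action of the symmetric matrix with upper triangle `c 0, …, c 5`. -/
def symAct (c : Fin 6 → ℝ) (x : Fin 3 → ℝ) : Fin 3 → ℝ :=
  ![c 0 * x 0 + c 1 * x 1 + c 2 * x 2, c 1 * x 0 + c 3 * x 1 + c 4 * x 2,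
    c 2 * x 0 + c 4 * x 1 + c 5 * x 2]

lemma symAct_add (c d : Fin 6 → ℝ) (x) : symAct (c + d) x = symAct c x + symAct d x := by
  ext i; fin_cases i <;> simp [symAct] <;> ring

lemma symAct_smul (t : ℝ) (c : Fin 6 → ℝ) (x) : symAct (t • c) x = t • symAct c x := by
  ext i; fin_cases i <;> simp [symAct] <;> ring

lemma symAct_neg (c : Fin 6 → ℝ) (x) : symAct c (-x) = -symAct c x := by
  ext i; fin_cases i <;> simp [symAct] <;> ring

lemma symAct_norm_le (c : Fin 6 → ℝ) (x) : ‖symAct c x‖ ≤ 3 * ‖c‖ * ‖x‖ := by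
  have hc (i) : |c i| ≤ ‖c‖ := norm_le_pi_norm c i
  have hx (i) : |x i| ≤ ‖x‖ := norm_le_pi_norm x i
  have key (i j k : Fin 6) : |c i * x 0 + c j * x 1 + c k * x 2| ≤ 3 * ‖c‖ * ‖x‖ := by
    have h (i j) : |c i * x j| ≤ ‖c‖ * ‖x‖ := by
      rw [abs_mul]; exact mul_le_mul (hc i) (hx j) (abs_nonneg _) (norm_nonneg _)
    have := abs_add_three (c i * x 0) (c j * x 1) (c k * x 2)
    linarith [h i 0, h j 1, h k 2]
  rw [pi_norm_le_iff_of_nonneg (by positivity)]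
  intro i
  fin_cases i
  · exact key 0 1 2
  · exact key 1 3 4
  · exact key 2 4 5

/-- A nonzero symmetric matrix with nonpositive trace is a direction of decrease of `det` at `1`:
the second-order coefficient is `(T² - ‖A‖²) / 2`, and `T ≤ 0`. -/
lemma exists_small_det (c : Fin 6 → ℝ) (hc : c ≠ 0) (hT : c 0 + c 3 + c 5 ≤ 0) :
    ∃ t₀ > 0, ∀ t, 0 < t → t < t₀ →
      0 < det3 ![1 + t * c 0, t * c 1, t * c 2] ![t * c 1, 1 + t * c 3, t * c 4]
        ![t * c 2, t * c 4, 1 + t * c 5] ∧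
      det3 ![1 + t * c 0, t * c 1, t * c 2] ![t * c 1, 1 + t * c 3, t * c 4]
        ![t * c 2, t * c 4, 1 + t * c 5] < 1 := by
  set T := c 0 + c 3 + c 5 with hTdef
  set S := c 0 * c 3 + c 0 * c 5 + c 3 * c 5 - c 1 ^ 2 - c 2 ^ 2 - c 4 ^ 2 with hS
  set D := det3 ![c 0, c 1, c 2] ![c 1, c 3, c 4] ![c 2, c 4, c 5] with hD
  set Q := c 0 ^ 2 + c 3 ^ 2 + c 5 ^ 2 + 2 * c 1 ^ 2 + 2 * c 2 ^ 2 + 2 * c 4 ^ 2 with hQ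
  have hexp (t : ℝ) : det3 ![1 + t * c 0, t * c 1, t * c 2] ![t * c 1, 1 + t * c 3, t * c 4]
      ![t * c 2, t * c 4, 1 + t * c 5] = 1 + t * T + t ^ 2 * S + t ^ 3 * D := by
    simp [det3, hTdef, hS, hD]; ring
  have h2S : 2 * S = T ^ 2 - Q := by rw [hS, hTdef, hQ]; ring
  have hQpos : 0 < Q := by
    have hQ0 : 0 ≤ Q := by positivity
    rcases hQ0.lt_or_eq with h | h
    · exact h
    · exfalso; apply hc
      have hz (i : Fin 6) : c i ^ 2 ≤ Q := by
        rw [hQ]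
        fin_cases i <;> simp <;>
        linarith [sq_nonneg (c 0), sq_nonneg (c 1), sq_nonneg (c 2), sq_nonneg (c 3),
          sq_nonneg (c 4), sq_nonneg (c 5)]
      ext i
      have := hz i
      rw [← h] at this
      simpa using le_antisymm this (sq_nonneg _)
  have hcont0 : ContinuousAt (fun t : ℝ => 1 + t * T + t ^ 2 * S + t ^ 3 * D) 0 := by fun_prop
  have h1 : ∀ᶠ t in nhds (0 : ℝ), 0 < 1 + t * T + t ^ 2 * S + t ^ 3 * D :=
    hcont0.eventually (lt_mem_nhds (by norm_num))
  have h2 : ∀ᶠ t in nhds (0 : ℝ), t * D < Q / 4 :=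
    (show ContinuousAt (fun t : ℝ => t * D) 0 by fun_prop).eventually
      (gt_mem_nhds (by simpa using by positivity))
  have h3 : ∀ᶠ t in nhds (0 : ℝ), -1 < t * T :=
    (show ContinuousAt (fun t : ℝ => t * T) 0 by fun_prop).eventually
      (lt_mem_nhds (by norm_num))
  obtain ⟨ε, hε, hball⟩ := Metric.eventually_nhds_iff.1 (h1.and (h2.and h3))
  refine ⟨ε, hε, fun t ht htε => ?_⟩
  obtain ⟨g1, g2, g3⟩ := hball (y := t) (by simpa [abs_of_pos ht] using htε)
  rw [hexp]
  refine ⟨g1, ?_⟩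
  have e1 : t ^ 2 * S = (t * T) * (t * T) / 2 - t ^ 2 * Q / 2 := by
    have : S = (T ^ 2 - Q) / 2 := by linarith
    rw [this]; ring
  have e2 : t * T ≤ 0 := mul_nonpos_of_nonneg_of_nonpos ht.le hT
  have e3 : t ^ 3 * D = t ^ 2 * (t * D) := by ring
  have e4 : t ^ 2 * (t * D) < t ^ 2 * (Q / 4) := by gcongr
  have e5 : 0 < t ^ 2 * Q := by positivity
  nlinarith

lemma lc_sym (c : Fin 6 → ℝ) (t : ℝ) (x : Fin 3 → ℝ) :
    lc ![![1 + t * c 0, t * c 1, t * c 2], ![t * c 1, 1 + t * c 3, t * c 4],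
        ![t * c 2, t * c 4, 1 + t * c 5]] x = x + t • symAct c x := by
  ext i; fin_cases i <;> simp [lc, symAct] <;> ring

/-- If the unit ball met the lattice `ℤ³` only in at most five pairs `±f`, a symmetric
infinitesimal deformation killed by the five supporting functionals would keep admissibility
and lower the determinant. -/
lemma exists_uncovered {M : (Fin 3 → ℝ) → ℝ} (hM : IsNorm3 M)
    (hadm : ∀ z : Fin 3 → ℤ, z ≠ 0 → 1 ≤ M (zc z))
    (hmin : ∀ w : Fin 3 → Fin 3 → ℝ, det3 (w 0) (w 1) (w 2) ≠ 0 → Adm M w →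
      1 ≤ |det3 (w 0) (w 1) (w 2)|)
    (F : Finset (Fin 3 → ℤ)) (hF : F.card ≤ 5) :
    ∃ z : Fin 3 → ℤ, z ≠ 0 ∧ M (zc z) ≤ 1 ∧ ∀ f ∈ F, z ≠ f ∧ z ≠ -f := by
  by_contra hcon
  push Not at hcon
  choose u hu1 hu2 using fun f : Fin 3 → ℤ => hM.exists_support (zc f)
  let Φ : (Fin 6 → ℝ) →ₗ[ℝ] (F → ℝ) :=
    { toFun := fun c f => u f (symAct c (zc f))
      map_add' := fun c d => by ext f; simp [symAct_add]
      map_smul' := fun t c => by ext f; simp [symAct_smul] }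
  have hker : LinearMap.ker Φ ≠ ⊥ := by
    apply LinearMap.ker_ne_bot_of_finrank_lt
    simp; omega
  obtain ⟨c₀, hc₀, hc₀0⟩ := Submodule.exists_mem_ne_zero_of_ne_bot hker
  obtain ⟨c, hcker, hc0, hT⟩ : ∃ c, c ∈ LinearMap.ker Φ ∧ c ≠ 0 ∧ c 0 + c 3 + c 5 ≤ 0 := by
    rcases le_total (c₀ 0 + c₀ 3 + c₀ 5) 0 with h | h
    · exact ⟨c₀, hc₀, hc₀0, h⟩
    · exact ⟨-c₀, neg_mem hc₀, neg_ne_zero.2 hc₀0, by simp; linarith⟩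
  have hΦ (f) (hf : f ∈ F) : u f (symAct c (zc f)) = 0 :=
    congrFun (LinearMap.mem_ker.1 hcker) ⟨f, hf⟩
  obtain ⟨t₀, ht₀, hdet⟩ := exists_small_det c hc0 hT
  -- lattice points off the boundary stay a definite distance away from the unit ball
  obtain ⟨η, hη, hgap⟩ : ∃ η > 0, ∀ z : Fin 3 → ℤ, 1 < M (zc z) → 1 + η ≤ M (zc z) := by
    have hfin : {z : Fin 3 → ℤ | 1 < M (zc z) ∧ M (zc z) ≤ 2}.Finite :=
      (hM.finite_le 2).subset fun z hz => hz.2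
    rcases Set.eq_empty_or_nonempty {z : Fin 3 → ℤ | 1 < M (zc z) ∧ M (zc z) ≤ 2} with he | hne
    · refine ⟨1, one_pos, fun z hz => ?_⟩
      by_contra! h
      have : z ∈ {z : Fin 3 → ℤ | 1 < M (zc z) ∧ M (zc z) ≤ 2} := ⟨hz, by linarith⟩
      rw [he] at this; exact this
    · obtain ⟨z₁, hz₁, hle⟩ := Set.exists_min_image _ (fun z => M (zc z)) hfin hne
      refine ⟨M (zc z₁) - 1, by linarith [hz₁.1], fun z hz => ?_⟩
      by_cases h2 : M (zc z) ≤ 2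
      · linarith [hle z ⟨hz, h2⟩]
      · linarith [hz₁.2]
  obtain ⟨C, hC, hup⟩ := hM.exists_upper
  obtain ⟨d, hd, hlow⟩ := hM.exists_lower
  have hcn : 0 ≤ ‖c‖ := norm_nonneg _
  set L := C * (3 * ‖c‖) / d + 1 with hL
  have hLpos : 0 < L := by positivity
  have hLb (x) : M (symAct c x) ≤ L * M x := by
    calc M (symAct c x) ≤ C * ‖symAct c x‖ := hup _
      _ ≤ C * (3 * ‖c‖ * ‖x‖) := by gcongr; exact symAct_norm_le c x
      _ = C * (3 * ‖c‖) / d * (d * ‖x‖) := by field_simp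
      _ ≤ C * (3 * ‖c‖) / d * M x := by gcongr; exact hlow x
      _ ≤ L * M x := by
          rw [hL, add_mul, one_mul]; linarith [hM.nonneg x]
  set t := min (t₀ / 2) (η / ((1 + η) * L)) with ht
  have htpos : 0 < t := by
    rw [ht]; apply lt_min <;> positivity
  have htlt : t < t₀ := lt_of_le_of_lt (min_le_left _ _) (by linarith)
  have htη : t * ((1 + η) * L) ≤ η := by
    have := min_le_right (t₀ / 2) (η / ((1 + η) * L))
    rw [← ht, le_div_iff₀ (by positivity)] at this
    exact this
  obtain ⟨hd0, hd1⟩ := hdet t htpos htlt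
  have := hmin ![![1 + t * c 0, t * c 1, t * c 2], ![t * c 1, 1 + t * c 3, t * c 4],
        ![t * c 2, t * c 4, 1 + t * c 5]] (by simpa using hd0.ne') ?_
  · have h2 : 1 ≤ |det3 ![1 + t * c 0, t * c 1, t * c 2] ![t * c 1, 1 + t * c 3, t * c 4]
        ![t * c 2, t * c 4, 1 + t * c 5]| := this
    rw [abs_of_pos hd0] at h2; linarith
  intro z hz
  rw [lc_sym]
  by_cases hz1 : M (zc z) ≤ 1
  · have key (f) (hf : f ∈ F) (h1 : 1 ≤ M (zc f)) : 1 ≤ M (zc f + t • symAct c (zc f)) := by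
      have := hu2 f (zc f + t • symAct c (zc f))
      rw [map_add, map_smul, hΦ f hf, hu1] at this
      simp at this; linarith
    obtain ⟨f, hf, himp⟩ := hcon z hz hz1
    by_cases hzf : z = f
    · rw [hzf]; exact key f hf (by rw [← hzf]; exact hadm z hz)
    · have hzf' := himp hzf
      have hf1 : 1 ≤ M (zc f) := by
        have := hadm z hz
        rwa [hzf', zc_neg, hM.neg] at this
      have h3 : zc z + t • symAct c (zc z) = -(zc f + t • symAct c (zc f)) := by
        rw [hzf', zc_neg, symAct_neg, smul_neg, neg_add]
      rw [h3, hM.neg]; exact key f hf hf1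
  · have h1 := hgap z (not_le.1 hz1)
    have h2 := hM.le_add_sub (zc z) (zc z + t • symAct c (zc z))
    have h3 : zc z - (zc z + t • symAct c (zc z)) = (-t) • symAct c (zc z) := by
      rw [neg_smul]; abel
    rw [h3, hM.smul, abs_neg, abs_of_pos htpos] at h2
    have h4 := mul_le_mul_of_nonneg_left (hLb (zc z)) htpos.le
    -- `(1 - tL)(1 + η) ≥ 1`
    have h5 : t * L ≤ 1 := by
      have : t * L * (1 + η) ≤ 1 + η := by nlinarith
      exact le_of_mul_le_mul_right (by linarith) (by linarith : (0 : ℝ) < 1 + η)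
    nlinarith

/-! ### Parity classes and the shape of the minimal vectors -/

/-- The integer vectors of the test set `U¹` lie in `P`. -/
def HasU1 (P : (Fin 3 → ℤ) → Prop) (a b c : Fin 3 → ℤ) : Prop :=
  P a ∧ P b ∧ P c ∧ P (b - c) ∧ P (-a + c) ∧ P (a - b)

/-- The integer vectors of the test set `U²` lie in `P`. -/
def HasU2 (P : (Fin 3 → ℤ) → Prop) (a b c : Fin 3 → ℤ) : Prop :=
  P a ∧ P b ∧ P c ∧ P (b + c) ∧ P (a + c) ∧ P (a + b)

/-- A change of sign turns an odd first coordinate `±1` into `1`, keeping the other parities. -/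
lemma norm_first {P : (Fin 3 → ℤ) → Prop} (hneg : ∀ x, P x → P (-x)) {a b c : ℤ}
    (h : P ![a, b, c]) (ha : a = 1 ∨ a = -1) : ∃ b' c', P ![1, b', c'] ∧ b' % 2 = b % 2 ∧
      c' % 2 = c % 2 := by
  rcases ha with rfl | rfl
  · exact ⟨b, c, h, rfl, rfl⟩
  · refine ⟨-b, -c, by simpa using hneg _ h, by omega, by omega⟩

lemma norm_second {P : (Fin 3 → ℤ) → Prop} (hneg : ∀ x, P x → P (-x)) {a b c : ℤ}
    (h : P ![a, b, c]) (hb : b = 1 ∨ b = -1) : ∃ a' c', P ![a', 1, c'] ∧ a' % 2 = a % 2 ∧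
      c' % 2 = c % 2 := by
  rcases hb with rfl | rfl
  · exact ⟨a, c, h, rfl, rfl⟩
  · refine ⟨-a, -c, by simpa using hneg _ h, by omega, by omega⟩

set_option maxHeartbeats 1000000 in
/-- Integer case analysis: `P` contains the standard basis and one vector in each of the parity
classes `(1,1,0), (1,0,1), (0,1,1)`. If odd determinants of triples from `P` are `±1` and even
coordinates of vectors in `P` are `0` or `±2`, then `P` contains `U¹` or `U²` for some basis. -/
lemma combi (P : (Fin 3 → ℤ) → Prop) (hneg : ∀ x, P x → P (-x)) (e0 : P ![1, 0, 0])
    (e1 : P ![0, 1, 0]) (e2 : P ![0, 0, 1])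
    (hdet : ∀ p q r, P p → P q → P r → det3 p q r % 2 = 1 → det3 p q r = 1 ∨ det3 p q r = -1)
    (hco : ∀ p, P p → ∀ i, p i % 2 = 0 → p i = 0 ∨ p i = 2 ∨ p i = -2)
    {a b c d e f g h k : ℤ} (h1 : P ![a, b, c]) (h2 : P ![d, e, f]) (h3 : P ![g, h, k])
    (ha : a % 2 = 1) (hb : b % 2 = 1) (hc : c % 2 = 0) (hd : d % 2 = 1) (he : e % 2 = 0)
    (hf : f % 2 = 1) (hg : g % 2 = 0) (hh : h % 2 = 1) (hk : k % 2 = 1) :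
    ∃ x y z, (det3 x y z = 1 ∨ det3 x y z = -1) ∧ (HasU1 P x y z ∨ HasU2 P x y z) := by
  have o1 : ∀ a b c : ℤ, P ![a, b, c] → a % 2 = 1 → a = 1 ∨ a = -1 := fun a b c hp ho => by
    simpa [det3] using hdet ![a, b, c] ![0, 1, 0] ![0, 0, 1] hp e1 e2 (by simpa [det3] using ho)
  have o2 : ∀ a b c : ℤ, P ![a, b, c] → b % 2 = 1 → b = 1 ∨ b = -1 := fun a b c hp ho => by
    simpa [det3] using hdet ![1, 0, 0] ![a, b, c] ![0, 0, 1] e0 hp e2 (by simpa [det3] using ho)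
  have o3 : ∀ a b c : ℤ, P ![a, b, c] → c % 2 = 1 → c = 1 ∨ c = -1 := fun a b c hp ho => by
    simpa [det3] using hdet ![1, 0, 0] ![0, 1, 0] ![a, b, c] e0 e1 hp (by simpa [det3] using ho)
  obtain ⟨b, c, h1, hb', hc'⟩ := norm_first hneg h1 (o1 _ _ _ h1 ha)
  rw [hb] at hb'; rw [hc] at hc'
  obtain ⟨e, f, h2, he', hf'⟩ := norm_first hneg h2 (o1 _ _ _ h2 hd)
  rw [he] at he'; rw [hf] at hf'
  obtain ⟨g, k, h3, hg', hk'⟩ := norm_second hneg h3 (o2 _ _ _ h3 hh)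
  rw [hg] at hg'; rw [hk] at hk'
  clear hb hc he hf hg hk ha hd hh
  have d1 := hdet _ _ _ h1 h2 e0
  have d2 := hdet _ _ _ h1 h2 e1
  have d3 := hdet _ _ _ h1 h3 e0
  have d4 := hdet _ _ _ h1 h3 e1
  have d5 := hdet _ _ _ h1 h2 e2
  have d6 := hdet _ _ _ h1 h3 e2
  have d7 := hdet _ _ _ h2 h3 e0
  have d8 := hdet _ _ _ h2 h3 e1
  have d9 := hdet _ _ _ h2 h3 e2
  have hc3 : c = 0 ∨ c = 2 ∨ c = -2 := hco _ h1 2 hc'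
  have he3 : e = 0 ∨ e = 2 ∨ e = -2 := hco _ h2 1 he'
  have hg3 : g = 0 ∨ g = 2 ∨ g = -2 := hco _ h3 0 hg'
  have hb2 := o2 _ _ _ h1 hb'
  have hf2 := o3 _ _ _ h2 hf'
  have hk2 := o3 _ _ _ h3 hk'
  simp only [det3, Matrix.cons_val_zero, Matrix.cons_val_one, Matrix.cons_val]
    at d1 d2 d3 d4 d5 d6 d7 d8 d9
  have n0 := hneg _ e0
  have n1 := hneg _ e1
  have n2 := hneg _ e2
  have m1 := hneg _ h1
  have m2 := hneg _ h2
  have m3 := hneg _ h3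
  clear hdet hco o1 o2 o3 hb' hc' he' hf' hg' hk'
  by_cases h0 : c = 0 ∧ e = 0 ∧ g = 0
  · obtain ⟨rfl, rfl, rfl⟩ := h0
    by_cases hkb : k = b * f
    · refine ⟨![1, 0, 0], ![0, b, 0], ![0, 0, f], ?_, Or.inr ?_⟩
      · rcases hb2 with rfl | rfl <;> rcases hf2 with rfl | rfl <;> simp [det3]
      · subst hkb
        rcases hb2 with rfl | rfl <;> rcases hf2 with rfl | rfl <;> simp_all [HasU2]
    · refine ⟨![1, 0, 0], ![0, -b, 0], ![0, 0, -f], ?_, Or.inl ?_⟩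
      · rcases hb2 with rfl | rfl <;> rcases hf2 with rfl | rfl <;> simp [det3]
      · rcases hb2 with rfl | rfl <;> rcases hf2 with rfl | rfl <;> rcases hk2 with rfl | rfl <;>
          simp_all [HasU1] <;> (convert h1 using 1; ext i; fin_cases i <;> rfl)
  by_cases hc0 : c = 0
  · subst hc0
    by_cases he0 : e = 0
    · subst he0
      have hg0 : g ≠ 0 := fun h => h0 ⟨rfl, rfl, h⟩
      obtain ⟨rfl, rfl⟩ : g = 2 * b ∧ k = b * f := by
        rcases hb2 with rfl | rfl <;> rcases hf2 with rfl | rfl <;> rcases hk2 with rfl | rfl <;>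
          omega
      clear d1 d2 d3 d4 d5 d6 d7 d8 d9 hg3 hc3 he3 h0 hk2
      refine ⟨![-b, 0, 0], ![b, 1, 0], ![b, 0, b * f], ?_, Or.inr ?_⟩ <;>
        rcases hb2 with rfl | rfl <;> rcases hf2 with rfl | rfl <;> simp_all [HasU2, det3]
    · obtain ⟨rfl, rfl, rfl⟩ : g = 0 ∧ e = 2 * b ∧ f = b * k := by
        rcases hb2 with rfl | rfl <;> rcases hf2 with rfl | rfl <;> rcases hk2 with rfl | rfl <;>
          rcases hg3 with rfl | rfl | rfl <;> omega
      clear d1 d2 d3 d4 d5 d6 d7 d8 d9 hg3 hc3 he3 h0 hf2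
      refine ⟨![0, -b, 0], ![1, b, 0], ![0, b, b * k], ?_, Or.inr ?_⟩ <;>
        rcases hb2 with rfl | rfl <;> rcases hk2 with rfl | rfl <;> simp_all [HasU2, det3]
  · obtain ⟨rfl, rfl, rfl, rfl⟩ : g = 0 ∧ e = 0 ∧ c = 2 * f ∧ f = b * k := by
      rcases hb2 with rfl | rfl <;> rcases hf2 with rfl | rfl <;> rcases hk2 with rfl | rfl <;>
        rcases hg3 with rfl | rfl | rfl <;> rcases he3 with rfl | rfl | rfl <;> omega
    clear d1 d2 d3 d4 d5 d6 d7 d8 d9 hg3 hc3 he3 h0 hf2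
    refine ⟨![0, 0, -(b * k)], ![1, 0, b * k], ![0, b, b * k], ?_, Or.inr ?_⟩ <;>
      rcases hb2 with rfl | rfl <;> rcases hk2 with rfl | rfl <;> simp_all [HasU2, det3]

/-! ### Lattice points on a strictly convex sphere -/

section StrictLattice

variable {M : (Fin 3 → ℝ) → ℝ}

/-- Two points of the unit ball in the same parity class agree up to sign, since otherwise their
midpoint is a lattice point in the interior. -/
lemma eq_or_neg_of_parity (hM : IsNorm3 M) (hs : StrictNorm3 M)
    (hadm : ∀ z : Fin 3 → ℤ, z ≠ 0 → 1 ≤ M (zc z)) {p q : Fin 3 → ℤ} (hp : M (zc p) ≤ 1)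
    (hq : M (zc q) ≤ 1) (h : ∀ i, (p i : ZMod 2) = q i) : p = q ∨ p = -q := by
  by_contra! hcon
  have h2 (i) : ∃ m : ℤ, p i + q i = 2 * m := by
    have := (ZMod.intCast_eq_intCast_iff_dvd_sub _ _ _).1 (h i)
    push_cast at this
    exact ⟨(p i + q i) / 2, by omega⟩
  choose m hm using h2
  have hm0 : m ≠ 0 := by
    rintro rfl
    apply hcon.2
    ext i
    have := hm i
    simp at this ⊢; omega
  have h1 := hM.midpoint_lt hs hp hq (by
    intro h0; apply hcon.1; ext i
    have := congrFun h0 i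
    simpa [zc] using this)
  have h3 : (1 / 2 : ℝ) • (zc p + zc q) = zc m := by
    ext i
    have : (p i : ℝ) + q i = 2 * m i := by exact_mod_cast hm i
    simp [zc, this]
  rw [h3] at h1
  linarith [hadm m hm0]

lemma parity_ne_zero (hM : IsNorm3 M)
    (hadm : ∀ z : Fin 3 → ℤ, z ≠ 0 → 1 ≤ M (zc z)) {p : Fin 3 → ℤ} (hp0 : p ≠ 0)
    (hp : M (zc p) ≤ 1) : (fun i => (p i : ZMod 2)) ≠ 0 := by
  intro h
  have h2 (i) : ∃ m : ℤ, p i = 2 * m := by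
    have := (ZMod.intCast_zmod_eq_zero_iff_dvd (p i) 2).1 (congrFun h i)
    exact this
  choose m hm using h2
  have e : p = (2 : ℤ) • m := by ext i; simp [hm]
  have hm0 : m ≠ 0 := by rintro rfl; simp at e; exact hp0 e
  rw [e, zc_smul, hM.smul] at hp
  have := hadm m hm0
  norm_num at hp; linarith

lemma strict_two (hM : IsNorm3 M) (hs : StrictNorm3 M) {p q r : Fin 3 → ℝ}
    (hd : det3 p q r ≠ 0) (hp : M p ≤ 1) (hq : M q ≤ 1) (hr : M r ≤ 1) {α β γ : ℝ} (hα : α ≠ 0)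
    (hβ : β ≠ 0) : M (α • p + β • q + γ • r) < |α| + |β| + |γ| := by
  have hli : LinearIndependent ℝ ![α • p, β • q] := by
    apply pair_li_of_det3 (r := r)
    have : det3 (α • p) (β • q) r = α * β * det3 p q r := by simp [det3]; ring
    rw [this]; exact mul_ne_zero (mul_ne_zero hα hβ) hd
  have h1 := hs _ _ hli
  have h2 := hM.add_le (α • p + β • q) (γ • r)
  rw [hM.smul] at h2
  rw [hM.smul, hM.smul] at h1
  have a1 := mul_le_of_le_one_right (abs_nonneg α) hp
  have a2 := mul_le_of_le_one_right (abs_nonneg β) hq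
  have a3 := mul_le_of_le_one_right (abs_nonneg γ) hr
  linarith

lemma exists_sign (α : ℝ) (h : |α| ≤ 1 / 2) : ∃ s : ℤ, |2 * α - s| = 1 - 2 * |α| := by
  rcases le_total 0 α with h0 | h0
  · refine ⟨1, ?_⟩
    rw [abs_of_nonneg h0] at h ⊢
    push_cast
    rw [abs_of_nonpos (by linarith)]; ring
  · refine ⟨-1, ?_⟩
    rw [abs_of_nonpos h0] at h ⊢
    push_cast
    rw [abs_of_nonneg (by linarith)]; ring

/-- Three independent lattice points in the unit ball span a sublattice containing `2ℤ³`: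
otherwise let `y = αp + βq + γr` be `x` with coordinates reduced to `[-1/2, 1/2]`; then either `y`
or a vector `2y ± p ± q ± r`, with coordinates of absolute value `1 - 2|α|, 1 - 2|β|, 1 - 2|γ|`,
is a nonzero lattice point in the interior. -/
lemma two_smul_mem_span (hM : IsNorm3 M) (hs : StrictNorm3 M)
    (hadm : ∀ z : Fin 3 → ℤ, z ≠ 0 → 1 ≤ M (zc z)) {p q r : Fin 3 → ℤ} (hp : M (zc p) ≤ 1)
    (hq : M (zc q) ≤ 1) (hr : M (zc r) ≤ 1) (hd : det3 p q r ≠ 0) (x : Fin 3 → ℤ) :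
    ∃ A : Fin 3 → ℤ, (2 : ℤ) • x = lc ![p, q, r] A := by
  have hdR : det3 (zc p) (zc q) (zc r) ≠ 0 := by
    rw [← det3_cast]; exact_mod_cast hd
  set D := det3 (zc p) (zc q) (zc r) with hD
  set a := det3 (zc x) (zc q) (zc r) / D with ha
  set b := det3 (zc p) (zc x) (zc r) / D with hb
  set c := det3 (zc p) (zc q) (zc x) / D with hc
  have hx : zc x = a • zc p + b • zc q + c • zc r := by
    have := cramer (zc p) (zc q) (zc r) (zc x)
    have h2 : zc x = D⁻¹ • (D • zc x) := by rw [smul_smul, inv_mul_cancel₀ hdR, one_smul]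
    rw [h2, hD, this, ha, hb, hc, smul_add, smul_add, smul_smul, smul_smul, smul_smul]
    simp only [div_eq_inv_mul, hD]
  -- reduce the coordinates to `[-1/2, 1/2]`
  set α := a - round a with hα
  set β := b - round b with hβ
  set γ := c - round c with hγ
  have hα2 : |α| ≤ 1 / 2 := abs_sub_round a
  have hβ2 : |β| ≤ 1 / 2 := abs_sub_round b
  have hγ2 : |γ| ≤ 1 / 2 := abs_sub_round c
  set y : Fin 3 → ℤ := x - round a • p - round b • q - round c • r with hy
  have hyz : zc y = α • zc p + β • zc q + γ • zc r := by
    rw [hy, zc_sub, zc_sub, zc_sub, zc_smul, zc_smul, zc_smul, hx, hα, hβ, hγ]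
    module
  by_cases hy0 : y = 0
  · refine ⟨![2 * round a, 2 * round b, 2 * round c], ?_⟩
    have : x = round a • p + round b • q + round c • r := by
      have h := hy.symm.trans hy0
      calc x = (x - round a • p - round b • q - round c • r) + (round a • p + round b • q +
            round c • r) := by abel
        _ = _ := by rw [h, zero_add]
    conv_lhs => rw [this]
    simp [lc]; ring
  have h1 : M (zc y) ≤ |α| + |β| + |γ| := by
    have := hM.three_le α β γ (zc p) (zc q) (zc r)
    rw [← hyz] at this
    have a1 := mul_le_of_le_one_right (abs_nonneg α) hp
    have a2 := mul_le_of_le_one_right (abs_nonneg β) hq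
    have a3 := mul_le_of_le_one_right (abs_nonneg γ) hr
    linarith
  have h1' := hadm y hy0
  obtain ⟨s, hs'⟩ := exists_sign α hα2
  obtain ⟨t, ht⟩ := exists_sign β hβ2
  obtain ⟨u, hu⟩ := exists_sign γ hγ2
  set w : Fin 3 → ℤ := (2 : ℤ) • y - s • p - t • q - u • r with hw
  have hwz : zc w = (2 * α - s) • zc p + (2 * β - t) • zc q + (2 * γ - u) • zc r := by
    rw [hw, zc_sub, zc_sub, zc_sub, zc_smul, zc_smul, zc_smul, zc_smul, hyz]
    push_cast
    module
  by_cases hw0 : w = 0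
  · refine ⟨![2 * round a + s, 2 * round b + t, 2 * round c + u], ?_⟩
    have h := hw.symm.trans hw0
    have : (2 : ℤ) • x = (2 * round a + s) • p + (2 * round b + t) • q + (2 * round c + u) • r := by
      calc (2 : ℤ) • x = ((2 : ℤ) • y - s • p - t • q - u • r) + ((2 * round a + s) • p +
          (2 * round b + t) • q + (2 * round c + u) • r) := by rw [hy]; module
        _ = _ := by rw [h, zero_add]
    rw [this]; simp [lc]
  have h2 := hM.three_le (2 * α - s) (2 * β - t) (2 * γ - u) (zc p) (zc q) (zc r)
  rw [← hwz] at h2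
  have h3 := hadm w hw0
  have a1 := mul_le_of_le_one_right (abs_nonneg (2 * α - s)) hp
  have a2 := mul_le_of_le_one_right (abs_nonneg (2 * β - t)) hq
  have a3 := mul_le_of_le_one_right (abs_nonneg (2 * γ - u)) hr
  -- now `|α| + |β| + |γ| = 1` and at least two of the coordinates do not vanish
  exfalso
  have hlt : M (zc y) < |α| + |β| + |γ| := by
    rw [hyz]
    by_cases hα0 : α = 0
    · have hβ0 : β ≠ 0 := by rintro h; rw [hα0, h] at h1; simp at h1; linarith
      have hγ0 : γ ≠ 0 := by rintro h; rw [hα0, h] at h1; simp at h1; linarith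
      have := strict_two hM hs (p := zc q) (q := zc r) (r := zc p) (γ := α)
        (by rw [show det3 (zc q) (zc r) (zc p) = D by rw [hD]; simp only [det3]; ring]; exact hdR)
        hq hr hp hβ0 hγ0
      rw [show α • zc p + β • zc q + γ • zc r = β • zc q + γ • zc r + α • zc p by abel]
      linarith
    by_cases hβ0 : β = 0
    · have hγ0 : γ ≠ 0 := by rintro h; rw [hβ0, h] at h1; simp at h1; linarith
      have := strict_two hM hs (p := zc p) (q := zc r) (r := zc q) (γ := β)
        (by rw [show det3 (zc p) (zc r) (zc q) = -D by rw [hD]; simp only [det3]; ring]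
            exact neg_ne_zero.2 hdR)
        hp hr hq hα0 hγ0
      rw [show α • zc p + β • zc q + γ • zc r = α • zc p + γ • zc r + β • zc q by abel]
      linarith
    exact strict_two hM hs hdR hp hq hr hα0 hβ0
  linarith

/-- The index of the sublattice divides `8` by `two_smul_mem_span`, so it is `1` if odd. -/
lemma odd_det (hM : IsNorm3 M) (hs : StrictNorm3 M)
    (hadm : ∀ z : Fin 3 → ℤ, z ≠ 0 → 1 ≤ M (zc z)) {p q r : Fin 3 → ℤ} (hp : M (zc p) ≤ 1)
    (hq : M (zc q) ≤ 1) (hr : M (zc r) ≤ 1) (hd : det3 p q r % 2 = 1) :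
    det3 p q r = 1 ∨ det3 p q r = -1 := by
  have h := two_smul_mem_span hM hs hadm hp hq hr (by intro h; rw [h] at hd; simp at hd)
  obtain ⟨A, hA⟩ := h ![1, 0, 0]
  obtain ⟨B, hB⟩ := h ![0, 1, 0]
  obtain ⟨C, hC⟩ := h ![0, 0, 1]
  have h8 := det3_lc ![p, q, r] A B C
  rw [← hA, ← hB, ← hC] at h8
  have hdvd : det3 p q r ∣ 8 := ⟨det3 A B C, by
    have : (8 : ℤ) = det3 A B C * det3 p q r := by simpa [det3] using h8
    rw [this, mul_comm]⟩
  have hle := Int.le_of_dvd (by norm_num) hdvd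
  have hge := Int.le_of_dvd (by norm_num) ((neg_dvd).2 hdvd)
  generalize det3 p q r = d at *
  obtain ⟨m, hm⟩ := hdvd
  have hge' : -8 ≤ d := by omega
  interval_cases d <;> omega

lemma coord_cases (hM : IsNorm3 M) (hs : StrictNorm3 M)
    (hadm : ∀ z : Fin 3 → ℤ, z ≠ 0 → 1 ≤ M (zc z)) (e0 : M (zc ![1, 0, 0]) ≤ 1)
    (e1 : M (zc ![0, 1, 0]) ≤ 1) (e2 : M (zc ![0, 0, 1]) ≤ 1) {p : Fin 3 → ℤ}
    (hp : M (zc p) ≤ 1) (i : Fin 3) (hi : p i % 2 = 0) : p i = 0 ∨ p i = 2 ∨ p i = -2 := by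
  by_cases h0 : p i = 0
  · exact Or.inl h0
  have hdvd : p i ∣ 2 := by
    fin_cases i
    · obtain ⟨A, hA⟩ := two_smul_mem_span hM hs hadm hp e1 e2 (by simpa [det3] using h0) ![1, 0, 0]
      have : (2 : ℤ) * 1 = A 0 * p 0 + A 1 * 0 + A 2 * 0 := congrFun hA 0
      exact ⟨A 0, by change (2 : ℤ) = p 0 * A 0; linarith⟩
    · obtain ⟨A, hA⟩ := two_smul_mem_span hM hs hadm e0 hp e2 (by simpa [det3] using h0) ![0, 1, 0]
      have : (2 : ℤ) * 1 = A 0 * 0 + A 1 * p 1 + A 2 * 0 := congrFun hA 1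
      exact ⟨A 1, by change (2 : ℤ) = p 1 * A 1; linarith⟩
    · obtain ⟨A, hA⟩ := two_smul_mem_span hM hs hadm e0 e1 hp (by simpa [det3] using h0) ![0, 0, 1]
      have : (2 : ℤ) * 1 = A 0 * 0 + A 1 * 0 + A 2 * p 2 := congrFun hA 2
      exact ⟨A 2, by change (2 : ℤ) = p 2 * A 2; linarith⟩
  have hle := Int.le_of_dvd (by norm_num) hdvd
  have hge := Int.le_of_dvd (by norm_num) ((neg_dvd).2 hdvd)
  omega

end StrictLattice

/-- In `𝔽₂³`, avoiding one vector `m` besides `0` still leaves room for a basis together with its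
pairwise sums. -/
lemma exists_class_basis (m : Fin 3 → ZMod 2) : ∃ a b c : Fin 3 → ZMod 2, det3 a b c = 1 ∧
    ∀ x ∈ [a, b, c, a + b, a + c, b + c], x ≠ 0 ∧ x ≠ m := by
  revert m; decide

lemma emod_two_of_zmod {n : ℤ} :
    ((n : ZMod 2) = 1 → n % 2 = 1) ∧ ((n : ZMod 2) = 0 → n % 2 = 0) := by
  constructor
  · intro h
    have h1 : (n : ZMod 2) = ((1 : ℤ) : ZMod 2) := by simpa using h
    simpa using (ZMod.intCast_eq_intCast_iff' n 1 2).1 h1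
  · intro h
    have h1 : (n : ZMod 2) = ((0 : ℤ) : ZMod 2) := by simpa using h
    simpa using (ZMod.intCast_eq_intCast_iff' n 0 2).1 h1

/-- If the nonzero lattice points in the unit ball are not covered by five pairs `±f`, then at most
one nonzero parity class misses the unit ball, and `ℤ³` has a basis whose test set `U¹` or `U²`
is contained in the unit ball. -/
lemma exists_basis_of_uncovered {M : (Fin 3 → ℝ) → ℝ} (hM : IsNorm3 M) (hs : StrictNorm3 M)
    (hadm : ∀ z : Fin 3 → ℤ, z ≠ 0 → 1 ≤ M (zc z))
    (hcov : ∀ F : Finset (Fin 3 → ℤ), F.card ≤ 5 →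
      ∃ z : Fin 3 → ℤ, z ≠ 0 ∧ M (zc z) ≤ 1 ∧ ∀ f ∈ F, z ≠ f ∧ z ≠ -f) :
    ∃ x y z : Fin 3 → ℤ, (det3 x y z = 1 ∨ det3 x y z = -1) ∧
      (HasU1 (fun z => M (zc z) ≤ 1) x y z ∨ HasU2 (fun z => M (zc z) ≤ 1) x y z) := by
  classical
  let cls : (Fin 3 → ℤ) → (Fin 3 → ZMod 2) := fun z i => (z i : ZMod 2)
  let occ : (Fin 3 → ZMod 2) → Prop := fun k => ∃ z, z ≠ 0 ∧ M (zc z) ≤ 1 ∧ cls z = k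
  obtain ⟨m, hm⟩ : ∃ m, ∀ k, k ≠ 0 → k ≠ m → occ k := by
    by_contra! hcon
    obtain ⟨k₁, hk₁0, -, hk₁⟩ := hcon 0
    obtain ⟨k₂, hk₂0, hk₂₁, hk₂⟩ := hcon k₁
    let rep : (Fin 3 → ZMod 2) → (Fin 3 → ℤ) := fun k => if h : occ k then h.choose else 0
    obtain ⟨z, hz0, hz1, hzF⟩ := hcov ((Finset.univ \ {0, k₁, k₂}).image rep) (by
      refine Finset.card_image_le.trans ?_
      have h3 : ({0, k₁, k₂} : Finset (Fin 3 → ZMod 2)).card = 3 := by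
        rw [Finset.card_eq_three]
        exact ⟨0, k₁, k₂, hk₁0.symm, hk₂0.symm, hk₂₁.symm, rfl⟩
      rw [Finset.card_sdiff_of_subset (Finset.subset_univ _), h3, Finset.card_univ]
      simp)
    have ho : occ (cls z) := ⟨z, hz0, hz1, rfl⟩
    have hmem : rep (cls z) ∈ (Finset.univ \ {0, k₁, k₂}).image rep := by
      apply Finset.mem_image_of_mem
      simp only [Finset.mem_sdiff, Finset.mem_univ, true_and, Finset.mem_insert,
        Finset.mem_singleton, not_or]
      refine ⟨parity_ne_zero hM hadm hz0 hz1, ?_, ?_⟩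
      · intro h; exact hk₁ (h ▸ ho)
      · intro h; exact hk₂ (h ▸ ho)
    have hrep : rep (cls z) = ho.choose := dif_pos ho
    obtain ⟨hr0, hr1, hr2⟩ := ho.choose_spec
    rw [← hrep] at hr0 hr1 hr2
    rcases eq_or_neg_of_parity hM hs hadm hz1 hr1 (fun i => (congrFun hr2 i).symm) with h | h
    · exact (hzF _ hmem).1 h
    · exact (hzF _ hmem).2 h
  obtain ⟨a, b, c, hdet, hall⟩ := exists_class_basis m
  have hocc (x) (hx : x ∈ [a, b, c, a + b, a + c, b + c]) : occ x :=
    hm x (hall x hx).1 (hall x hx).2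
  obtain ⟨pa, -, ha1, hac⟩ := hocc a (by simp)
  obtain ⟨pb, -, hb1, hbc⟩ := hocc b (by simp)
  obtain ⟨pc, -, hc1, hcc⟩ := hocc c (by simp)
  obtain ⟨p12, -, h12, h12c⟩ := hocc (a + b) (by simp)
  obtain ⟨p13, -, h13, h13c⟩ := hocc (a + c) (by simp)
  obtain ⟨p23, -, h23, h23c⟩ := hocc (b + c) (by simp)
  have hdetcast : ((det3 pa pb pc : ℤ) : ZMod 2) = 1 := by
    rw [← hdet, ← hac, ← hbc, ← hcc]; simp [det3, cls]
  have hD := odd_det hM hs hadm ha1 hb1 hc1 (emod_two_of_zmod.1 hdetcast)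
  have hDne : det3 pa pb pc ≠ 0 := by rcases hD with h | h <;> rw [h] <;> norm_num
  set W : Fin 3 → Fin 3 → ℤ := ![pa, pb, pc] with hW
  have hcoord (x : Fin 3 → ℤ) : ∃ A, x = lc W A := by
    have := cramer pa pb pc x
    have hsq : det3 pa pb pc * det3 pa pb pc = 1 := by rcases hD with h | h <;> rw [h] <;> norm_num
    refine ⟨![det3 pa pb pc * det3 x pb pc, det3 pa pb pc * det3 pa x pc,
      det3 pa pb pc * det3 pa pb x], ?_⟩
    have h1 : x = det3 pa pb pc • (det3 pa pb pc • x) := by rw [smul_smul, hsq, one_smul]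
    conv_lhs => rw [h1, this]
    simp only [lc, hW, Matrix.cons_val_zero, Matrix.cons_val_one, Matrix.cons_val, smul_add,
      smul_smul]
  have hWz : det3 (zc (W 0)) (zc (W 1)) (zc (W 2)) ≠ 0 := by
    rw [← det3_cast]; exact_mod_cast hDne
  set M' : (Fin 3 → ℝ) → ℝ := fun x => M (lc (fun i => zc (W i)) x) with hM'def
  have hM' : IsNorm3 M' := hM.comp (v := fun i => zc (W i)) hWz
  have hs' : StrictNorm3 M' := IsNorm3.comp_strict hs (v := fun i => zc (W i)) hWz
  have hMM (z : Fin 3 → ℤ) : M' (zc z) = M (zc (lc W z)) := by rw [zc_lc]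
  have hadm' (z : Fin 3 → ℤ) (hz : z ≠ 0) : 1 ≤ M' (zc z) := by
    rw [hMM]; exact hadm _ fun h0 => hz (lc_eq_zero (v := W) hDne h0)
  have e0 : M' (zc ![1, 0, 0]) ≤ 1 := by rw [hMM]; simpa [lc, hW] using ha1
  have e1 : M' (zc ![0, 1, 0]) ≤ 1 := by rw [hMM]; simpa [lc, hW] using hb1
  have e2 : M' (zc ![0, 0, 1]) ≤ 1 := by rw [hMM]; simpa [lc, hW] using hc1
  -- coordinates of a vector determine its parity class
  have hpar (A : Fin 3 → ℤ) (k : Fin 3 → ZMod 2) (h : cls (lc W A) = lc ![a, b, c] k) :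
      cls A = k := by
    have h1 : cls (lc W A) = lc ![a, b, c] (cls A) := by
      rw [← hac, ← hbc, ← hcc]
      ext i; simp [cls, lc, hW]
    have h2 : lc ![a, b, c] (cls A + -k) = 0 := by
      rw [lc_add, lc_neg, ← h1, h, add_neg_cancel]
    have := lc_eq_zero (v := ![a, b, c]) (by simp [hdet]) h2
    exact add_neg_eq_zero.1 this
  obtain ⟨A, hA⟩ := hcoord p12
  obtain ⟨B, hB⟩ := hcoord p13
  obtain ⟨C, hC⟩ := hcoord p23
  have kA := hpar A ![1, 1, 0] (by rw [← hA, h12c]; simp [lc])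
  have kB := hpar B ![1, 0, 1] (by rw [← hB, h13c]; simp [lc])
  have kC := hpar C ![0, 1, 1] (by rw [← hC, h23c]; simp [lc])
  have eta (A : Fin 3 → ℤ) : ![A 0, A 1, A 2] = A := by ext i; fin_cases i <;> rfl
  obtain ⟨x, y, z, hxyz, hU⟩ := combi (fun z => M' (zc z) ≤ 1)
    (fun x hx => by simpa only [zc_neg, hM'.neg] using hx) e0 e1 e2
    (fun p q r hp hq hr ho => odd_det hM' hs' hadm' hp hq hr ho)
    (fun p hp i hi => coord_cases hM' hs' hadm' e0 e1 e2 hp i hi)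
    (a := A 0) (b := A 1) (c := A 2) (d := B 0) (e := B 1) (f := B 2)
    (g := C 0) (h := C 1) (k := C 2)
    (by rw [eta, hMM, ← hA]; exact h12) (by rw [eta, hMM, ← hB]; exact h13)
    (by rw [eta, hMM, ← hC]; exact h23)
    (emod_two_of_zmod.1 (congrFun kA 0)) (emod_two_of_zmod.1 (congrFun kA 1))
    (emod_two_of_zmod.2 (congrFun kA 2)) (emod_two_of_zmod.1 (congrFun kB 0))
    (emod_two_of_zmod.2 (congrFun kB 1)) (emod_two_of_zmod.1 (congrFun kB 2))
    (emod_two_of_zmod.2 (congrFun kC 0)) (emod_two_of_zmod.1 (congrFun kC 1))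
    (emod_two_of_zmod.1 (congrFun kC 2))
  refine ⟨lc W x, lc W y, lc W z, ?_, ?_⟩
  · have hD' : det3 (W 0) (W 1) (W 2) = 1 ∨ det3 (W 0) (W 1) (W 2) = -1 := hD
    rw [det3_lc]
    rcases hxyz with h | h <;> rcases hD' with h' | h' <;> rw [h, h'] <;> simp
  · simpa only [HasU1, HasU2, hMM, lc_add, sub_eq_add_neg, lc_neg] using hU

/-- The vectors of the test set `U¹` of `v` lie in the unit ball. -/
def U1 (N : (Fin 3 → ℝ) → ℝ) (v : Fin 3 → Fin 3 → ℝ) : Prop :=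
  N (v 0) ≤ 1 ∧ N (v 1) ≤ 1 ∧ N (v 2) ≤ 1 ∧ N (v 1 - v 2) ≤ 1 ∧ N (-(v 0) + v 2) ≤ 1 ∧
    N (v 0 - v 1) ≤ 1

/-- The vectors of the test set `U²` of `v` lie in the unit ball. -/
def U2 (N : (Fin 3 → ℝ) → ℝ) (v : Fin 3 → Fin 3 → ℝ) : Prop :=
  N (v 0) ≤ 1 ∧ N (v 1) ≤ 1 ∧ N (v 2) ≤ 1 ∧ N (v 1 + v 2) ≤ 1 ∧ N (v 0 + v 2) ≤ 1 ∧
    N (v 0 + v 1) ≤ 1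

/-- Changing the basis of a critical lattice. -/
lemma IsCrit.unimod {N : (Fin 3 → ℝ) → ℝ} {v : Fin 3 → Fin 3 → ℝ} (h : IsCrit N v)
    {A : Fin 3 → Fin 3 → ℤ} (hA : det3 (A 0) (A 1) (A 2) = 1 ∨ det3 (A 0) (A 1) (A 2) = -1) :
    IsCrit N fun i => lc v (zc (A i)) := by
  have hA0 : det3 (A 0) (A 1) (A 2) ≠ 0 := by rcases hA with h | h <;> rw [h] <;> norm_num
  have habs : |det3 (lc v (zc (A 0))) (lc v (zc (A 1))) (lc v (zc (A 2)))| =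
      |det3 (v 0) (v 1) (v 2)| := by
    rw [det3_lc, ← det3_cast]
    rcases hA with h | h <;> rw [h] <;> simp
  refine ⟨?_, h.adm.sub hA0, fun w hw hadm => ?_⟩
  · rw [← abs_pos, habs]; exact abs_pos.2 h.ne
  · rw [habs]; exact h.le w hw hadm

/-- The strictly convex case: a critical lattice has a basis with `U¹` or `U²` in the unit
ball. -/
theorem exists_crit_U_strict {N : (Fin 3 → ℝ) → ℝ} (hN : IsNorm3 N) (hs : StrictNorm3 N) :
    ∃ v, IsCrit N v ∧ (U1 N v ∨ U2 N v) := by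
  obtain ⟨v, hv⟩ := exists_crit hN
  have hM := hN.comp hv.ne
  have hdpos : 0 < |det3 (v 0) (v 1) (v 2)| := abs_pos.2 hv.ne
  obtain ⟨x, y, z, hxyz, hU⟩ := exists_basis_of_uncovered hM (IsNorm3.comp_strict hs hv.ne)
    hv.adm (exists_uncovered hM hv.adm (fun w hw hadm => by
      have hdet : det3 (lc v (w 0)) (lc v (w 1)) (lc v (w 2)) ≠ 0 := by
        rw [det3_lc]; exact mul_ne_zero hw hv.ne
      have := hv.le (fun i => lc v (w i)) hdet (fun z hz => by
        rw [lc_lc]; exact hadm z hz)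
      rw [det3_lc, abs_mul] at this
      exact le_of_mul_le_mul_right (by linarith) hdpos))
  refine ⟨fun i => lc v (zc (![x, y, z] i)), hv.unimod (A := ![x, y, z]) hxyz, ?_⟩
  simpa only [HasU1, HasU2, U1, U2, zc_add, zc_neg, lc_add, sub_eq_add_neg, lc_neg,
    Matrix.cons_val_zero, Matrix.cons_val_one, Matrix.cons_val] using hU

/-! ### Approximation by strictly convex norms -/

section

open Filter Topology

lemma euclid_strict : StrictNorm3 fun x => ‖WithLp.toLp 2 x‖ := by
  intro x y hxy
  have h1 : ¬ SameRay ℝ (WithLp.toLp 2 x) (WithLp.toLp 2 y) := by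
    intro h
    have h2 : SameRay ℝ x y := by
      have := h.map (WithLp.linearEquiv 2 ℝ (Fin 3 → ℝ)).toLinearMap
      simpa using this
    exact (sameRay_or_sameRay_neg_iff_not_linearIndependent.1 (Or.inl h2)) hxy
  have := (not_sameRay_iff_norm_add_lt).1 h1
  simpa using this

lemma IsNorm3.combo {N E : (Fin 3 → ℝ) → ℝ} (hN : IsNorm3 N) (hE : IsNorm3 E) {s t : ℝ}
    (hs : 0 ≤ s) (ht : 0 < t) : IsNorm3 fun x => s * N x + t * E x where
  add_le x y := by
    have h1 := mul_le_mul_of_nonneg_left (hN.add_le x y) hs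
    have h2 := mul_le_mul_of_nonneg_left (hE.add_le x y) ht.le
    linarith
  smul a x := by rw [hN.smul, hE.smul]; ring
  pos x hx := by
    have h1 := mul_nonneg hs (hN.nonneg x)
    have h2 := mul_pos ht (hE.pos x hx)
    linarith

lemma IsNorm3.combo_strict {N E : (Fin 3 → ℝ) → ℝ} (hN : IsNorm3 N) (hE : StrictNorm3 E)
    {s t : ℝ} (hs : 0 ≤ s) (ht : 0 < t) : StrictNorm3 fun x => s * N x + t * E x := by
  intro x y hxy
  have h1 := mul_le_mul_of_nonneg_left (hN.add_le x y) hs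
  have h2 := mul_lt_mul_of_pos_left (hE x y hxy) ht
  simp only
  linarith

lemma isClosed_U (N : (Fin 3 → ℝ) → ℝ) (hN : IsNorm3 N) :
    IsClosed {v : Fin 3 → Fin 3 → ℝ | U1 N v ∨ U2 N v} := by
  have hc := hN.continuous
  have key (f : (Fin 3 → Fin 3 → ℝ) → (Fin 3 → ℝ)) (hf : Continuous f) :
      IsClosed {v | N (f v) ≤ 1} := isClosed_le (hc.comp hf) continuous_const
  refine IsClosed.union ?_ ?_ <;>
  · refine (key _ (by fun_prop)).inter ((key _ (by fun_prop)).inter ((key _ (by fun_prop)).inter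
      ((key _ (by fun_prop)).inter ((key _ (by fun_prop)).inter (key _ (by fun_prop))))))

lemma U_mono {N N' : (Fin 3 → ℝ) → ℝ} (h : ∀ x, N x ≤ N' x) {v : Fin 3 → Fin 3 → ℝ}
    (hU : U1 N' v ∨ U2 N' v) : U1 N v ∨ U2 N v := by
  rcases hU with ⟨h1, h2, h3, h4, h5, h6⟩ | ⟨h1, h2, h3, h4, h5, h6⟩
  · exact Or.inl ⟨(h _).trans h1, (h _).trans h2, (h _).trans h3, (h _).trans h4, (h _).trans h5,
      (h _).trans h6⟩
  · exact Or.inr ⟨(h _).trans h1, (h _).trans h2, (h _).trans h3, (h _).trans h4, (h _).trans h5,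
      (h _).trans h6⟩

/-- Every norm has a critical lattice with a basis whose test set `U¹` or `U²` lies in the unit
ball: a limit of critical lattices of strictly convex norms decreasing to `N`. -/
theorem exists_crit_U {N : (Fin 3 → ℝ) → ℝ} (hN : IsNorm3 N) :
    ∃ v, IsCrit N v ∧ (U1 N v ∨ U2 N v) := by
  set E : (Fin 3 → ℝ) → ℝ := fun x => ‖WithLp.toLp 2 x‖ with hE
  have hEn : IsNorm3 E := euclid_isNorm
  have hpos (n : ℕ) : (0 : ℝ) < 1 / ((n : ℝ) + 1) := by positivity
  choose v hv hU using fun n : ℕ => exists_crit_U_strict (hN.combo hEn zero_le_one (hpos n))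
    (hN.combo_strict euclid_strict zero_le_one (hpos n))
  have hge (n : ℕ) (x) : N x ≤ 1 * N x + 1 / ((n : ℝ) + 1) * E x := by
    have := mul_nonneg (hpos n).le (hEn.nonneg x)
    linarith
  have hUN (n) : U1 N (v n) ∨ U2 N (v n) := U_mono (hge n) (hU n)
  obtain ⟨c, hc, hlow⟩ := hN.exists_lower
  obtain ⟨C, hC, hup⟩ := hN.exists_upper
  obtain ⟨C', hC', hup'⟩ := hEn.exists_upper
  have hNv (n i) : N (v n i) ≤ 1 := by
    rcases hUN n with h | h <;> fin_cases i
    exacts [h.1, h.2.1, h.2.2.1, h.1, h.2.1, h.2.2.1]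
  have hmem (n) : v n ∈ Metric.closedBall (0 : Fin 3 → Fin 3 → ℝ) c⁻¹ ∩
      {v | U1 N v ∨ U2 N v} := by
    refine ⟨?_, hUN n⟩
    rw [mem_closedBall_zero_iff, pi_norm_le_iff_of_nonneg (inv_pos.2 hc).le]
    intro i
    rw [← one_div, le_div_iff₀' hc]
    exact (hlow _).trans (hNv n i)
  obtain ⟨w, hw, φ, hφ, hlim⟩ := ((isCompact_closedBall (0 : Fin 3 → Fin 3 → ℝ) c⁻¹).inter_right
    (isClosed_U N hN)).tendsto_subseq hmem
  have hsm : Tendsto (fun n => 1 / ((φ n : ℝ) + 1)) atTop (𝓝 0) :=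
    tendsto_one_div_add_atTop_nhds_zero_nat.comp hφ.tendsto_atTop
  have hdlim : Tendsto (fun n => det3 (v (φ n) 0) (v (φ n) 1) (v (φ n) 2)) atTop
      (𝓝 (det3 (w 0) (w 1) (w 2))) := (continuous_det3.tendsto w).comp hlim
  have hdet : ((C + C')⁻¹) ^ 6 ≤ 4 * det3 (w 0) (w 1) (w 2) ^ 2 := by
    refine ge_of_tendsto' ((hdlim.pow 2).const_mul 4) fun n => ?_
    refine (exists_bounded_basis (by positivity) (v (φ n)) (hv (φ n)).ne fun z hz => ?_).1
    refine (hv (φ n)).adm.norm_ge (by positivity) (fun x => ?_) z hz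
    have h1 : 1 / ((φ n : ℝ) + 1) ≤ 1 := by
      rw [div_le_one (by positivity)]; linarith [(φ n).cast_nonneg (α := ℝ)]
    have h2 := mul_le_mul_of_nonneg_right h1 (hEn.nonneg x)
    have := hup x
    have := hup' x
    linarith
  refine ⟨w, ⟨?_, ?_, ?_⟩, hw.2⟩
  · intro h0
    rw [h0] at hdet
    have : 0 < ((C + C')⁻¹) ^ 6 := by positivity
    linarith
  · intro z hz
    have hl : Tendsto (fun n => lc (v (φ n)) (zc z)) atTop (𝓝 (lc w (zc z))) :=
      ((continuous_lc_zc z).tendsto w).comp hlim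
    have h1 := (((hN.continuous.tendsto _).comp hl).const_mul 1).add
      (hsm.mul ((hEn.continuous.tendsto _).comp hl))
    rw [zero_mul, add_zero, one_mul] at h1
    exact ge_of_tendsto' h1 fun n => (hv (φ n)).adm z hz
  · intro u hu hadm
    refine le_of_tendsto' hdlim.abs fun n => (hv (φ n)).le u hu fun z hz => ?_
    exact (hadm z hz).trans (hge _ _)

end

/-! ### Octahedra of the second type -/

/-- `±p, ±q, ±r` are the vertices of an octahedron on the unit sphere, and the four points
`(p ± q ± r) / 2` are not in the open unit ball. -/
structure Oct (N : (Fin 3 → ℝ) → ℝ) (p q r : Fin 3 → ℝ) : Prop where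
  hp : N p = 1
  hq : N q = 1
  hr : N r = 1
  c0 : 2 ≤ N (p + q + r)
  c1 : 2 ≤ N (p + q - r)
  c2 : 2 ≤ N (p - q + r)
  c3 : 2 ≤ N (p - q - r)

namespace Oct

variable {N : (Fin 3 → ℝ) → ℝ} {p q r : Fin 3 → ℝ}

lemma swap12 (hN : IsNorm3 N) (h : Oct N p q r) : Oct N q p r where
  hp := h.hq
  hq := h.hp
  hr := h.hr
  c0 := by rw [add_comm q p]; exact h.c0
  c1 := by rw [add_comm q p]; exact h.c1
  c2 := by rw [← hN.neg, show -(q - p + r) = p - q - r by abel]; exact h.c3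
  c3 := by rw [← hN.neg, show -(q - p - r) = p - q + r by abel]; exact h.c2

lemma swap23 (h : Oct N p q r) : Oct N p r q where
  hp := h.hp
  hq := h.hr
  hr := h.hq
  c0 := by rw [show p + r + q = p + q + r by abel]; exact h.c0
  c1 := by rw [show p + r - q = p - q + r by abel]; exact h.c2
  c2 := by rw [show p - r + q = p + q - r by abel]; exact h.c1
  c3 := by rw [show p - r - q = p - q - r by abel]; exact h.c3

lemma neg3 (hN : IsNorm3 N) (h : Oct N p q r) : Oct N p q (-r) where
  hp := h.hp
  hq := h.hq
  hr := by rw [hN.neg]; exact h.hr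
  c0 := by rw [← sub_eq_add_neg]; exact h.c1
  c1 := by rw [sub_neg_eq_add]; exact h.c0
  c2 := by rw [← sub_eq_add_neg]; exact h.c3
  c3 := by rw [sub_neg_eq_add]; exact h.c2

lemma neg2 (hN : IsNorm3 N) (h : Oct N p q r) : Oct N p (-q) r := (h.swap23.neg3 hN).swap23

lemma neg1 (hN : IsNorm3 N) (h : Oct N p q r) : Oct N (-p) q r :=
  ((h.swap12 hN).neg2 hN).swap12 hN

/-- The third vertex is not a combination of the others with coefficients in `[-1, 1]`. -/
lemma not_combo (hN : IsNorm3 N) (h : Oct N p q r) {α β : ℝ} (hα : |α| ≤ 1) (hβ : |β| ≤ 1)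
    (hr : r = α • p + β • q) : False := by
  -- signs: it suffices to treat nonnegative coefficients
  have key (p q r : Fin 3 → ℝ) (h : Oct N p q r) (α β : ℝ) (hα0 : 0 ≤ α) (hβ0 : 0 ≤ β)
      (hα : α ≤ 1) (hβ : β ≤ 1) (hr : r = α • p + β • q) : False := by
    have h1 : p + q - r = (1 - α) • p + (1 - β) • q + (0 : ℝ) • q := by rw [hr]; module
    have h2 := hN.three_le (1 - α) (1 - β) 0 p q q
    rw [← h1, h.hp, h.hq, abs_of_nonneg (by linarith), abs_of_nonneg (by linarith)] at h2
    have h3 := h.c1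
    simp at h2
    have hα_zero : α = 0 := by linarith
    have hβ_zero : β = 0 := by linarith
    have : r = 0 := by rw [hr, hα_zero, hβ_zero]; simp
    have h4 := h.hr
    rw [this, hN.zero] at h4
    exact zero_ne_one h4
  rw [abs_le] at hα hβ
  rcases le_total 0 α with ha | ha <;> rcases le_total 0 β with hb | hb
  · exact key p q r h α β ha hb hα.2 hβ.2 hr
  · exact key p (-q) r (h.neg2 hN) α (-β) ha (by linarith) hα.2 (by linarith) (by rw [hr]; module)
  · exact key (-p) q r (h.neg1 hN) (-α) β (by linarith) hb (by linarith) hβ.2 (by rw [hr]; module)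
  · exact key (-p) (-q) r ((h.neg1 hN).neg2 hN) (-α) (-β) (by linarith) (by linarith)
      (by linarith) (by linarith) (by rw [hr]; module)

lemma not_dep (hN : IsNorm3 N) (h : Oct N p q r) {a b c : ℝ} (hc : c ≠ 0) (hac : |a| ≤ |c|)
    (hbc : |b| ≤ |c|) (hdep : a • p + b • q + c • r = 0) : False := by
  have hc' : 0 < |c| := abs_pos.2 hc
  refine h.not_combo hN (α := -a / c) (β := -b / c) ?_ ?_ ?_
  · rw [abs_div, abs_neg, div_le_one hc']; exact hac
  · rw [abs_div, abs_neg, div_le_one hc']; exact hbc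
  · have h1 : r = c⁻¹ • (c • r) := by rw [smul_smul, inv_mul_cancel₀ hc, one_smul]
    have h2 : c • r = -(a • p + b • q) := by
      rw [eq_neg_iff_add_eq_zero, ← hdep]; abel
    rw [h1, h2, div_eq_inv_mul, div_eq_inv_mul]
    module

lemma det_ne (hN : IsNorm3 N) (h : Oct N p q r) : det3 p q r ≠ 0 := by
  intro h0
  have hm : (Matrix.of ![p, q, r]).det = 0 := by rw [matrix_det_eq]; exact h0
  obtain ⟨v, hv, hv0⟩ := Matrix.exists_vecMul_eq_zero_iff.2 hm
  have hdep : v 0 • p + v 1 • q + v 2 • r = 0 := by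
    ext i
    have := congrFun hv0 i
    simpa [Matrix.vecMul, dotProduct, Fin.sum_univ_three] using this
  have hne : v 0 ≠ 0 ∨ v 1 ≠ 0 ∨ v 2 ≠ 0 := by
    by_contra! hcon
    apply hv; ext i; fin_cases i
    exacts [hcon.1, hcon.2.1, hcon.2.2]
  have hpos (x y : ℝ) (h : |x| ≤ |y|) (hx : x ≠ 0) : y ≠ 0 :=
    abs_pos.1 ((abs_pos.2 hx).trans_le h)
  rcases le_total |v 0| |v 1| with h01 | h01
  · rcases le_total |v 1| |v 2| with h12 | h12
    · refine h.not_dep hN ?_ (h01.trans h12) h12 hdep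
      rcases hne with h | h | h
      exacts [hpos _ _ (h01.trans h12) h, hpos _ _ h12 h, h]
    · refine h.swap23.not_dep hN ?_ h01 h12 (by rw [← hdep]; abel)
      rcases hne with h | h | h
      exacts [hpos _ _ h01 h, h, hpos _ _ h12 h]
  · rcases le_total |v 0| |v 2| with h02 | h02
    · refine h.not_dep hN ?_ h02 (h01.trans h02) hdep
      rcases hne with h | h | h
      exacts [hpos _ _ h02 h, hpos _ _ (h01.trans h02) h, h]
    · refine (h.swap12 hN).swap23.not_dep hN ?_ h01 h02 (by rw [← hdep]; abel)
      rcases hne with h | h | h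
      exacts [h, hpos _ _ h01 h, hpos _ _ h02 h]

lemma ge_two_of_max (hN : IsNorm3 N) (h : Oct N p q r) {i j k : ℤ} (hi : 0 < i) (hj : 0 ≤ j)
    (hk : 0 ≤ k) (hji : j ≤ i) (hki : k ≤ i) (h1 : (i - j) % 2 = 0) (h2 : (i - k) % 2 = 0) :
    2 ≤ N ((i : ℝ) • p + (j : ℝ) • q + (k : ℝ) • r) := by
  by_cases hjk : j + k = 0
  · have hj0 : j = 0 := by omega
    have hk0 : k = 0 := by omega
    have hi2 : (2 : ℝ) ≤ i := by exact_mod_cast (by omega : 2 ≤ i)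
    rw [hj0, hk0]
    simp only [Int.cast_zero, zero_smul, add_zero]
    rw [hN.smul, h.hp, abs_of_nonneg (by linarith)]; linarith
  have hjk2 : (2 : ℝ) ≤ j + k := by exact_mod_cast (by omega : 2 ≤ j + k)
  have e : (i : ℝ) • (p + q + r) = (1 : ℝ) • ((i : ℝ) • p + (j : ℝ) • q + (k : ℝ) • r) +
      ((i : ℝ) - j) • q + ((i : ℝ) - k) • r := by module
  have h3 := hN.three_le 1 ((i : ℝ) - j) ((i : ℝ) - k)
    ((i : ℝ) • p + (j : ℝ) • q + (k : ℝ) • r) q r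
  have hiR : (0 : ℝ) < i := by exact_mod_cast hi
  have hjR : (j : ℝ) ≤ i := by exact_mod_cast hji
  have hkR : (k : ℝ) ≤ i := by exact_mod_cast hki
  rw [← e, hN.smul, h.hq, h.hr, abs_of_pos hiR, abs_one, abs_of_nonneg (by linarith),
    abs_of_nonneg (by linarith)] at h3
  have := mul_le_mul_of_nonneg_left h.c0 hiR.le
  linarith

lemma ge_two_of_nonneg (hN : IsNorm3 N) (h : Oct N p q r) {i j k : ℤ} (hi : 0 ≤ i) (hj : 0 ≤ j)
    (hk : 0 ≤ k) (h0 : i ≠ 0 ∨ j ≠ 0 ∨ k ≠ 0) (h1 : (i - j) % 2 = 0) (h2 : (i - k) % 2 = 0) :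
    2 ≤ N ((i : ℝ) • p + (j : ℝ) • q + (k : ℝ) • r) := by
  by_cases hmi : j ≤ i ∧ k ≤ i
  · exact h.ge_two_of_max hN (by omega) hj hk hmi.1 hmi.2 h1 h2
  by_cases hmj : i ≤ j ∧ k ≤ j
  · have := (h.swap12 hN).ge_two_of_max hN (i := j) (j := i) (k := k) (by omega) hi hk hmj.1 hmj.2
      (by omega) (by omega)
    rwa [add_comm ((j : ℝ) • q)] at this
  · have := (h.swap23.swap12 hN).ge_two_of_max hN (i := k) (j := i) (k := j) (by omega) hi hj
      (by omega) (by omega) (by omega) (by omega)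
    rwa [show (k : ℝ) • r + (i : ℝ) • p + (j : ℝ) • q = (i : ℝ) • p + (j : ℝ) • q + (k : ℝ) • r by
      abel] at this

/-- The points `(i p + j q + k r) / 2` with `i ≡ j ≡ k (mod 2)`, not all zero, are not in the open
unit ball. -/
lemma ge_two (hN : IsNorm3 N) (h : Oct N p q r) {i j k : ℤ}
    (h0 : i ≠ 0 ∨ j ≠ 0 ∨ k ≠ 0) (h1 : (i - j) % 2 = 0) (h2 : (i - k) % 2 = 0) :
    2 ≤ N ((i : ℝ) • p + (j : ℝ) • q + (k : ℝ) • r) := by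
  have flip (x : Fin 3 → ℝ) (m : ℤ) : ((-m : ℤ) : ℝ) • (-x) = (m : ℝ) • x := by simp
  wlog hi : 0 ≤ i generalizing p i
  · have := this (h.neg1 hN) (i := -i) (by omega) (by omega) (by omega) (by omega)
    rwa [flip] at this
  wlog hj : 0 ≤ j generalizing q j
  · have := this (h.neg2 hN) (j := -j) (by omega) (by omega) (by omega)
    rwa [flip] at this
  wlog hk : 0 ≤ k generalizing r k
  · have := this (k := -k) (by omega) (h.neg3 hN) (by omega) (by omega)
    rwa [flip] at this
  exact h.ge_two_of_nonneg hN hi hj hk h0 h1 h2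

/-- The lattice of all `(i p + j q + k r) / 2` with `i ≡ j ≡ k (mod 2)`: a basis. -/
noncomputable def basis (p q r : Fin 3 → ℝ) : Fin 3 → Fin 3 → ℝ :=
  ![(1 / 2 : ℝ) • (p + q + r), (-1 / 2 : ℝ) • (p + q - r), (-1 / 2 : ℝ) • (p - q + r)]

lemma basis_adm (hN : IsNorm3 N) (h : Oct N p q r) : Adm N (basis p q r) := by
  intro z hz
  have e : lc (basis p q r) (zc z) = (1 / 2 : ℝ) • (((z 0 - z 1 - z 2 : ℤ) : ℝ) • p +
      ((z 0 - z 1 + z 2 : ℤ) : ℝ) • q + ((z 0 + z 1 - z 2 : ℤ) : ℝ) • r) := by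
    simp only [lc, basis, zc, Matrix.cons_val_zero, Matrix.cons_val_one, Matrix.cons_val]
    push_cast
    module
  have := h.ge_two hN (i := z 0 - z 1 - z 2) (j := z 0 - z 1 + z 2) (k := z 0 + z 1 - z 2) (by
    by_contra! hcon
    apply hz; ext i
    have : z 0 = 0 ∧ z 1 = 0 ∧ z 2 = 0 := by omega
    fin_cases i
    exacts [this.1, this.2.1, this.2.2]) (by omega) (by omega)
  rw [e, hN.smul, abs_of_pos (by norm_num : (0 : ℝ) < 1 / 2)]
  linarith

lemma basis_det (p q r : Fin 3 → ℝ) :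
    |det3 (basis p q r 0) (basis p q r 1) (basis p q r 2)| = |det3 p q r| / 2 := by
  have : det3 (basis p q r 0) (basis p q r 1) (basis p q r 2) = -(det3 p q r / 2) := by
    simp [basis, det3]; ring
  rw [this, abs_neg, abs_div, abs_two]

end Oct

/-! ### Octahedra of minimal volume -/

namespace Oct

variable {N : (Fin 3 → ℝ) → ℝ} {p q r : Fin 3 → ℝ}

/-- A supporting functional at a unit vector `p` of a strictly convex norm takes the value `1`
in the unit ball only at `p`. -/
lemma support_unique (hN : IsNorm3 N) (hs : StrictNorm3 N) {u : (Fin 3 → ℝ) →ₗ[ℝ] ℝ}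
    (hu : ∀ x, u x ≤ N x) {x : Fin 3 → ℝ} (hp : N p ≤ 1) (hup : u p = 1) (hx : N x ≤ 1)
    (hux : u x = 1) : x = p := by
  by_contra hne
  have h1 := hN.midpoint_lt hs hx hp hne
  have h2 := hu ((1 / 2 : ℝ) • (x + p))
  rw [map_smul, map_add, hux, hup, smul_eq_mul] at h2
  linarith

/-- The functional `w s • u - u s • w` built from supporting functionals `u` at `p` and `w` at `q`,
where `s = p + q`, vanishes at `s` and has `p` as its unique maximum on the intersection of the
unit ball with its translate by `s`. -/
lemma exists_theta (hN : IsNorm3 N) (hs : StrictNorm3 N) (hp : N p = 1) (hq : N q = 1)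
    (hpq : p ≠ -q) :
    ∃ θ : (Fin 3 → ℝ) →ₗ[ℝ] ℝ, θ (p + q) = 0 ∧
      ∀ x, N x ≤ 1 → N (x - (p + q)) ≤ 1 → x ≠ p → θ x < θ p := by
  obtain ⟨u, hup, hu⟩ := hN.exists_support p
  obtain ⟨w, hwq, hw⟩ := hN.exists_support q
  rw [hp] at hup
  rw [hq] at hwq
  have pos1 : 0 < u (p + q) := by
    have h1 := hu (-q)
    rw [hN.neg, hq] at h1
    rcases h1.lt_or_eq with h | h
    · rw [map_neg] at h; rw [map_add, hup]; linarith
    · exact absurd (support_unique hN hs hu hp.le hup (by rw [hN.neg, hq]) h).symm hpq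
  have pos2 : 0 < w (p + q) := by
    have h1 := hw (-p)
    rw [hN.neg, hp] at h1
    rcases h1.lt_or_eq with h | h
    · rw [map_neg] at h; rw [map_add, hwq]; linarith
    · exact absurd (support_unique hN hs hw hq.le hwq (by rw [hN.neg, hp]) h)
        fun h => hpq (neg_eq_iff_eq_neg.1 h)
  refine ⟨w (p + q) • u - u (p + q) • w, ?_, fun x hx hx' hne => ?_⟩
  · simp only [LinearMap.sub_apply, LinearMap.smul_apply, smul_eq_mul]; ring
  · simp only [LinearMap.sub_apply, LinearMap.smul_apply, smul_eq_mul]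
    have h1 : u x < 1 := ((hu x).trans hx).lt_of_ne fun h =>
      hne (support_unique hN hs hu hp.le hup hx h)
    have h2 : w p ≤ w x := by
      have := hw (p + q - x)
      rw [hN.sub_comm, map_sub, map_add, hwq] at this
      linarith
    rw [hup]
    have h3 := mul_lt_mul_of_pos_left h1 pos2
    have h4 := mul_le_mul_of_nonneg_left h2 pos1.le
    linarith

lemma exists_small (hN : IsNorm3 N) {y y' g : Fin 3 → ℝ} (hy : N y < 1) (hy' : N y' < 1) :
    ∃ κ : ℝ, 0 < κ ∧ N (y + κ • g) < 1 ∧ N (y' + κ • g) < 1 := by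
  have key : ∀ᶠ κ : ℝ in nhds 0, N (y + κ • g) < 1 ∧ N (y' + κ • g) < 1 := by
    have h (y : Fin 3 → ℝ) (hy : N y < 1) : ∀ᶠ κ : ℝ in nhds 0, N (y + κ • g) < 1 := by
      have hc : Continuous fun κ : ℝ => N (y + κ • g) := hN.continuous.comp (by fun_prop)
      exact hc.continuousAt.eventually_lt continuousAt_const (by simpa using hy)
    exact (h y hy).and (h y' hy')
  obtain ⟨ε, hε, h⟩ := Metric.eventually_nhds_iff.1 key
  exact ⟨ε / 2, by positivity, h (by
    rw [Real.dist_eq, sub_zero, abs_of_pos (by positivity)]; linarith)⟩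

/-- If two of the four centres `(p ± q ± r) / 2` lie strictly outside the unit ball of a strictly
convex norm, the octahedron can be replaced by one of smaller volume: `p` and `q` move along the
curve on which both `x` and `p + q - x` are unit vectors. -/
lemma not_minimal (hN : IsNorm3 N) (hs : StrictNorm3 N) (h : Oct N p q r)
    (h2 : 2 < N (p - q + r)) (h3 : 2 < N (p - q - r)) :
    ∃ x y, Oct N x y r ∧ |det3 x y r| < |det3 p q r| := by
  have hV := h.det_ne hN
  set V := det3 p q r with hVdef
  have hpq : p ≠ -q := by
    intro h0
    apply hV
    rw [hVdef, h0]
    simp [det3]; ring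
  obtain ⟨θ, hθs, hθ⟩ := exists_theta hN hs h.hp h.hq hpq
  have hθc : Continuous θ := θ.continuous_of_finiteDimensional
  have hNc := hN.continuous
  set s := p + q with hsdef
  have hps : N (p - s) = 1 := by
    rw [hsdef, sub_add_cancel_left, hN.neg, h.hq]
  have hqs : N (q - s) = 1 := by
    rw [hsdef, sub_add_cancel_right, hN.neg, h.hp]
  obtain ⟨c, hc, hlow⟩ := hN.exists_lower
  -- the lens `C` is compact
  have hCcomp : IsCompact {x : Fin 3 → ℝ | N x ≤ 1 ∧ N (x - s) ≤ 1} := by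
    refine (isCompact_closedBall (0 : Fin 3 → ℝ) c⁻¹).of_isClosed_subset ?_ fun x hx => ?_
    · exact (isClosed_le hNc continuous_const).inter
        (isClosed_le (hNc.comp (by fun_prop)) continuous_const)
    · rw [mem_closedBall_zero_iff, ← one_div, le_div_iff₀' hc]
      exact (hlow _).trans hx.1
  -- all points of the lens with `θ` above some `μ < θ p` keep the two centres outside
  obtain ⟨μ, hμ, hμC⟩ : ∃ μ < θ p, ∀ x, N x ≤ 1 → N (x - s) ≤ 1 → μ < θ x →
      2 < N ((2 : ℝ) • x - s + r) ∧ 2 < N ((2 : ℝ) • x - s - r) := by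
    have hOopen : IsOpen {x : Fin 3 → ℝ |
        2 < N ((2 : ℝ) • x - s + r) ∧ 2 < N ((2 : ℝ) • x - s - r)} :=
      (isOpen_lt continuous_const (hNc.comp (by fun_prop))).inter
        (isOpen_lt continuous_const (hNc.comp (by fun_prop)))
    have hD := hCcomp.inter_right hOopen.isClosed_compl
    rcases Set.eq_empty_or_nonempty ({x : Fin 3 → ℝ | N x ≤ 1 ∧ N (x - s) ≤ 1} ∩
      {x : Fin 3 → ℝ | 2 < N ((2 : ℝ) • x - s + r) ∧ 2 < N ((2 : ℝ) • x - s - r)}ᶜ) with he | he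
    · refine ⟨θ p - 1, by linarith, fun x hx hx' _ => ?_⟩
      by_contra hcon
      have : x ∈ (∅ : Set (Fin 3 → ℝ)) := he ▸ ⟨⟨hx, hx'⟩, hcon⟩
      exact this
    · obtain ⟨y, hy, hmax⟩ := hD.exists_isMaxOn he hθc.continuousOn
      refine ⟨θ y, hθ y hy.1.1 hy.1.2 ?_, fun x hx hx' hlt => ?_⟩
      · rintro rfl
        apply hy.2
        have e : (2 : ℝ) • y - s = y - q := by rw [hsdef]; module
        change 2 < N ((2 : ℝ) • y - s + r) ∧ 2 < N ((2 : ℝ) • y - s - r)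
        rw [e]
        exact ⟨h2, h3⟩
      · by_contra hcon
        exact absurd (hmax ⟨⟨hx, hx'⟩, hcon⟩) (not_le.2 hlt)
  have hθq : θ q ≤ θ p := by
    by_cases hqp : q = p
    · rw [hqp]
    · exact (hθ q h.hq.le hqs.le hqp).le
  obtain ⟨τ, hτ0, hτ1, hτ⟩ : ∃ τ : ℝ, 0 < τ ∧ τ < 1 / 2 ∧ μ < (1 - τ) * θ p + τ * θ q := by
    have ha : 0 < θ p - μ := by linarith
    have hab : 0 < (θ p - μ) + (θ p - θ q) := by linarith
    refine ⟨(θ p - μ) / (4 * ((θ p - μ) + (θ p - θ q))), by positivity, ?_, ?_⟩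
    · rw [div_lt_iff₀ (by positivity)]; linarith
    · have : (θ p - μ) / (4 * ((θ p - μ) + (θ p - θ q))) * (θ p - θ q) < θ p - μ := by
        rw [div_mul_eq_mul_div, div_lt_iff₀ (by positivity)]
        nlinarith [mul_nonneg ha.le (by linarith : 0 ≤ θ p - θ q), mul_pos ha ha]
      linarith
  obtain ⟨g, hg⟩ : ∃ g : Fin 3 → ℝ, (g = r ∨ g = -r) ∧ 0 ≤ θ g := by
    rcases le_total 0 (θ r) with h | h
    · exact ⟨r, Or.inl rfl, h⟩
    · exact ⟨-r, Or.inr rfl, by rw [map_neg]; linarith⟩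
  set W := det3 p s g with hW
  have hW2 : 0 < W * W := by
    have h1 : det3 p s r = V := by rw [hVdef, hsdef]; simp [det3]; ring
    have h2 : det3 p s (-r) = -V := by rw [hVdef, hsdef]; simp [det3]; ring
    rcases hg.1 with h | h <;> rw [hW, h]
    · rw [h1]; exact mul_self_pos.2 hV
    · rw [h2]; exact mul_self_pos.2 (neg_ne_zero.2 hV)
  have hφg : det3 g s r = 0 := by
    rcases hg.1 with h | h <;> rw [h] <;> simp [det3] <;> ring
  set z := (1 - τ) • p + τ • q with hz
  have hMcomp : IsCompact ({x : Fin 3 → ℝ | N x ≤ 1 ∧ N (x - s) ≤ 1} ∩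
      {x | det3 x s r = det3 z s r ∧ θ z ≤ θ x}) := by
    refine hCcomp.inter_right (IsClosed.inter ?_ ?_)
    · exact isClosed_eq (by unfold det3; fun_prop) continuous_const
    · exact isClosed_le continuous_const hθc
  have hball (x y : Fin 3 → ℝ) (hx : N x ≤ 1) (hy : N y ≤ 1) : N ((1 - τ) • x + τ • y) ≤ 1 := by
    have h1 := hN.add_le ((1 - τ) • x) (τ • y)
    rw [hN.smul, hN.smul, abs_of_pos hτ0, abs_of_pos (by linarith)] at h1
    nlinarith
  have hzC : N z ≤ 1 ∧ N (z - s) ≤ 1 := by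
    refine ⟨hball _ _ h.hp.le h.hq.le, ?_⟩
    have : z - s = (1 - τ) • (p - s) + τ • (q - s) := by rw [hz]; module
    rw [this]
    exact hball _ _ hps.le hqs.le
  obtain ⟨x, ⟨⟨hx1, hx2⟩, hx3, hx4⟩, hmax⟩ := hMcomp.exists_isMaxOn ⟨z, hzC, rfl, le_rfl⟩
    (f := fun x => W * det3 p s x) (by unfold det3; fun_prop)
  -- a point of the open lens on the line `x + ℝ s` could be pushed further in direction `g`
  have hpush (η : ℝ) (ha : N (x + η • s) < 1) (hb : N (x + η • s - s) < 1) : False := by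
    obtain ⟨κ, hκ, hκ1, hκ2⟩ := exists_small hN (g := g) ha hb
    have hmem := hmax (show x + η • s + κ • g ∈ _ from ⟨⟨hκ1.le, by
      rw [show x + η • s + κ • g - s = x + η • s - s + κ • g by abel]; exact hκ2.le⟩, by
      rw [← hx3]
      have : det3 (x + η • s + κ • g) s r = det3 x s r + κ * det3 g s r := by
        simp [det3]; ring
      rw [this, hφg]; ring, by
      have e : θ (x + η • s + κ • g) = θ x + κ * θ g := by
        rw [map_add, map_add, map_smul, map_smul, hθs, smul_zero, add_zero, smul_eq_mul]
      have := mul_nonneg hκ.le hg.2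
      linarith⟩)
    change W * det3 p s (x + η • s + κ • g) ≤ W * det3 p s x at hmem
    have : det3 p s (x + η • s + κ • g) = det3 p s x + κ * W := by
      rw [hW]; simp [det3]; ring
    rw [this] at hmem
    have := mul_pos hκ hW2
    linarith
  have hxN : N x = 1 := by
    refine hx1.eq_of_not_lt fun hlt => ?_
    obtain ⟨κ, hκ, hκ1, -⟩ := exists_small hN (g := s) hlt hlt
    -- shrink the step below `1` to stay on the segment from `x - s` to `x`
    set η := min κ (1 / 2) with hη
    have hη0 : 0 < η := by positivity
    have hη1 : η ≤ 1 / 2 := min_le_right _ _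
    have hηκ : η ≤ κ := min_le_left _ _
    refine hpush η ?_ ?_
    · have e : x + η • s = (1 - η / κ) • x + (η / κ) • (x + κ • s) := by
        have : η • s = (η / κ) • κ • s := by rw [smul_smul, div_mul_cancel₀ _ hκ.ne']
        rw [this]; module
      have hr1 : η / κ ≤ 1 := (div_le_one hκ).2 hηκ
      have hr0 : 0 < η / κ := by positivity
      rw [e]
      have h1 := hN.add_le ((1 - η / κ) • x) ((η / κ) • (x + κ • s))
      rw [hN.smul, hN.smul, abs_of_pos hr0, abs_of_nonneg (by linarith)] at h1
      nlinarith
    · have e : x + η • s - s = (1 - η) • (x - s) + η • x := by module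
      rw [e]
      have h1 := hN.add_le ((1 - η) • (x - s)) (η • x)
      rw [hN.smul, hN.smul, abs_of_pos hη0, abs_of_nonneg (by linarith)] at h1
      nlinarith
  have hxN' : N (x - s) = 1 := by
    refine hx2.eq_of_not_lt fun hlt => ?_
    obtain ⟨κ, hκ, hκ1, -⟩ := exists_small hN (g := -s) hlt hlt
    set η := min κ (1 / 2) with hη
    have hη0 : 0 < η := by positivity
    have hη1 : η ≤ 1 / 2 := min_le_right _ _
    have hηκ : η ≤ κ := min_le_left _ _
    refine hpush (-η) ?_ ?_
    · have e : x + (-η) • s = (1 - η) • x + η • (x - s) := by module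
      rw [e]
      have h1 := hN.add_le ((1 - η) • x) (η • (x - s))
      rw [hN.smul, hN.smul, abs_of_pos hη0, abs_of_nonneg (by linarith)] at h1
      nlinarith
    · have e : x + (-η) • s - s = (1 - η / κ) • (x - s) + (η / κ) • (x - s + κ • (-s)) := by
        have : (-η) • s = (η / κ) • κ • (-s) := by
          rw [smul_smul, div_mul_cancel₀ _ hκ.ne', smul_neg, neg_smul]
        rw [this]; module
      have hr1 : η / κ ≤ 1 := (div_le_one hκ).2 hηκ
      have hr0 : 0 < η / κ := by positivity
      rw [e]
      have h1 := hN.add_le ((1 - η / κ) • (x - s)) ((η / κ) • (x - s + κ • (-s)))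
      rw [hN.smul, hN.smul, abs_of_pos hr0, abs_of_nonneg (by linarith)] at h1
      nlinarith
  have hθz : θ z = (1 - τ) * θ p + τ * θ q := by simp [hz]
  obtain ⟨hc2, hc3⟩ := hμC x hx1 hx2 (by rw [hθz] at hx4; linarith)
  refine ⟨x, s - x, ⟨hxN, by rw [hN.sub_comm]; exact hxN', h.hr, ?_, ?_, ?_, ?_⟩, ?_⟩
  · rw [add_sub_cancel]; exact h.c0
  · rw [add_sub_cancel]; exact h.c1
  · rw [show x - (s - x) = (2 : ℝ) • x - s by module]; exact hc2.le
  · rw [show x - (s - x) = (2 : ℝ) • x - s by module]; exact hc3.le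
  · have e1 : det3 x (s - x) r = det3 x s r := by simp [det3]; ring
    have e2 : det3 z s r = (1 - 2 * τ) * V := by rw [hz, hVdef, hsdef]; simp [det3]; ring
    rw [e1, hx3, e2, abs_mul, abs_of_pos (by linarith)]
    have := abs_pos.2 hV
    nlinarith

lemma isCompact_oct (hN : IsNorm3 N) :
    IsCompact {T : Fin 3 → Fin 3 → ℝ | Oct N (T 0) (T 1) (T 2)} := by
  have hc := hN.continuous
  obtain ⟨c, hc0, hlow⟩ := hN.exists_lower
  have heq (f : (Fin 3 → Fin 3 → ℝ) → (Fin 3 → ℝ)) (hf : Continuous f) :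
      IsClosed {T | N (f T) = 1} := isClosed_eq (hc.comp hf) continuous_const
  have hge (f : (Fin 3 → Fin 3 → ℝ) → (Fin 3 → ℝ)) (hf : Continuous f) :
      IsClosed {T | 2 ≤ N (f T)} := isClosed_le continuous_const (hc.comp hf)
  refine (isCompact_closedBall (0 : Fin 3 → Fin 3 → ℝ) c⁻¹).of_isClosed_subset ?_ fun T hT => ?_
  · have := ((heq (fun T => T 0) (by fun_prop)).inter (heq (fun T => T 1) (by fun_prop))).inter
      ((heq (fun T => T 2) (by fun_prop)).inter
      (((hge (fun T => T 0 + T 1 + T 2) (by fun_prop)).inter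
        (hge (fun T => T 0 + T 1 - T 2) (by fun_prop))).inter
      ((hge (fun T => T 0 - T 1 + T 2) (by fun_prop)).inter
        (hge (fun T => T 0 - T 1 - T 2) (by fun_prop)))))
    refine (congrArg IsClosed ?_).mpr this
    ext T
    exact ⟨fun h => ⟨⟨h.hp, h.hq⟩, h.hr, ⟨h.c0, h.c1⟩, h.c2, h.c3⟩,
      fun ⟨⟨h1, h2⟩, h3, ⟨h4, h5⟩, h6, h7⟩ => ⟨h1, h2, h3, h4, h5, h6, h7⟩⟩
  · rw [mem_closedBall_zero_iff, pi_norm_le_iff_of_nonneg (inv_pos.2 hc0).le]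
    intro i
    rw [← one_div, le_div_iff₀' hc0]
    refine (hlow _).trans ?_
    fin_cases i
    exacts [hT.hp.le, hT.hq.le, hT.hr.le]

/-- An octahedron of minimal volume has at most one centre strictly outside the unit ball; after
a change of signs, the other three are `(p + q ± r) / 2` and `(p - q + r) / 2`. -/
lemma exists_tight_strict (hN : IsNorm3 N) (hs : StrictNorm3 N) (h : Oct N p q r) :
    ∃ p' q' r', Oct N p' q' r' ∧ |det3 p' q' r'| ≤ |det3 p q r| ∧
      N (p' + q' + r') ≤ 2 ∧ N (p' + q' - r') ≤ 2 ∧ N (p' - q' + r') ≤ 2 := by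
  obtain ⟨T, hT, hmin⟩ := (isCompact_oct hN).exists_isMinOn
    ⟨![p, q, r], (by simpa using h : Oct N (![p, q, r] 0) (![p, q, r] 1) (![p, q, r] 2))⟩
    (f := fun T => |det3 (T 0) (T 1) (T 2)|) continuous_det3.abs.continuousOn
  have hmin' (x y z : Fin 3 → ℝ) (ho : Oct N x y z) :
      |det3 (T 0) (T 1) (T 2)| ≤ |det3 x y z| := hmin (show ![x, y, z] ∈ _ from ho)
  change Oct N (T 0) (T 1) (T 2) at hT
  generalize T 0 = a at hT hmin'
  generalize T 1 = b at hT hmin'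
  generalize T 2 = c at hT hmin'
  have hle := hmin' p q r h
  -- no two centres are strictly outside
  have core (x y z : Fin 3 → ℝ) (ho : Oct N x y z) (hd : |det3 x y z| = |det3 a b c|)
      (h2 : 2 < N (x - y + z)) (h3 : 2 < N (x - y - z)) : False := by
    obtain ⟨x', y', ho', hlt⟩ := ho.not_minimal hN hs h2 h3
    have := hmin' _ _ _ ho'
    rw [hd] at hlt
    linarith
  have d1 : |det3 a (-b) c| = |det3 a b c| := by
    rw [← abs_neg]; congr 1; simp only [det3, Pi.neg_apply]; ring
  have d2 : |det3 a c b| = |det3 a b c| := by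
    rw [← abs_neg]; congr 1; simp only [det3]; ring
  have d3 : |det3 a (-c) b| = |det3 a b c| := by
    congr 1; simp only [det3, Pi.neg_apply]; ring
  have d4 : |det3 b (-c) a| = |det3 a b c| := by
    rw [← abs_neg]; congr 1; simp only [det3, Pi.neg_apply]; ring
  have d5 : |det3 b c a| = |det3 a b c| := by
    congr 1; simp only [det3]; ring
  have d6 : |det3 a b (-c)| = |det3 a b c| := by
    rw [← abs_neg]; congr 1; simp only [det3, Pi.neg_apply]; ring
  have d7 : |det3 a (-b) (-c)| = |det3 a b c| := by
    congr 1; simp only [det3, Pi.neg_apply]; ring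
  have n23 := core a b c hT rfl
  have n01 := core a (-b) c (hT.neg2 hN) d1
  have n13 := core a c b hT.swap23 d2
  have n02 := core a (-c) b (hT.swap23.neg2 hN) d3
  have n03 := core b (-c) a ((hT.swap12 hN).swap23.neg2 hN) d4
  have n12 := core b c a (hT.swap12 hN).swap23 d5
  have e1 : a - -b + c = a + b + c := by abel
  have e2 : a - -b - c = a + b - c := by abel
  have e3 : a - c + b = a + b - c := by abel
  have e4 : a - c - b = a - b - c := by abel
  have e5 : a - -c + b = a + b + c := by abel
  have e6 : a - -c - b = a - b + c := by abel
  have e7 : b - -c + a = a + b + c := by abel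
  have e8 : N (b - -c - a) = N (a - b - c) := by rw [← hN.neg]; congr 1; abel
  have e9 : b - c + a = a + b - c := by abel
  have e10 : N (b - c - a) = N (a - b + c) := by rw [← hN.neg]; congr 1; abel
  rw [e1, e2] at n01
  rw [e3, e4] at n13
  rw [e5, e6] at n02
  rw [e7, e8] at n03
  rw [e9, e10] at n12
  by_cases h3 : 2 < N (a - b - c)
  · exact ⟨a, b, c, hT, hle, not_lt.1 fun h => n03 h h3, not_lt.1 fun h => n13 h h3,
      not_lt.1 fun h => n23 h h3⟩
  by_cases h2 : 2 < N (a - b + c)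
  · refine ⟨a, b, -c, hT.neg3 hN, d6.trans_le hle, ?_, ?_, ?_⟩
    · rw [← sub_eq_add_neg]; exact not_lt.1 fun h => n12 h h2
    · rw [sub_neg_eq_add]; exact not_lt.1 fun h => n02 h h2
    · rw [← sub_eq_add_neg]; exact not_lt.1 h3
  by_cases h1 : 2 < N (a + b - c)
  · refine ⟨a, -b, c, hT.neg2 hN, d1.trans_le hle, ?_, ?_, ?_⟩
    · rw [← sub_eq_add_neg]; exact not_lt.1 h2
    · rw [← sub_eq_add_neg]; exact not_lt.1 h3
    · rw [sub_neg_eq_add]; exact not_lt.1 fun h => n01 h h1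
  · refine ⟨a, -b, -c, (hT.neg2 hN).neg3 hN, d7.trans_le hle, ?_, ?_, ?_⟩
    · rw [← sub_eq_add_neg, ← sub_eq_add_neg]; exact not_lt.1 h3
    · rw [← sub_eq_add_neg, sub_neg_eq_add]; exact not_lt.1 h2
    · rw [← sub_eq_add_neg, sub_neg_eq_add]; exact not_lt.1 h1

end Oct

/-! ### From strictly convex norms to arbitrary norms -/

section
open Filter Topology

lemma l1_isNorm : IsNorm3 fun x => |x 0| + |x 1| + |x 2| where
  add_le x y := by
    have := abs_add_le (x 0) (y 0)
    have := abs_add_le (x 1) (y 1)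
    have := abs_add_le (x 2) (y 2)
    simp only [Pi.add_apply]
    linarith
  smul t x := by simp only [Pi.smul_apply, smul_eq_mul, abs_mul]; ring
  pos x hx := by
    obtain ⟨i, hi⟩ := Function.ne_iff.1 hx
    have h0 := abs_nonneg (x 0)
    have h1 := abs_nonneg (x 1)
    have h2 := abs_nonneg (x 2)
    have hi' : 0 < |x i| := abs_pos.2 hi
    fin_cases i <;> simp only [Fin.zero_eta, Fin.mk_one, Fin.reduceFinMk] at hi' <;> linarith

lemma abs_le_euclid (x : Fin 3 → ℝ) : |x 0| ≤ ‖WithLp.toLp 2 x‖ := by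
  have h := euclid_sq x
  apply abs_le_of_sq_le_sq _ (norm_nonneg _)
  rw [h]
  unfold dot3
  nlinarith [sq_nonneg (x 1), sq_nonneg (x 2)]

/-- The mean of the `ℓ¹` and the Euclidean norm: strictly convex, and the standard octahedron
satisfies `Oct` for it. -/
noncomputable def meanNorm (x : Fin 3 → ℝ) : ℝ :=
  1 / 2 * (|x 0| + |x 1| + |x 2|) + 1 / 2 * ‖WithLp.toLp 2 x‖

lemma meanNorm_isNorm : IsNorm3 meanNorm :=
  l1_isNorm.combo euclid_isNorm (by norm_num) (by norm_num)

lemma meanNorm_strict : StrictNorm3 meanNorm :=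
  l1_isNorm.combo_strict euclid_strict (by norm_num) (by norm_num)

lemma meanNorm_oct : Oct meanNorm ![1, 0, 0] ![0, 1, 0] ![0, 0, 1] := by
  have hunit (x : Fin 3 → ℝ) (h1 : |x 0| + |x 1| + |x 2| = 1) (h2 : dot3 x x = 1) :
      meanNorm x = 1 := by
    have h := euclid_sq x
    rw [h2] at h
    have : ‖WithLp.toLp 2 x‖ = 1 := by
      have := norm_nonneg (WithLp.toLp 2 x)
      nlinarith
    rw [meanNorm, h1, this]; norm_num
  have hcen (x : Fin 3 → ℝ) (h0 : |x 0| = 1) (h1 : |x 1| = 1) (h2 : |x 2| = 1) :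
      2 ≤ meanNorm x := by
    have := abs_le_euclid x
    rw [meanNorm, h1, h2]
    linarith
  constructor
  · exact hunit _ (by simp) (by simp [dot3])
  · exact hunit _ (by simp) (by simp [dot3])
  · exact hunit _ (by simp) (by simp [dot3])
  · exact hcen _ (by simp) (by simp) (by simp)
  · exact hcen _ (by simp) (by simp) (by simp)
  · exact hcen _ (by simp) (by simp) (by simp)
  · exact hcen _ (by simp) (by simp) (by simp)

lemma Oct.combo {N E : (Fin 3 → ℝ) → ℝ} {p q r : Fin 3 → ℝ} (h : Oct N p q r)
    (hE : Oct E p q r) {s t : ℝ} (hs : 0 ≤ s) (ht : 0 ≤ t) (hst : s + t = 1) :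
    Oct (fun x => s * N x + t * E x) p q r := by
  have key (a b : ℝ) (ha : 2 ≤ a) (hb : 2 ≤ b) : 2 ≤ s * a + t * b := by
    have := mul_le_mul_of_nonneg_left ha hs
    have := mul_le_mul_of_nonneg_left hb ht
    linarith
  exact ⟨by simp only [h.hp, hE.hp]; linarith, by simp only [h.hq, hE.hq]; linarith,
    by simp only [h.hr, hE.hr]; linarith, key _ _ h.c0 hE.c0, key _ _ h.c1 hE.c1,
    key _ _ h.c2 hE.c2, key _ _ h.c3 hE.c3⟩

/-- The standard octahedron can be replaced by one of no larger volume with three centres on the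
unit sphere: a limit of the octahedra obtained for the strictly convex norms between `N` and
`meanNorm`. -/
lemma exists_tight_std {N : (Fin 3 → ℝ) → ℝ} (hN : IsNorm3 N)
    (h : Oct N ![1, 0, 0] ![0, 1, 0] ![0, 0, 1]) :
    ∃ p q r, Oct N p q r ∧ |det3 p q r| ≤ 1 ∧
      N (p + q + r) ≤ 2 ∧ N (p + q - r) ≤ 2 ∧ N (p - q + r) ≤ 2 := by
  set ε : ℕ → ℝ := fun n => 1 / ((n : ℝ) + 1) * (1 / 2) with hε
  have hε0 (n) : 0 < ε n := by simp only [hε]; positivity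
  have hε1 (n) : ε n ≤ 1 / 2 := by
    have : 1 / ((n : ℝ) + 1) ≤ 1 := by
      rw [div_le_one (by positivity)]; linarith [n.cast_nonneg (α := ℝ)]
    simp only [hε]; linarith
  have hεlim : Tendsto ε atTop (𝓝 0) := by
    have := (tendsto_one_div_add_atTop_nhds_zero_nat (𝕜 := ℝ)).mul_const (1 / 2)
    rwa [zero_mul] at this
  have hs (n) : 0 ≤ 1 - ε n := by linarith [hε1 n]
  choose p q r ho hd hc0 hc1 hc2 using fun n =>
    Oct.exists_tight_strict (hN.combo meanNorm_isNorm (hs n) (hε0 n))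
      (hN.combo_strict meanNorm_strict (hs n) (hε0 n))
      (h.combo meanNorm_oct (hs n) (hε0 n).le (by ring))
  obtain ⟨c, hc, hlow⟩ := hN.exists_lower
  have hbound (n) (x : Fin 3 → ℝ) (hx : (1 - ε n) * N x + ε n * meanNorm x = 1) :
      ‖x‖ ≤ 2 * c⁻¹ := by
    have h1 := mul_nonneg (hε0 n).le (meanNorm_isNorm.nonneg x)
    have h2 : N x ≤ 2 := by nlinarith [hN.nonneg x, hε1 n]
    rw [← div_eq_mul_inv, le_div_iff₀' hc]
    exact (hlow _).trans h2
  have hmem (n) : ![p n, q n, r n] ∈ Metric.closedBall (0 : Fin 3 → Fin 3 → ℝ) (2 * c⁻¹) := by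
    rw [mem_closedBall_zero_iff, pi_norm_le_iff_of_nonneg (by positivity)]
    intro i
    fin_cases i
    exacts [hbound n _ (ho n).hp, hbound n _ (ho n).hq, hbound n _ (ho n).hr]
  obtain ⟨T, -, φ, hφ, hlim⟩ :=
    (isCompact_closedBall (0 : Fin 3 → Fin 3 → ℝ) (2 * c⁻¹)).tendsto_subseq hmem
  have hεφ : Tendsto (fun n => ε (φ n)) atTop (𝓝 0) := hεlim.comp hφ.tendsto_atTop
  have hkey (f : (Fin 3 → Fin 3 → ℝ) → (Fin 3 → ℝ)) (hf : Continuous f) :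
      Tendsto (fun n => (1 - ε (φ n)) * N (f ![p (φ n), q (φ n), r (φ n)]) +
        ε (φ n) * meanNorm (f ![p (φ n), q (φ n), r (φ n)])) atTop (𝓝 (N (f T))) := by
    have hl : Tendsto (fun n => f ![p (φ n), q (φ n), r (φ n)]) atTop (𝓝 (f T)) :=
      (hf.tendsto T).comp hlim
    have := ((hεφ.const_sub 1).mul ((hN.continuous.tendsto _).comp hl)).add
      (hεφ.mul ((meanNorm_isNorm.continuous.tendsto _).comp hl))
    rwa [sub_zero, one_mul, zero_mul, add_zero] at this
  have k0 := hkey (fun T => T 0) (by fun_prop)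
  have k1 := hkey (fun T => T 1) (by fun_prop)
  have k2 := hkey (fun T => T 2) (by fun_prop)
  have l0 := hkey (fun T => T 0 + T 1 + T 2) (by fun_prop)
  have l1 := hkey (fun T => T 0 + T 1 - T 2) (by fun_prop)
  have l2 := hkey (fun T => T 0 - T 1 + T 2) (by fun_prop)
  have l3 := hkey (fun T => T 0 - T 1 - T 2) (by fun_prop)
  refine ⟨T 0, T 1, T 2, ⟨?_, ?_, ?_, ?_, ?_, ?_, ?_⟩, ?_, ?_, ?_, ?_⟩
  · exact tendsto_nhds_unique k0 (tendsto_const_nhds.congr fun n => ((ho (φ n)).hp).symm)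
  · exact tendsto_nhds_unique k1 (tendsto_const_nhds.congr fun n => ((ho (φ n)).hq).symm)
  · exact tendsto_nhds_unique k2 (tendsto_const_nhds.congr fun n => ((ho (φ n)).hr).symm)
  · exact ge_of_tendsto' l0 fun n => (ho (φ n)).c0
  · exact ge_of_tendsto' l1 fun n => (ho (φ n)).c1
  · exact ge_of_tendsto' l2 fun n => (ho (φ n)).c2
  · exact ge_of_tendsto' l3 fun n => (ho (φ n)).c3
  · refine le_of_tendsto' (((continuous_det3.tendsto T).comp hlim).abs) fun n => ?_
    refine (hd (φ n)).trans (le_of_eq ?_)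
    simp [det3]
  · exact le_of_tendsto' l0 fun n => hc0 (φ n)
  · exact le_of_tendsto' l1 fun n => hc1 (φ n)
  · exact le_of_tendsto' l2 fun n => hc2 (φ n)

/-- Any octahedron can be replaced by one of no larger volume with three of the four centres
`(p ± q ± r) / 2` on the unit sphere. -/
lemma Oct.exists_tight {N : (Fin 3 → ℝ) → ℝ} (hN : IsNorm3 N) {p q r : Fin 3 → ℝ}
    (h : Oct N p q r) :
    ∃ p' q' r', Oct N p' q' r' ∧ |det3 p' q' r'| ≤ |det3 p q r| ∧
      N (p' + q' + r') ≤ 2 ∧ N (p' + q' - r') ≤ 2 ∧ N (p' - q' + r') ≤ 2 := by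
  have hne : det3 (![p, q, r] 0) (![p, q, r] 1) (![p, q, r] 2) ≠ 0 := h.det_ne hN
  have lsub (x y : Fin 3 → ℝ) : lc ![p, q, r] (x - y) = lc ![p, q, r] x - lc ![p, q, r] y := by
    rw [sub_eq_add_neg, lc_add, lc_neg, sub_eq_add_neg]
  have e0 : lc ![p, q, r] ![1, 0, 0] = p := by simp [lc]
  have e1 : lc ![p, q, r] ![0, 1, 0] = q := by simp [lc]
  have e2 : lc ![p, q, r] ![0, 0, 1] = r := by simp [lc]
  obtain ⟨a, b, c, ho, hd, h0, h1, h2⟩ := exists_tight_std (hN.comp hne) (by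
    constructor <;> simp only [lc_add, lsub, e0, e1, e2]
    exacts [h.hp, h.hq, h.hr, h.c0, h.c1, h.c2, h.c3])
  simp only [lc_add, lsub] at h0 h1 h2
  refine ⟨lc ![p, q, r] a, lc ![p, q, r] b, lc ![p, q, r] c, ⟨ho.hp, ho.hq, ho.hr, ?_, ?_, ?_, ?_⟩,
    ?_, h0, h1, h2⟩
  · simpa only [lc_add, lsub] using ho.c0
  · simpa only [lc_add, lsub] using ho.c1
  · simpa only [lc_add, lsub] using ho.c2
  · simpa only [lc_add, lsub] using ho.c3
  · rw [det3_lc, abs_mul]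
    exact mul_le_of_le_one_left (abs_nonneg _) hd

/-- If the unit ball contains a crosspolytope of the second type of a critical lattice, then some
critical lattice has a basis whose test set `U²` lies in the unit ball. -/
theorem exists_crit_U2 {N : (Fin 3 → ℝ) → ℝ} (hN : IsNorm3 N) {w : Fin 3 → Fin 3 → ℝ}
    (hw : IsCrit N w) (h0 : N (w 0) ≤ 1) (h1 : N (w 1) ≤ 1)
    (h2 : N (w 0 + w 1 + (2 : ℝ) • w 2) ≤ 1) : ∃ v, IsCrit N v ∧ U2 N v := by
  have hlat (a b c : ℤ) (x : Fin 3 → ℝ) (h : ¬(a = 0 ∧ b = 0 ∧ c = 0))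
      (hx : x = (a : ℝ) • w 0 + (b : ℝ) • w 1 + (c : ℝ) • w 2) : 1 ≤ N x := by
    have := hw.adm ![a, b, c] fun h0 => h
      ⟨by simpa using congrFun h0 0, by simpa using congrFun h0 1, by simpa using congrFun h0 2⟩
    rw [hx]
    simpa [lc, zc] using this
  have htwo (a b c : ℤ) (x : Fin 3 → ℝ) (h : ¬(a = 0 ∧ b = 0 ∧ c = 0))
      (hx : x = (2 : ℝ) • ((a : ℝ) • w 0 + (b : ℝ) • w 1 + (c : ℝ) • w 2)) : 2 ≤ N x := by
    have := hlat a b c _ h rfl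
    rw [hx, hN.smul, abs_two]; linarith
  have ho : Oct N (w 0) (w 1) (w 0 + w 1 + (2 : ℝ) • w 2) := by
    refine ⟨h0.antisymm ?_, h1.antisymm ?_, h2.antisymm ?_, ?_, ?_, ?_, ?_⟩
    · exact hlat 1 0 0 _ (by simp) (by simp)
    · exact hlat 0 1 0 _ (by simp) (by simp)
    · exact hlat 1 1 2 _ (by simp) (by simp)
    · exact htwo 1 1 1 _ (by simp) (by push_cast; module)
    · exact htwo 0 0 (-1) _ (by simp) (by push_cast; module)
    · exact htwo 1 0 1 _ (by simp) (by push_cast; module)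
    · exact htwo 0 (-1) (-1) _ (by simp) (by push_cast; module)
  obtain ⟨p, q, r, hpqr, hd, hc0, hc1, hc2⟩ := ho.exists_tight hN
  have hdet := Oct.basis_det p q r
  have hd' : det3 (w 0) (w 1) (w 0 + w 1 + (2 : ℝ) • w 2) = 2 * det3 (w 0) (w 1) (w 2) := by
    simp [det3]; ring
  rw [hd', abs_mul, abs_two] at hd
  have hpos : 0 < |det3 p q r| := abs_pos.2 (hpqr.det_ne hN)
  refine ⟨Oct.basis p q r, ⟨?_, hpqr.basis_adm hN, fun u hu hadm => ?_⟩, ?_, ?_, ?_, ?_, ?_, ?_⟩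
  · rw [← abs_pos, hdet]; linarith
  · have := hw.le u hu hadm
    rw [hdet]; linarith
  · simp only [Oct.basis, Matrix.cons_val_zero]
    rw [hN.smul, abs_of_pos (by norm_num)]; linarith
  · simp only [Oct.basis, Matrix.cons_val_one, Matrix.cons_val_zero]
    rw [hN.smul, abs_of_neg (by norm_num)]; linarith
  · simp only [Oct.basis, Matrix.cons_val]
    rw [hN.smul, abs_of_neg (by norm_num)]; linarith
  · rw [show Oct.basis p q r 1 + Oct.basis p q r 2 = -p by
      simp only [Oct.basis, Matrix.cons_val, Matrix.cons_val_one]; module, hN.neg]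
    exact hpqr.hp.le
  · rw [show Oct.basis p q r 0 + Oct.basis p q r 2 = q by
      simp only [Oct.basis, Matrix.cons_val, Matrix.cons_val_zero]; module]
    exact hpqr.hq.le
  · rw [show Oct.basis p q r 0 + Oct.basis p q r 1 = r by
      simp only [Oct.basis, Matrix.cons_val_zero, Matrix.cons_val_one]; module]
    exact hpqr.hr.le

end

/-! ### The norm of a convex body -/

lemma gauge_isNorm {K : Set (Fin 3 → ℝ)} (hKconv : Convex ℝ K) (hKcomp : IsCompact K)
    (hK0 : K ∈ nhds (0 : Fin 3 → ℝ)) (hKsym : ∀ x ∈ K, -x ∈ K) : IsNorm3 (gauge K) where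
  add_le := gauge_add_le hKconv (absorbent_nhds_zero hK0)
  smul t x := by
    rcases le_total 0 t with h | h
    · rw [gauge_smul_of_nonneg h, abs_of_nonneg h, smul_eq_mul]
    · have h1 : t • x = -((-t) • x) := by module
      rw [h1, gauge_neg hKsym, gauge_smul_of_nonneg (by linarith), abs_of_nonpos h, smul_eq_mul]
  pos x hx := (gauge_pos (absorbent_nhds_zero hK0)
    (NormedSpace.isVonNBounded_of_isBounded _ hKcomp.isBounded)).2 hx

lemma zero_mem_nhds_of_symm {K : Set (Fin 3 → ℝ)} (hKconv : Convex ℝ K)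
    (hKint : (interior K).Nonempty) (hKsym : ∀ x ∈ K, -x ∈ K) :
    K ∈ nhds (0 : Fin 3 → ℝ) := by
  obtain ⟨x, hx⟩ := hKint
  have h := hKconv.combo_interior_closure_mem_interior hx
    (subset_closure (hKsym x (interior_subset hx))) (a := 1 / 2) (b := 1 / 2) (by norm_num)
    (by norm_num) (by norm_num)
  rw [smul_neg, add_neg_cancel] at h
  exact mem_interior_iff_mem_nhds.1 h

lemma sum_eq_lc (v : Fin 3 → Fin 3 → ℝ) (z : Fin 3 → ℤ) :
    ∑ i, (z i : ℝ) • v i = lc v (zc z) := by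
  rw [Fin.sum_univ_three]; rfl

lemma li_iff_det3 (v : Fin 3 → Fin 3 → ℝ) :
    LinearIndependent ℝ v ↔ det3 (v 0) (v 1) (v 2) ≠ 0 := by
  rw [← matrix_det_eq, ← isUnit_iff_ne_zero, ← Matrix.isUnit_iff_isUnit_det,
    ← Matrix.linearIndependent_rows_iff_isUnit]
  rfl

lemma admissible_iff {K : Set (Fin 3 → ℝ)} (hKconv : Convex ℝ K)
    (hK0 : K ∈ nhds (0 : Fin 3 → ℝ)) {v : Fin 3 → Fin 3 → ℝ}
    (hv : det3 (v 0) (v 1) (v 2) ≠ 0) :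
    IsAdmissible K (latticeGen v) ↔ Adm (gauge K) v := by
  constructor
  · intro h z hz
    by_contra! hlt
    have h1 : lc v (zc z) ∈ interior K ∩ latticeGen v :=
      ⟨(gauge_lt_one_iff_mem_interior hKconv hK0).1 hlt, z, (sum_eq_lc v z).symm⟩
    rw [h] at h1
    exact zc_ne_zero hz (lc_eq_zero hv h1)
  · intro h
    ext x
    constructor
    · rintro ⟨hx, z, rfl⟩
      rw [sum_eq_lc] at hx ⊢
      by_contra hne
      have hz : z ≠ 0 := by
        rintro rfl
        exact hne (by simp [lc, zc])
      exact absurd ((gauge_lt_one_iff_mem_interior hKconv hK0).2 hx) (not_lt.2 (h z hz))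
    · rintro rfl
      exact ⟨mem_interior_iff_mem_nhds.2 hK0, 0, by simp⟩

/-- Two bases of the same lattice: if one is critical, so is the other. -/
lemma IsCrit.of_latticeGen_eq {N : (Fin 3 → ℝ) → ℝ} {v w : Fin 3 → Fin 3 → ℝ} (hv : IsCrit N v)
    (hw : det3 (w 0) (w 1) (w 2) ≠ 0) (h : latticeGen w = latticeGen v) : IsCrit N w := by
  have mem (u : Fin 3 → Fin 3 → ℝ) (i : Fin 3) : u i ∈ latticeGen u :=
    ⟨Pi.single i 1, by fin_cases i <;> simp [Fin.sum_univ_three]⟩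
  have hA : ∀ i, ∃ z : Fin 3 → ℤ, w i = lc v (zc z) := fun i => by
    obtain ⟨z, hz⟩ : w i ∈ latticeGen v := h ▸ mem w i
    exact ⟨z, hz.trans (sum_eq_lc v z)⟩
  have hB : ∀ i, ∃ z : Fin 3 → ℤ, v i = lc w (zc z) := fun i => by
    obtain ⟨z, hz⟩ : v i ∈ latticeGen w := h ▸ mem v i
    exact ⟨z, hz.trans (sum_eq_lc w z)⟩
  choose A hA using hA
  choose B hB using hB
  have d1 : det3 (w 0) (w 1) (w 2) = (det3 (A 0) (A 1) (A 2) : ℤ) * det3 (v 0) (v 1) (v 2) := by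
    rw [hA 0, hA 1, hA 2, det3_lc, det3_cast]
  have d2 : det3 (v 0) (v 1) (v 2) = (det3 (B 0) (B 1) (B 2) : ℤ) * det3 (w 0) (w 1) (w 2) := by
    rw [hB 0, hB 1, hB 2, det3_lc, det3_cast]
  have hprod : det3 (A 0) (A 1) (A 2) * det3 (B 0) (B 1) (B 2) = 1 := by
    rw [d2, ← mul_assoc] at d1
    have := mul_right_cancel₀ hw ((one_mul _).trans d1)
    exact_mod_cast this.symm
  have hu := Int.eq_one_or_neg_one_of_mul_eq_one hprod
  have he : w = fun i => lc v (zc (A i)) := funext hA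
  rw [he]
  exact hv.unimod (by rcases hu with h | h <;> rw [h] <;> simp)

/-- Minkowski: every `K ∈ 𝒦³₀` has a critical lattice with a basis `B` such that either
`U¹_B ⊆ bd K` and `K` contains no lattice crosspolytope of the second type, or
`U²_B ⊆ bd K` and `(1,1,1)_B ∉ K`, or `U³_B ⊆ bd K`. -/
theorem stmt_4 (K : Set (Fin 3 → ℝ))
    (hKconv : Convex ℝ K) (hKcomp : IsCompact K) (hKint : (interior K).Nonempty)
    (hKsym : ∀ x ∈ K, -x ∈ K) :
    ∃ (Λ : Set (Fin 3 → ℝ)) (v : Fin 3 → Fin 3 → ℝ),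
      IsZBasis v Λ ∧ IsAdmissible K Λ ∧
      (∀ w : Fin 3 → Fin 3 → ℝ, LinearIndependent ℝ w →
        IsAdmissible K (latticeGen w) → |(Matrix.of v).det| ≤ |(Matrix.of w).det|) ∧
      ((testSet₁ v ⊆ frontier K ∧
          ¬ ∃ w : Fin 3 → Fin 3 → ℝ, IsZBasis w Λ ∧
            w 0 ∈ K ∧ w 1 ∈ K ∧ w 0 + w 1 + (2:ℝ) • w 2 ∈ K) ∨
       (testSet₂ v ⊆ frontier K ∧ v 0 + v 1 + v 2 ∉ K) ∨
       (testSet₃ v ⊆ frontier K)) := by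
  have hK0 := zero_mem_nhds_of_symm hKconv hKint hKsym
  have hN := gauge_isNorm hKconv hKcomp hK0 hKsym
  have hmem (x) : gauge K x ≤ 1 ↔ x ∈ K := by
    rw [gauge_le_one_iff_mem_closure hKconv hK0, hKcomp.isClosed.closure_eq]
  have hfr (x) : gauge K x = 1 ↔ x ∈ frontier K := gauge_eq_one_iff_mem_frontier hKconv hK0
  -- lattice points of the body other than `0` lie on its boundary
  have hbd (v : Fin 3 → Fin 3 → ℝ) (hv : IsCrit (gauge K) v) (a b c : ℤ) (x : Fin 3 → ℝ)
      (h : ¬(a = 0 ∧ b = 0 ∧ c = 0)) (hx : x = (a : ℝ) • v 0 + (b : ℝ) • v 1 + (c : ℝ) • v 2)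
      (hle : gauge K x ≤ 1) : x ∈ frontier K := by
    have h1 := hv.adm ![a, b, c] fun h0 => h
      ⟨by simpa using congrFun h0 0, by simpa using congrFun h0 1, by simpa using congrFun h0 2⟩
    have h2 : lc v (zc ![a, b, c]) = x := by rw [hx]; simp [lc, zc]
    rw [h2] at h1
    exact (hfr x).1 (hle.antisymm h1)
  have hcrit (v : Fin 3 → Fin 3 → ℝ) (hv : IsCrit (gauge K) v) :
      IsZBasis v (latticeGen v) ∧ IsAdmissible K (latticeGen v) ∧
      (∀ w : Fin 3 → Fin 3 → ℝ, LinearIndependent ℝ w →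
        IsAdmissible K (latticeGen w) → |(Matrix.of v).det| ≤ |(Matrix.of w).det|) := by
    refine ⟨⟨(li_iff_det3 v).2 hv.ne, rfl⟩, (admissible_iff hKconv hK0 hv.ne).2 hv.adm,
      fun w hw hadm => ?_⟩
    have hw' := (li_iff_det3 w).1 hw
    rw [matrix_det_eq, matrix_det_eq]
    exact hv.le w hw' ((admissible_iff hKconv hK0 hw').1 hadm)
  have caseU2 (v : Fin 3 → Fin 3 → ℝ) (hv : IsCrit (gauge K) v) (hU : U2 (gauge K) v) :
      (testSet₂ v ⊆ frontier K ∧ v 0 + v 1 + v 2 ∉ K) ∨ testSet₃ v ⊆ frontier K := by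
    obtain ⟨h0, h1, h2, h3, h4, h5⟩ := hU
    have hT : testSet₂ v ⊆ frontier K := by
      rintro x (rfl | rfl | rfl | rfl | rfl | rfl)
      · exact hbd v hv 1 0 0 _ (by simp) (by simp) h0
      · exact hbd v hv 0 1 0 _ (by simp) (by simp) h1
      · exact hbd v hv 0 0 1 _ (by simp) (by simp) h2
      · exact hbd v hv 0 1 1 _ (by simp) (by simp) h3
      · exact hbd v hv 1 0 1 _ (by simp) (by simp) h4
      · exact hbd v hv 1 1 0 _ (by simp) (by simp) h5
    by_cases h7 : v 0 + v 1 + v 2 ∈ K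
    · refine Or.inr (Set.union_subset hT ?_)
      rintro x rfl
      exact hbd v hv 1 1 1 _ (by simp) (by simp) ((hmem _).2 h7)
    · exact Or.inl ⟨hT, h7⟩
  obtain ⟨v, hv, hU | hU⟩ := exists_crit_U hN
  · by_cases hw : ∃ w : Fin 3 → Fin 3 → ℝ, IsZBasis w (latticeGen v) ∧
        w 0 ∈ K ∧ w 1 ∈ K ∧ w 0 + w 1 + (2 : ℝ) • w 2 ∈ K
    · obtain ⟨w, ⟨hli, hgen⟩, h0, h1, h2⟩ := hw
      have hwc := hv.of_latticeGen_eq ((li_iff_det3 w).1 hli) hgen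
      obtain ⟨v', hv', hU'⟩ := exists_crit_U2 hN hwc ((hmem _).2 h0) ((hmem _).2 h1)
        ((hmem _).2 h2)
      obtain ⟨a, b, c⟩ := hcrit v' hv'
      exact ⟨latticeGen v', v', a, b, c, Or.inr (caseU2 v' hv' hU')⟩
    · obtain ⟨a, b, c⟩ := hcrit v hv
      refine ⟨latticeGen v, v, a, b, c, Or.inl ⟨?_, hw⟩⟩
      obtain ⟨h0, h1, h2, h3, h4, h5⟩ := hU
      rintro x (rfl | rfl | rfl | rfl | rfl | rfl)
      · exact hbd v hv 1 0 0 _ (by simp) (by simp) h0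
      · exact hbd v hv 0 1 0 _ (by simp) (by simp) h1
      · exact hbd v hv 0 0 1 _ (by simp) (by simp) h2
      · exact hbd v hv 0 1 (-1) _ (by simp) (by push_cast; module) h3
      · exact hbd v hv (-1) 0 1 _ (by simp) (by push_cast; module) h4
      · exact hbd v hv 1 (-1) 0 _ (by simp) (by push_cast; module) h5
  · obtain ⟨a, b, c⟩ := hcrit v hv
    exact ⟨latticeGen v, v, a, b, c, Or.inr (caseU2 v hv hU)⟩
end

section
/- Let K ∈ K³₀ and let Λ ⊂ ℝ³ be a lattice with ℤ-basis B = (b¹, b², b³). Then Λ is admissible for K if one of the following conditions is satisfied: (1) all six points of U¹_B lie on bd(K) and none of the points (−1,1,1)_B, (1,−1,1)_B, (1,1,−1)_B lies in int(K); (2) all six points of U²_B lie on bd(K) and (1,1,1)_B ∉ int(K). -/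
section Certificates

variable {E : Type*} [AddCommGroup E] [Module ℝ E] (p : Seminorm ℝ E)

/-- The triangle inequality in the form in which all lower bounds are obtained. -/
lemma le_of_certificate {t x r s : E} {k c d : ℝ} (hk : 0 ≤ k) (hc : 0 ≤ c) (hd : 0 ≤ d)
    (ht : 1 ≤ p t) (hr : p r = 1) (hs : p s = 1) (h : k • t = x + c • r + d • s) :
    k - c - d ≤ p x := by
  have h1 : p (k • t) = k * p t := by
    rw [map_smul_eq_mul, Real.norm_of_nonneg hk]
  have h2 : p (c • r) = c := by
    rw [map_smul_eq_mul, Real.norm_of_nonneg hc, hr, mul_one]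
  have h3 : p (d • s) = d := by
    rw [map_smul_eq_mul, Real.norm_of_nonneg hd, hs, mul_one]
  have h4 := map_add_le_add p (x + c • r) (d • s)
  have h5 := map_add_le_add p x (c • r)
  have h6 : k ≤ k * p t := le_mul_of_one_le_right hk ht
  rw [h] at h1
  linarith

/-- The first criterion, in coordinates on the lattice `A₃`. The vectors
`2 • (e i + e j) - ∑ k, e k` are the `eᵢ + eⱼ - eₖ - eₗ` with `{i, j, k, l}` the whole index
set. -/
lemma one_le_of_roots (e : Fin 4 → E) (hroot : ∀ i j, i ≠ j → p (e i - e j) = 1)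
    (hpair : ∀ i j, i ≠ j → 1 ≤ p ((2 : ℝ) • (e i + e j) - ∑ k, e k))
    (y : Fin 4 → ℤ) (hsum : ∑ i, y i = 0) (hy : y ≠ 0) :
    1 ≤ p (∑ i, (y i : ℝ) • e i) := by
  -- It suffices to treat sorted coordinates, by invariance of the hypotheses.
  suffices H : ∀ (e : Fin 4 → E), (∀ i j, i ≠ j → p (e i - e j) = 1) →
      (∀ i j, i ≠ j → 1 ≤ p ((2 : ℝ) • (e i + e j) - ∑ k, e k)) →
      ∀ y : Fin 4 → ℤ, ∑ i, y i = 0 → y ≠ 0 → Monotone y → 1 ≤ p (∑ i, (y i : ℝ) • e i) by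
    have hinj := (Tuple.sort y).injective
    have := H (e ∘ Tuple.sort y) (fun i j hij => hroot _ _ (hinj.ne hij))
      (fun i j hij => by
        have h := hpair _ _ (hinj.ne hij)
        rwa [← Equiv.sum_comp (Tuple.sort y)] at h)
      (y ∘ Tuple.sort y) ((Equiv.sum_comp (Tuple.sort y) y).trans hsum)
      (fun h0 => hy (by
        funext i
        simpa using congrFun h0 ((Tuple.sort y).symm i)))
      (Tuple.monotone_sort y)
    rwa [← Equiv.sum_comp (Tuple.sort y)]
  clear hy hsum y hpair hroot e
  intro e hroot hpair y hsum hy hmono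
  have h01 : y 0 ≤ y 1 := hmono (by decide)
  have h12 : y 1 ≤ y 2 := hmono (by decide)
  have h23 : y 2 ≤ y 3 := hmono (by decide)
  have hne : ¬ (y 0 = 0 ∧ y 1 = 0 ∧ y 2 = 0 ∧ y 3 = 0) := by
    rintro ⟨h0, h1, h2, h3⟩
    exact hy (by funext i; fin_cases i <;> assumption)
  have hpair' := hpair 3 2 (by decide)
  simp only [Fin.sum_univ_four] at hsum hpair' ⊢
  have hsumR : (y 0 : ℝ) = -(y 1 + y 2 + y 3) := by
    have : y 0 = -(y 1 + y 2 + y 3) := by omega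
    exact_mod_cast this
  have key : ∀ n : ℤ, 1 ≤ n → (1 : ℝ) ≤ n := fun n hn => by exact_mod_cast hn
  have pos : ∀ n : ℤ, 0 ≤ n → (0 : ℝ) ≤ n := fun n hn => by exact_mod_cast hn
  have r30 := (hroot 3 0 (by decide)).ge
  rcases lt_or_ge 0 (y 1) with h1 | h1
  · -- signs `(-, +, +, +)`: the bound is `y 3`
    refine (key (y 3) (by omega)).trans
      (le_trans (le_of_eq ?_) (le_of_certificate p (pos (y 1 + y 2 + y 3) (by omega))
        (pos (y 1) (by omega)) (pos (y 2) (by omega)) r30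
        (hroot 3 1 (by decide)) (hroot 3 2 (by decide)) ?_))
    · push_cast; ring
    · push_cast; rw [hsumR]; module
  rcases lt_or_ge (y 2) 0 with h2 | h2
  · -- signs `(-, -, -, +)`: the bound is `-y 0`
    refine (key (-y 0) (by omega)).trans
      (le_trans (le_of_eq ?_) (le_of_certificate p (pos (y 3) (by omega))
        (pos (-y 1) (by omega)) (pos (-y 2) (by omega)) r30
        (hroot 1 0 (by decide)) (hroot 2 0 (by decide)) ?_))
    · push_cast; rw [hsumR]; ring
    · push_cast; rw [hsumR]; module
  -- signs `(-, -, +, +)`: the bound is `y 3 + y 1`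
  rcases lt_or_ge 0 (y 3 + y 1) with h3 | h3
  · refine (key (y 3 + y 1) (by omega)).trans
      (le_trans (le_of_eq ?_) (le_of_certificate p (pos (y 3 + y 2) (by omega))
        (pos (y 2) (by omega)) (pos (-y 1) (by omega)) r30
        (hroot 3 2 (by decide)) (hroot 1 0 (by decide)) ?_))
    · push_cast; ring
    · push_cast; rw [hsumR]; module
  · -- all coordinates have the same absolute value
    have e2 : y 2 = y 3 := by omega
    have e1 : y 1 = -y 3 := by omega
    have e0 : y 0 = -y 3 := by omega
    have hx : (y 0 : ℝ) • e 0 + (y 1 : ℝ) • e 1 + (y 2 : ℝ) • e 2 + (y 3 : ℝ) • e 3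
        = (y 3 : ℝ) • ((2 : ℝ) • (e 3 + e 2) - (e 0 + e 1 + e 2 + e 3)) := by
      rw [e0, e1, e2]; push_cast; module
    have h3' := key (y 3) (by omega)
    rw [hx, map_smul_eq_mul, Real.norm_of_nonneg (by linarith)]
    nlinarith

/-- The second criterion for coordinates `a ≥ b ≥ c ≥ 0`: the bound is the smallest nonzero one
among them. -/
lemma one_le_of_sums_nonneg (u v w : E) (hu : p u = 1) (hv : p v = 1) (hw : p w = 1)
    (huv : p (u + v) = 1) (hvw : p (v + w) = 1) (huvw : 1 ≤ p (u + v + w))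
    (a b c : ℤ) (hab : b ≤ a) (hbc : c ≤ b) (hc : 0 ≤ c) (ha : 0 < a) :
    1 ≤ p ((a : ℝ) • u + (b : ℝ) • v + (c : ℝ) • w) := by
  have key : ∀ n : ℤ, 1 ≤ n → (1 : ℝ) ≤ n := fun n hn => by exact_mod_cast hn
  have pos : ∀ n : ℤ, 0 ≤ n → (0 : ℝ) ≤ n := fun n hn => by exact_mod_cast hn
  rcases hc.lt_or_eq with hc | rfl
  · refine (key c hc).trans (le_trans (le_of_eq ?_) (le_of_certificate p (pos a ha.le)
      (pos (a - b) (by omega)) (pos (b - c) (by omega)) huvw hvw hw ?_))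
    · push_cast; ring
    · push_cast; module
  rcases hbc.lt_or_eq with hb | rfl
  · refine (key b hb).trans (le_trans (le_of_eq ?_) (le_of_certificate p (pos a ha.le)
      (pos (a - b) (by omega)) (le_refl 0) huv.ge hv hv ?_))
    · push_cast; ring
    · push_cast; module
  · refine (key a ha).trans (le_trans (le_of_eq ?_) (le_of_certificate p (pos a ha.le)
      (le_refl 0) (le_refl 0) hu.ge hv hv ?_))
    · ring
    · push_cast; module

/-- The second criterion for a coordinate `-c < 0` and two coordinates `a, b ≥ 0`: the bound
is `c`. -/
lemma one_le_of_sums_mixed (u v w : E) (hw : p w = 1) (huw : p (u + w) = 1)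
    (hvw : p (v + w) = 1) (a b c : ℤ) (ha : 0 ≤ a) (hb : 0 ≤ b) (hc : 0 < c) :
    1 ≤ p ((a : ℝ) • u + (b : ℝ) • v - (c : ℝ) • w) := by
  have pos : ∀ n : ℤ, 0 ≤ n → (0 : ℝ) ≤ n := fun n hn => by exact_mod_cast hn
  have hc1 : (1 : ℝ) ≤ c := by exact_mod_cast hc
  rw [← map_neg_eq_map p]
  refine hc1.trans (le_trans (le_of_eq ?_) (le_of_certificate p (pos (a + b + c) (by omega))
    (pos a ha) (pos b hb) hw.ge huw hvw ?_))
  · push_cast; ring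
  · push_cast; module

/-- The second criterion. -/
lemma one_le_of_sums (e : Fin 3 → E) (hone : ∀ i, p (e i) = 1)
    (htwo : ∀ i j, i ≠ j → p (e i + e j) = 1) (hall : 1 ≤ p (∑ i, e i))
    (z : Fin 3 → ℤ) (hz : z ≠ 0) : 1 ≤ p (∑ i, (z i : ℝ) • e i) := by
  suffices H : ∀ (e : Fin 3 → E), (∀ i, p (e i) = 1) →
      (∀ i j, i ≠ j → p (e i + e j) = 1) → 1 ≤ p (∑ i, e i) →
      ∀ z : Fin 3 → ℤ, z ≠ 0 → Monotone z → 1 ≤ p (∑ i, (z i : ℝ) • e i) by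
    have hinj := (Tuple.sort z).injective
    have := H (e ∘ Tuple.sort z) (fun i => hone _) (fun i j hij => htwo _ _ (hinj.ne hij))
      (by rwa [← Equiv.sum_comp (Tuple.sort z)] at hall)
      (z ∘ Tuple.sort z)
      (fun h0 => hz (by
        funext i
        simpa using congrFun h0 ((Tuple.sort z).symm i)))
      (Tuple.monotone_sort z)
    rwa [← Equiv.sum_comp (Tuple.sort z)]
  clear hz z hall htwo hone e
  intro e hone htwo hall z hz hmono
  have h01 : z 0 ≤ z 1 := hmono (by decide)
  have h12 : z 1 ≤ z 2 := hmono (by decide)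
  have hne : ¬ (z 0 = 0 ∧ z 1 = 0 ∧ z 2 = 0) := by
    rintro ⟨h0, h1, h2⟩
    exact hz (by funext i; fin_cases i <;> assumption)
  simp only [Fin.sum_univ_three] at hall ⊢
  rcases le_or_gt 0 (z 0) with h0 | h0
  · convert one_le_of_sums_nonneg p (e 2) (e 1) (e 0) (hone _) (hone _) (hone _)
      (htwo _ _ (by decide)) (htwo _ _ (by decide))
      (by convert hall using 2; abel) (z 2) (z 1) (z 0) h12 h01 h0 (by omega) using 2
    abel
  rcases le_or_gt (z 2) 0 with h2 | h2
  · rw [← map_neg_eq_map p]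
    convert one_le_of_sums_nonneg p (e 0) (e 1) (e 2) (hone _) (hone _) (hone _)
      (htwo _ _ (by decide)) (htwo _ _ (by decide)) hall (-z 0) (-z 1) (-z 2)
      (by omega) (by omega) (by omega) (by omega) using 2
    push_cast; module
  rcases le_or_gt 0 (z 1) with h1 | h1
  · convert one_le_of_sums_mixed p (e 2) (e 1) (e 0) (hone _) (htwo _ _ (by decide))
      (htwo _ _ (by decide)) (z 2) (z 1) (-z 0) (by omega) (by omega) (by omega) using 2
    push_cast; module
  · rw [← map_neg_eq_map p]
    convert one_le_of_sums_mixed p (e 0) (e 1) (e 2) (hone _) (htwo _ _ (by decide))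
      (htwo _ _ (by decide)) (-z 0) (-z 1) (z 2) (by omega) (by omega) (by omega) using 2
    push_cast; module

end Certificates

/-- A symmetric convex body is described by a seminorm, namely its gauge. -/
lemma exists_seminorm_of_symmetric (K : Set (Fin 3 → ℝ)) (hKconv : Convex ℝ K)
    (hKint : (interior K).Nonempty) (hKsym : ∀ x ∈ K, -x ∈ K) :
    ∃ p : Seminorm ℝ (Fin 3 → ℝ), (∀ x, x ∈ interior K ↔ p x < 1) ∧
      ∀ x, x ∈ frontier K ↔ p x = 1 := by
  have hneg : ∀ x ∈ interior K, -x ∈ interior K := by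
    intro x hx
    have hK : -K = K := by
      ext y
      exact ⟨fun hy => by simpa using hKsym _ hy, fun hy => hKsym _ hy⟩
    have h : x ∈ (Homeomorph.neg (Fin 3 → ℝ)) ⁻¹' interior K := by
      rw [Homeomorph.preimage_interior]
      have : (Homeomorph.neg (Fin 3 → ℝ)) ⁻¹' K = K := hK
      rwa [this]
    exact h
  have h0 : (0 : Fin 3 → ℝ) ∈ interior K := by
    obtain ⟨x, hx⟩ := hKint
    have := hKconv.interior hx (hneg x hx) (a := 1 / 2) (b := 1 / 2)
      (by norm_num) (by norm_num) (by norm_num)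
    simpa using this
  have hnhds : K ∈ nhds (0 : Fin 3 → ℝ) := mem_interior_iff_mem_nhds.mp h0
  have habs := absorbent_nhds_zero (𝕜 := ℝ) hnhds
  have hsmul : ∀ (r : ℝ) (x : Fin 3 → ℝ), gauge K (r • x) = ‖r‖ * gauge K x := by
    intro r x
    rcases le_total 0 r with hr | hr
    · rw [gauge_smul_of_nonneg hr, Real.norm_of_nonneg hr, smul_eq_mul]
    · rw [← gauge_neg hKsym, ← neg_smul, gauge_smul_of_nonneg (neg_nonneg.mpr hr),
        Real.norm_of_nonpos hr, smul_eq_mul]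
  refine ⟨Seminorm.of (gauge K) (gauge_add_le hKconv habs) hsmul, fun x => ?_, fun x => ?_⟩
  · exact (gauge_lt_one_iff_mem_interior hKconv hnhds).symm
  · exact (gauge_eq_one_iff_mem_frontier hKconv hnhds).symm

/-- Minkowski's admissibility criterion: for `K ∈ 𝒦³₀` and a lattice `Λ` with basis `B`,
`Λ` is admissible for `K` if either `U¹_B ⊆ bd K` and `(−1,1,1)_B, (1,−1,1)_B, (1,1,−1)_B`
are not interior points of `K`, or `U²_B ⊆ bd K` and `(1,1,1)_B` is not an interior point. -/
theorem stmt_5 (K : Set (Fin 3 → ℝ))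
    (hKconv : Convex ℝ K) (hKcomp : IsCompact K) (hKint : (interior K).Nonempty)
    (hKsym : ∀ x ∈ K, -x ∈ K)
    (Λ : Set (Fin 3 → ℝ)) (v : Fin 3 → Fin 3 → ℝ) (hv : IsZBasis v Λ)
    (h : (testSet₁ v ⊆ frontier K ∧
            -(v 0) + v 1 + v 2 ∉ interior K ∧
            v 0 - v 1 + v 2 ∉ interior K ∧
            v 0 + v 1 - v 2 ∉ interior K) ∨
         (testSet₂ v ⊆ frontier K ∧ v 0 + v 1 + v 2 ∉ interior K)) :
    interior K ∩ Λ = {0} := by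
  obtain ⟨p, hint, hfr⟩ := exists_seminorm_of_symmetric K hKconv hKint hKsym
  obtain ⟨-, rfl⟩ := hv
  suffices H : ∀ z : Fin 3 → ℤ, z ≠ 0 → 1 ≤ p (∑ i, (z i : ℝ) • v i) by
    ext x
    simp only [Set.mem_inter_iff, Set.mem_singleton_iff, hint]
    constructor
    · rintro ⟨hx, z, rfl⟩
      by_contra hne
      exact absurd (H z (fun h0 => hne (by simp [h0]))) (not_le.mpr hx)
    · rintro rfl
      exact ⟨by simp, 0, by simp⟩
  intro z hz
  have hsub : ∀ x y, p (x - y) = p (y - x) := map_sub_rev p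
  rcases h with ⟨hT, h1, h2, h3⟩ | ⟨hT, h1⟩
  · simp only [testSet₁, Set.insert_subset_iff, Set.singleton_subset_iff, hfr] at hT
    simp only [hint, not_lt] at h1 h2 h3
    obtain ⟨t0, t1, t2, t12, t20, t01⟩ := hT
    have t20' : p (v 2 - v 0) = 1 := by rw [← t20]; congr 1; abel
    -- the fourth vector is `0`, with the coefficient that makes the sum of coefficients vanish
    have := one_le_of_roots p ![v 0, v 1, v 2, 0] (by
        intro i j hij
        fin_cases i <;> fin_cases j <;> first
          | exact absurd rfl hij
          | simpa using t0
          | simpa using t1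
          | simpa using t2
          | simpa using t12
          | simpa using t20'
          | simpa using t01
          | (rw [hsub]; simpa using t12)
          | (rw [hsub]; simpa using t20')
          | (rw [hsub]; simpa using t01)) (by
        intro i j hij
        have n1 := h1
        have n2 := h2
        have n3 := h3
        rw [← map_neg_eq_map p] at n1 n2 n3
        fin_cases i <;> fin_cases j <;> first
          | exact absurd rfl hij
          | (refine h1.trans_eq (congrArg p ?_); simp [Fin.sum_univ_four]; module)
          | (refine h2.trans_eq (congrArg p ?_); simp [Fin.sum_univ_four]; module)
          | (refine h3.trans_eq (congrArg p ?_); simp [Fin.sum_univ_four]; module)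
          | (refine n1.trans_eq (congrArg p ?_); simp [Fin.sum_univ_four]; module)
          | (refine n2.trans_eq (congrArg p ?_); simp [Fin.sum_univ_four]; module)
          | (refine n3.trans_eq (congrArg p ?_); simp [Fin.sum_univ_four]; module))
      ![z 0, z 1, z 2, -(z 0 + z 1 + z 2)] (by simp [Fin.sum_univ_four])
      (fun h0 => hz (by
        funext i
        fin_cases i
        · exact congrFun h0 0
        · exact congrFun h0 1
        · exact congrFun h0 2))
    simpa [Fin.sum_univ_four, Fin.sum_univ_three] using this
  · simp only [testSet₂, Set.insert_subset_iff, Set.singleton_subset_iff, hfr] at hT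
    simp only [hint, not_lt] at h1
    obtain ⟨t0, t1, t2, t12, t02, t01⟩ := hT
    refine one_le_of_sums p v ?_ ?_ (by rwa [Fin.sum_univ_three]) z hz
    · intro i
      fin_cases i <;> assumption
    · intro i j hij
      fin_cases i <;> fin_cases j <;> first
        | exact absurd rfl hij
        | assumption
        | (rw [add_comm]; assumption)
end
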